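/- For every automorphism φ of the free group F_n of finite rank n, the fixed subgroup Fix(φ) = {g ∈ F_n : φ(g) = g} is inert in F_n: rk(Fix(φ) ∩ G) ≤ rk(G) for every finitely generated subgroup G of F_n. -/

import Mathlib

/-- The rank of a subgroup: the minimal cardinality of a generating set.
For subgroups of free groups (which are free by Nielsen–Schreier) this is the
cardinality of a free basis. -/
noncomputable def rk {G : Type*} [Group G] (H : Subgroup G) : Cardinal :=
  ⨅ S : {S : Set G // Subgroup.closure S = H}, Cardinal.mk S.1

/-- A subgroup `H` is inert if `rk (H ⊓ K) ≤ rk K` for every finitely generated `K`. -/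
def IsInert {G : Type*} [Group G] (H : Subgroup G) : Prop :=
  ∀ K : Subgroup G, K.FG → rk (H ⊓ K) ≤ rk K

/-- `stage x i` is the subgroup generated by the first `i` elements of `x`. -/
def stage {n : ℕ} {F : Type*} [Group F] (x : Fin n → F) (i : ℕ) : Subgroup F :=
  Subgroup.closure (x '' {j | (j : ℕ) < i})

/-- `x` is an ordered free basis of `F`. -/
def IsOrderedBasis {n : ℕ} {F : Type*} [Group F] (x : Fin n → F) : Prop :=
  Function.Bijective (FreeGroup.lift x)

/-- `H` is in echelon form with respect to the ordered basis `x`: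
`rk (H ⊓ F_i) ≤ rk (H ⊓ F_{i-1}) + 1` for `i = 1, …, n`. -/
def InEchelonForm {n : ℕ} {F : Type*} [Group F] (x : Fin n → F) (H : Subgroup F) : Prop :=
  ∀ i : ℕ, i < n → rk (H ⊓ stage x (i + 1)) ≤ rk (H ⊓ stage x i) + 1

/-- `H` is an echelon subgroup: it is in echelon form with respect to
some ordered free basis. -/
def IsEchelon {n : ℕ} (H : Subgroup (FreeGroup (Fin n))) : Prop :=
  ∃ x : Fin n → FreeGroup (Fin n), IsOrderedBasis x ∧ InEchelonForm x H

/-- A 1-generator (subgroup) endomorphism: an endomorphism fixing all but (possibly)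
one member of some set of free generators. -/
def IsOneGenEndo {G : Type*} [Group G] (φ : G →* G) : Prop :=
  ∃ (ι : Type) (b : FreeGroupBasis ι G) (s : Set ι),
    s.Subsingleton ∧ ∀ i ∉ s, φ (b i) = b i

/-- The subgroup of points fixed by an endomorphism. -/
def fixedSubgroup {G : Type*} [Group G] (φ : G →* G) : Subgroup G where
  carrier := {g | φ g = g}
  one_mem' := by simp
  mul_mem' := by intro a b ha hb; simp only [Set.mem_setOf_eq, map_mul] at *; rw [ha, hb]
  inv_mem' := by intro a ha; simp only [Set.mem_setOf_eq, map_inv] at *; rw [ha]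

/-- An element is primitive if it belongs to some free basis. -/
def IsPrimitive {n : ℕ} (g : FreeGroup (Fin n)) : Prop :=
  ∃ x : Fin n → FreeGroup (Fin n), IsOrderedBasis x ∧ ∃ j, x j = g


set_option linter.all false

namespace FixInert

section IntSec
variable {P Y M : Type*} [Group P] [AddCommGroup M]

theorem basis_closure (b : FreeGroupBasis Y P) : Subgroup.closure (Set.range b) = ⊤ := by
  have h := FreeGroup.closure_range_of Y
  have := congrArg (Subgroup.map b.repr.symm.toMonoidHom) h
  rw [MonoidHom.map_closure, ← Set.range_comp] at this
  rw [Subgroup.map_top_of_surjective _ b.repr.symm.surjective] at this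
  convert this using 2; rfl

theorem const_of_step {W : Type*} (b : FreeGroupBasis Y P) (h : P → W)
    (hs : ∀ z y, h (z * b y) = h z) (z : P) : h z = h 1 := by
  have key : ∀ w : P, w ∈ Subgroup.closure (Set.range b) → ∀ z, h (z * w) = h z := by
    intro w hw
    induction hw using Subgroup.closure_induction with
    | mem x hx => obtain ⟨y, rfl⟩ := hx; exact fun z => hs z y
    | one => simp
    | mul x y _ _ hx hy => intro z; rw [← mul_assoc, hy, hx]
    | inv x _ hx => intro z; rw [← hx (z * x⁻¹)]; simp
  have := key z (by rw [basis_closure]; trivial) 1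
  simpa using this

/-- one step of the right action on `P × M` -/
def stepEquiv (w : P) (g : P → M) : Equiv.Perm (P × M) where
  toFun q := (q.1 * w, q.2 + g q.1)
  invFun q := (q.1 * w⁻¹, q.2 - g (q.1 * w⁻¹))
  left_inv q := by ext <;> simp
  right_inv q := by ext <;> simp

theorem exists_int (b : FreeGroupBasis Y P) (g : P → Y → M) :
    ∃ I : P → M, I 1 = 0 ∧ ∀ z y, I (z * b y) = I z + g z y := by
  let θ : P →* (Equiv.Perm (P × M))ᵐᵒᵖ :=
    b.lift (fun y => MulOpposite.op (stepEquiv (b y) (fun z => g z y)))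
  have hθ : ∀ y, θ (b y) = MulOpposite.op (stepEquiv (b y) (fun z => g z y)) := by
    intro y; simp [θ]
  have hst : ∀ z y, (θ (z * b y)).unop (1, 0) =
      stepEquiv (b y) (fun z => g z y) ((θ z).unop (1, 0)) := by
    intro z y
    rw [map_mul, hθ]; simp [MulOpposite.unop_mul]
  have h1 : ∀ z, ((θ z).unop (1, 0)).1 = z := by
    intro z
    have := const_of_step b (fun z => ((θ z).unop (1, 0)).1 * z⁻¹) (by
      intro z y
      simp only [hst]; simp [stepEquiv]) z
    simp at this
    exact mul_inv_eq_one.mp this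
  refine ⟨fun z => ((θ z).unop (1, 0)).2, by simp, ?_⟩
  intro z y
  simp only [hst]
  simp [stepEquiv, h1]

noncomputable def Int' (b : FreeGroupBasis Y P) (g : P → Y → M) : P → M :=
  (exists_int b g).choose

theorem Int_one (b : FreeGroupBasis Y P) (g : P → Y → M) : Int' b g 1 = 0 :=
  (exists_int b g).choose_spec.1

theorem Int_step (b : FreeGroupBasis Y P) (g : P → Y → M) (z y) :
    Int' b g (z * b y) = Int' b g z + g z y :=
  (exists_int b g).choose_spec.2 z y

/-- translation/linearity: `Int g' = φ ∘ Int g` up to translation -/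
theorem Int_trans (b : FreeGroupBasis Y P) (g g' : P → Y → M) (φ : M →+ M) (x : P)
    (h : ∀ z y, g' (x * z) y = φ (g z y)) (z : P) :
    Int' b g' (x * z) = Int' b g' x + φ (Int' b g z) := by
  have := const_of_step b (fun z => Int' b g' (x * z) - φ (Int' b g z)) (by
    intro z y
    simp only [← mul_assoc, Int_step, map_add]
    rw [h]; abel) z
  simp [Int_one] at this
  rw [← this]; abel

end IntSec
end FixInert

namespace FixInert
section Cube
open Finset
variable {P C Y M : Type*} [Group P] [DecidableEq C] [AddCommGroup M]

/-- move the coordinates in `R` one step -/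
def bump (b : Y → P) (R : Finset C) (a : C → P) (y : C → Y) : C → P :=
  fun j => if j ∈ R then a j * b (y j) else a j

/-- iterated difference -/
def DS (b : Y → P) (S : Finset C) (f : (C → P) → (C → Y) → M) (a : C → P) (y : C → Y) : M :=
  ∑ R ∈ S.powerset, (-1 : ℤ) ^ (S.card + R.card) • f (bump b R a y) y

theorem bump_empty (b : Y → P) (a : C → P) (y : C → Y) : bump b ∅ a y = a := by
  funext j; simp [bump]

theorem DS_empty (b : Y → P) (f : (C → P) → (C → Y) → M) (a : C → P) (y : C → Y) :
    DS b ∅ f a y = f a y := by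
  simp [DS, bump_empty]

theorem bump_insert (b : Y → P) {R : Finset C} {l : C} (hl : l ∉ R) (a : C → P) (y : C → Y) :
    bump b (insert l R) a y = bump b R (Function.update a l (a l * b (y l))) y := by
  funext j
  by_cases hj : j = l
  · subst hj; simp [bump, hl]
  · simp [bump, hj]

theorem DS_insert (b : Y → P) {S : Finset C} {l : C} (hl : l ∉ S)
    (f : (C → P) → (C → Y) → M) (a : C → P) (y : C → Y) :
    DS b (insert l S) f a y =
      DS b S f (Function.update a l (a l * b (y l))) y - DS b S f a y := by
  unfold DS
  rw [sum_powerset_insert hl, card_insert_of_notMem hl]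
  have h1 : ∑ R ∈ S.powerset, (-1 : ℤ) ^ (S.card + 1 + R.card) • f (bump b R a y) y =
      - ∑ R ∈ S.powerset, (-1 : ℤ) ^ (S.card + R.card) • f (bump b R a y) y := by
    rw [← sum_neg_distrib]
    refine sum_congr rfl fun R _ => ?_
    rw [← neg_smul]; congr 1; ring
  have h2 : ∑ R ∈ S.powerset, (-1 : ℤ) ^ (S.card + 1 + (insert l R).card) •
        f (bump b (insert l R) a y) y =
      ∑ R ∈ S.powerset, (-1 : ℤ) ^ (S.card + R.card) •
        f (bump b R (Function.update a l (a l * b (y l))) y) y := by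
    refine sum_congr rfl fun R hR => ?_
    have hlR : l ∉ R := fun h => hl (mem_powerset.mp hR h)
    rw [card_insert_of_notMem hlR, bump_insert b hlR]
    congr 1
    ring
  rw [h1, h2]; abel

theorem DS_add (b : Y → P) (S : Finset C) (f g : (C → P) → (C → Y) → M) (a y) :
    DS b S (fun a y => f a y + g a y) a y = DS b S f a y + DS b S g a y := by
  simp [DS, sum_add_distrib]

theorem DS_sub (b : Y → P) (S : Finset C) (f g : (C → P) → (C → Y) → M) (a y) :
    DS b S (fun a y => f a y - g a y) a y = DS b S f a y - DS b S g a y := by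
  simp [DS, smul_sub, sum_sub_distrib]

theorem DS_sum {ι : Type*} (b : Y → P) (S : Finset C) (T : Finset ι)
    (f : ι → (C → P) → (C → Y) → M) (a y) :
    DS b S (fun a y => ∑ i ∈ T, f i a y) a y = ∑ i ∈ T, DS b S (f i) a y := by
  simp only [DS, smul_sum]
  rw [sum_comm]

theorem DS_map (b : Y → P) (S : Finset C) (φ : M →+ M) (f : (C → P) → (C → Y) → M) (a y) :
    DS b S (fun a y => φ (f a y)) a y = φ (DS b S f a y) := by
  simp [DS, map_sum, map_zsmul]

/-- if `f` does not depend on the coordinate `l ∈ S` then `D_S f = 0` -/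
theorem DS_zero_of_indep (b : Y → P) {S : Finset C} {l : C} (hl : l ∈ S)
    (f : (C → P) → (C → Y) → M)
    (hf : ∀ a y w, f (Function.update a l w) y = f a y) (a y) : DS b S f a y = 0 := by
  obtain ⟨T, hlT, rfl⟩ : ∃ T, l ∉ T ∧ insert l T = S := ⟨S.erase l, by simp, insert_erase hl⟩
  rw [DS_insert b hlT, sub_eq_zero]
  unfold DS
  refine sum_congr rfl fun R hR => ?_
  congr 1
  have hlR : l ∉ R := fun h => hlT (mem_powerset.mp hR h)
  rw [← hf (bump b R a y) y (a l * b (y l))]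
  congr 1
  funext j
  by_cases hj : j = l
  · subst hj; simp [bump, hlR]
  · simp [bump, hj]

theorem DS_const (b : Y → P) {S : Finset C} (hS : S.Nonempty) (m : M) (a y) :
    DS b S (fun _ _ => m) a y = 0 := by
  obtain ⟨l, hl⟩ := hS
  exact DS_zero_of_indep b hl _ (fun _ _ _ => rfl) a y

/-- `D_S f` only uses the `y` coordinates in `S` when `f` does not depend on `y` -/
theorem DS_congr (b : Y → P) (S : Finset C) (f : (C → P) → M) (a : C → P) (y y' : C → Y)
    (h : ∀ j ∈ S, y j = y' j) :
    DS b S (fun a _ => f a) a y = DS b S (fun a _ => f a) a y' := by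
  unfold DS
  refine sum_congr rfl fun R hR => ?_
  show _ • f _ = _ • f _
  congr 2
  funext j
  by_cases hj : j ∈ R
  · simp [bump, hj, h j (mem_powerset.mp hR hj)]
  · simp [bump, hj]

/-- change of all coordinates outside `S` -/
theorem DS_indep [Fintype C] (b : FreeGroupBasis Y P) (r : ℕ) (f : (C → P) → M)
    (h : ∀ S : Finset C, r < S.card → ∀ a y, DS b S (fun a _ => f a) a y = 0)
    (S : Finset C) (hS : S.card = r) (a a' : C → P) (y y' : C → Y)
    (ha : ∀ j ∈ S, a j = a' j) (hy : ∀ j ∈ S, y j = y' j) :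
    DS b S (fun a _ => f a) a y = DS b S (fun a _ => f a) a' y' := by
  rw [← DS_congr b S f a' y y' hy]
  have one : ∀ l, l ∉ S → ∀ (a : C → P) (w : P),
      DS b S (fun a _ => f a) (Function.update a l w) y = DS b S (fun a _ => f a) a y := by
    intro l hl a w
    have key := const_of_step b (fun z => DS b S (fun a _ => f a) (Function.update a l z) y) (by
      intro z u
      have h0 := h (insert l S) (by rw [card_insert_of_notMem hl]; omega)
        (Function.update a l z) (Function.update y l u)
      rw [DS_insert _ hl, sub_eq_zero] at h0
      simp only [Function.update_self, Function.update_idem] at h0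
      have hyy : ∀ j ∈ S, Function.update y l u j = y j := by
        intro j hj
        rw [Function.update_of_ne]; rintro rfl; exact hl hj
      rw [DS_congr b S f _ _ y hyy, DS_congr b S f _ _ y hyy] at h0
      exact h0)
    have h1 := key w
    have h2 := key (a l)
    simp only [Function.update_eq_self] at h2
    rw [h1, ← h2]
  have many : ∀ T : Finset C, (∀ l ∈ T, l ∉ S) → 
      DS b S (fun a _ => f a) (fun j => if j ∈ T then a' j else a j) y =
       DS b S (fun a _ => f a) a y := by
    intro T
    induction T using Finset.induction_on with
    | empty => simp
    | insert l T hl ih =>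
      intro hT
      rw [← ih (fun l hl => hT l (mem_insert_of_mem hl))]
      rw [← one l (hT l (mem_insert_self _ _)) (fun j => if j ∈ T then a' j else a j) (a' l)]
      congr 1
      funext j
      by_cases hj : j = l
      · subst hj; simp
      · simp [hj]
  rw [← many Sᶜ (by simp)]
  congr 1
  funext j
  by_cases hj : j ∈ S
  · simp [hj, ha j hj]
  · simp [hj]

end Cube
end FixInert

namespace FixInert
section Integ
open Finset
variable {P C Y M : Type*} [Group P] [CommGroup C] [DecidableEq C] [AddCommGroup M]

/-- action of `P` on vertices -/
def pact (τ : C →* MulAut P) (x : P) (a : C → P) : C → P := fun j => τ j⁻¹ x * a j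

def DepA (S : Finset C) (f : (C → P) → (C → Y) → M) : Prop :=
  ∀ a a' y, (∀ j ∈ S, a j = a' j) → f a y = f a' y

def DepY (U : Finset C) (f : (C → P) → (C → Y) → M) : Prop :=
  ∀ a y y', (∀ j ∈ U, y j = y' j) → f a y = f a y'

def PEq (τ : C →* MulAut P) (x : P) (φ : M →+ M) (f : (C → P) → (C → Y) → M) : Prop :=
  ∀ a y, f (pact τ x a) y = φ (f a y)

noncomputable def Jop (b : FreeGroupBasis Y P) (τ : C →* MulAut P) (l ν : C)
    (f : (C → P) → (C → Y) → M) (a : C → P) (y : C → Y) : M :=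
  Int' b (fun z u => f (Function.update a l z) (Function.update y l u)) (a l) -
  Int' b (fun z u => f (Function.update a l z) (Function.update y l u)) (τ (l⁻¹ * ν) (a ν))

theorem Jop_diff (b : FreeGroupBasis Y P) (τ : C →* MulAut P) {l ν : C} (h : ν ≠ l)
    (f : (C → P) → (C → Y) → M) (a : C → P) (y : C → Y) :
    Jop b τ l ν f (Function.update a l (a l * b (y l))) y - Jop b τ l ν f a y = f a y := by
  simp only [Jop, Function.update_idem, Function.update_self, Function.update_of_ne h, Int_step,
    Function.update_eq_self]
  abel

theorem Jop_PEq (b : FreeGroupBasis Y P) (τ : C →* MulAut P) {l ν : C}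
    (f : (C → P) → (C → Y) → M) (x : P) (φ : M →+ M) (h : PEq τ x φ f) :
    PEq τ x φ (Jop b τ l ν f) := by
  intro a y
  have e1 : ∀ z, Function.update (pact τ x a) l (τ l⁻¹ x * z) = pact τ x (Function.update a l z) := by
    intro z; funext j
    by_cases hj : j = l
    · subst hj; simp [pact]
    · simp [pact, hj]
  have key : ∀ z,
     Int' b (fun z u => f (Function.update (pact τ x a) l z) (Function.update y l u)) (τ l⁻¹ x * z) 
     = Int' b (fun z u => f (Function.update (pact τ x a) l z) (Function.update y l u)) (τ l⁻¹ x)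
      + φ (Int' b (fun z u => f (Function.update a l z) (Function.update y l u)) z) := by
    intro z
    apply Int_trans
    intro z u
    rw [e1, h]
  unfold Jop
  have e2 : τ (l⁻¹ * ν) (pact τ x a ν) = τ l⁻¹ x * τ (l⁻¹ * ν) (a ν) := by
    simp only [pact, map_mul]
    congr 1
    rw [← MulAut.mul_apply]
    simp [mul_assoc]
  have e3 : pact τ x a l = τ l⁻¹ x * a l := rfl
  rw [e2, e3, key, key, map_sub]; abel

theorem Jop_DepA (b : FreeGroupBasis Y P) (τ : C →* MulAut P) {l ν : C} {S : Finset C}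
    (hl : l ∈ S) (hν : ν ∈ S) (f : (C → P) → (C → Y) → M) (h : DepA S f) :
    DepA S (Jop b τ l ν f) := by
  intro a a' y ha
  have : (fun z u => f (Function.update a l z) (Function.update y l u)) =
      (fun z u => f (Function.update a' l z) (Function.update y l u)) := by
    funext z u
    apply h
    intro j hj
    by_cases hjl : j = l
    · subst hjl; simp
    · simp [hjl, ha j hj]
  unfold Jop
  rw [this, ha l hl, ha ν hν]

theorem Jop_DepY (b : FreeGroupBasis Y P) (τ : C →* MulAut P) {l ν : C} {U : Finset C}
    (f : (C → P) → (C → Y) → M) (h : DepY U f) :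
    DepY (U.erase l) (Jop b τ l ν f) := by
  intro a y y' hy
  have : (fun z u => f (Function.update a l z) (Function.update y l u)) =
      (fun z u => f (Function.update a l z) (Function.update y' l u)) := by
    funext z u
    apply h
    intro j hj
    by_cases hjl : j = l
    · subst hjl; simp
    · simp [hjl, hy j (mem_erase.mpr ⟨hjl, hj⟩)]
  unfold Jop
  rw [this]

theorem integrate (b : FreeGroupBasis Y P) (τ : C →* MulAut P) (S : Finset C) (i : C) (hi : i ∈ S)
    (T : Finset C) (hT : T ⊆ S) (hiT : i ∉ T) :
    ∀ (U : Finset C) (f : (C → P) → (C → Y) → M), DepA S f → DepY U f →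
    ∃ f' : (C → P) → (C → Y) → M, DepA S f' ∧ DepY (U \ T) f' ∧
      (∀ a y, DS b T f' a y = f a y) ∧ ∀ x φ, PEq τ x φ f → PEq τ x φ f' := by
  induction T using Finset.induction_on with
  | empty =>
    intro U f hA hY
    exact ⟨f, hA, by simpa using hY, fun a y => DS_empty _ _ _ _, fun _ _ h => h⟩
  | insert l T hl ih =>
    intro U f hA hY
    have hil : i ≠ l := fun h => hiT (h ▸ mem_insert_self _ _)
    obtain ⟨f', h1, h2, h3, h4⟩ := ih (fun j hj => hT (mem_insert_of_mem hj))
      (fun h => hiT (mem_insert_of_mem h)) (U.erase l) (Jop b τ l i f)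
      (Jop_DepA b τ (hT (mem_insert_self _ _)) hi f hA) (Jop_DepY b τ f hY)
    refine ⟨f', h1, ?_, ?_, fun x φ h => h4 x φ (Jop_PEq b τ f x φ h)⟩
    · convert h2 using 1
      ext j; simp; tauto
    · intro a y
      rw [DS_insert _ hl, h3, h3, Jop_diff b τ hil]

theorem integrate_full (b : FreeGroupBasis Y P) (τ : C →* MulAut P) (S : Finset C)
    (hS : 2 ≤ S.card) (f : (C → P) → (C → Y) → M) (hA : DepA S f) (hY : DepY S f) :
    ∃ f' : (C → P) → M, (∀ a a', (∀ j ∈ S, a j = a' j) → f' a = f' a') ∧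
      (∀ a y, DS b S (fun a _ => f' a) a y = f a y) ∧
      ∀ x φ, PEq τ x φ f → ∀ a, f' (pact τ x a) = φ (f' a) := by
  obtain ⟨i, hi, i', hi', hne⟩ := Finset.one_lt_card.mp (show 1 < S.card by omega)
  by_cases hYe : Nonempty Y
  · obtain ⟨f', h1, h2, h3, h4⟩ := integrate b τ S i hi (S.erase i) (erase_subset _ _) (by simp)
      (S.erase i) (Jop b τ i i' f) (Jop_DepA b τ hi hi' f hA) (Jop_DepY b τ f hY)
    obtain ⟨y0⟩ := hYe
    have hf : ∀ a y, f' a y = f' a (fun _ => y0) := fun a y => h2 a _ _ (by simp)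
    have hf' : f' = fun a _ => f' a (fun _ => y0) := by funext a y; exact hf a y
    refine ⟨fun a => f' a (fun _ => y0), fun a a' h => h1 _ _ _ h, ?_, ?_⟩
    · intro a y
      rw [← hf']
      conv_lhs => rw [← insert_erase hi]
      rw [DS_insert _ (by simp), h3, h3, Jop_diff b τ hne.symm]
    · intro x φ h a
      exact h4 x φ (Jop_PEq b τ f x φ h) a _
  · refine ⟨fun _ => 0, fun _ _ _ => rfl, fun a y => ?_, fun _ _ _ _ => by simp⟩
    exact absurd ⟨y i⟩ hYe
end Integ
end FixInert

namespace FixInert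

theorem equiv_ext {G X Z : Type*} [Group G] [MulAction G X] [MulAction G Z] (R : X → Z → Prop)
    (hR : ∀ (γ : G) x z, R x z → R (γ • x) (γ • z))
    (h : ∀ x, ∃ z, R x z ∧ ∀ γ : G, γ • x = x → γ • z = z) :
    ∃ f : X → Z, (∀ x, R x (f x)) ∧ ∀ (γ : G) x, f (γ • x) = γ • f x := by
  choose z hz1 hz2 using h
  let rep : X → X := fun x => Quotient.out (Quotient.mk (MulAction.orbitRel G X) x)
  have hrep : ∀ x, ∃ γ : G, γ • rep x = x := by
    intro x
    have : (MulAction.orbitRel G X) (rep x) x := Quotient.exact (Quotient.out_eq _)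
    have h2 := (MulAction.orbitRel G X).symm this
    exact h2
  have hrep2 : ∀ (γ : G) x, rep (γ • x) = rep x := by
    intro γ x
    show Quotient.out _ = Quotient.out _
    congr 1
    apply Quotient.sound
    show (MulAction.orbitRel G X) _ _
    rw [MulAction.orbitRel_apply]
    exact MulAction.mem_orbit _ _
  choose c hc using hrep
  refine ⟨fun x => c x • z (rep x), fun x => ?_, fun γ x => ?_⟩
  · have := hR (c x) _ _ (hz1 (rep x))
    rwa [hc x] at this
  · have h1 := hc (γ • x)
    rw [hrep2] at h1
    have h2 : (c x)⁻¹ • γ⁻¹ • c (γ • x) • rep x = rep x := by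
      rw [h1, inv_smul_smul, inv_smul_eq_iff, hc]
    have h3 := hz2 (rep x) ((c x)⁻¹ * (γ⁻¹ * c (γ • x))) (by rw [mul_smul, mul_smul, h2])
    simp only [hrep2]
    rw [mul_smul, inv_smul_eq_iff, mul_smul, inv_smul_eq_iff] at h3
    exact h3

section Act
open Finset SemidirectProduct
variable {P C Y M : Type*} [Group P] [CommGroup C] [DecidableEq C] [AddCommGroup M]
variable {τ : C →* MulAut P}

def vact (γ : P ⋊[τ] C) (a : C → P) : C → P := fun j => τ j⁻¹ γ.left * a (γ.right⁻¹ * j)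
def yact (γ : P ⋊[τ] C) (y : C → Y) : C → Y := fun j => y (γ.right⁻¹ * j)
def cact (γ : P ⋊[τ] C) (c : C → Option (P × Y)) : C → Option (P × Y) :=
  fun j => (c (γ.right⁻¹ * j)).map (fun q => (τ j⁻¹ γ.left * q.1, q.2))

theorem vact_one (a : C → P) : vact (1 : P ⋊[τ] C) a = a := by
  funext j; simp [vact]

theorem vact_mul (γ δ : P ⋊[τ] C) (a : C → P) : vact (γ * δ) a = vact γ (vact δ a) := by
  funext j
  simp only [vact, mul_left, mul_right, map_mul, mul_inv_rev, inv_inv, mul_assoc]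
  rw [← MulAut.mul_apply, ← map_mul]

theorem cact_one (a : C → Option (P × Y)) : cact (1 : P ⋊[τ] C) a = a := by
  funext j; simp [cact]

theorem cact_mul (γ δ : P ⋊[τ] C) (a : C → Option (P × Y)) :
    cact (γ * δ) a = cact γ (cact δ a) := by
  funext j
  simp only [cact, mul_left, mul_right, map_mul, mul_inv_rev, inv_inv, mul_assoc, Option.map_map]
  rw [← MulAut.mul_apply, ← map_mul]
  rfl

@[reducible] def vertAct (τ : C →* MulAut P) : MulAction (P ⋊[τ] C) (C → P) where
  smul := vact
  one_smul := vact_one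
  mul_smul := vact_mul

@[reducible] def cellAct (τ : C →* MulAut P) (Y : Type*) : MulAction (P ⋊[τ] C) (C → Option (P × Y)) where
  smul := cact
  one_smul := cact_one
  mul_smul := cact_mul

@[ext] structure Tup (C M : Type*) where
  val : C → M

@[reducible] def tupAct (τ : C →* MulAut P) (M : Type*) [AddCommGroup M]
    [DistribMulAction (P ⋊[τ] C) M] : MulAction (P ⋊[τ] C) (Tup C M) where
  smul γ μ := ⟨fun j => γ • μ.val (γ.right⁻¹ * j)⟩
  one_smul μ := by
    ext j
    show (1 : P ⋊[τ] C) • μ.val _ = _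
    simp
  mul_smul γ δ μ := by
    ext j
    show (γ * δ) • μ.val _ = γ • δ • μ.val _
    simp [mul_smul, mul_assoc]

theorem vact_inl (x : P) (a : C → P) : vact (inl x : P ⋊[τ] C) a = pact τ x a := by
  funext j; simp [vact, pact]

theorem stab_cases [Finite C] (hp : (Nat.card C).Prime) (St : Subgroup (P ⋊[τ] C))
    (h : ∀ γ ∈ St, γ.right = 1 → γ = 1) :
    (∀ γ ∈ St, γ = 1) ∨ ∃ t : C →* P ⋊[τ] C, (∀ j, (t j).right = j) ∧
      (∀ γ ∈ St, γ = t γ.right) ∧ ∀ j, t j ∈ St := by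
  haveI : Fact (Nat.card C).Prime := ⟨hp⟩
  let f : St →* C := (rightHom).comp St.subtype
  have hf : Function.Injective f := by
    rw [injective_iff_map_eq_one]
    intro γ hγ
    exact Subtype.ext (h γ.1 γ.2 hγ)
  rcases Subgroup.eq_bot_or_eq_top_of_prime_card f.range with hb | ht
  · left
    intro γ hγ
    apply h γ hγ
    have : f ⟨γ, hγ⟩ ∈ f.range := ⟨_, rfl⟩
    rw [hb, Subgroup.mem_bot] at this
    exact this
  · right
    let e : St ≃* C := MulEquiv.ofBijective f ⟨hf, MonoidHom.range_eq_top.mp ht⟩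
    refine ⟨St.subtype.comp e.symm.toMonoidHom, fun j => ?_, fun γ hγ => ?_, fun j => (e.symm j).2⟩
    · exact e.apply_symm_apply j
    · have : e.symm (e ⟨γ, hγ⟩) = ⟨γ, hγ⟩ := e.symm_apply_apply _
      exact (congrArg Subtype.val this).symm

theorem DS_equiv (b : Y → P) (S : Finset C) (f : (C → P) → (C → Y) → M) (γ : P ⋊[τ] C) (a y) :
    DS b (S.image (γ.right * ·)) f (vact γ a) (yact γ y) =
      DS b S (fun a y => f (vact γ a) (yact γ y)) a y := by
  induction S using Finset.induction_on generalizing a with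
  | empty => simp [DS_empty]
  | insert l S hl ih =>
    rw [image_insert, DS_insert _ hl, DS_insert, ← ih, ← ih]
    · congr 2
      funext j
      by_cases hj : j = γ.right * l
      · subst hj
        simp [vact, yact, mul_assoc]
      · have : γ.right⁻¹ * j ≠ l := by
          rintro rfl; simp at hj
        simp [vact, hj, this]
    · simpa using hl

variable [DistribMulAction (P ⋊[τ] C) M]

def AffEq (D : P ⋊[τ] C → M) (f : (C → P) → M) : Prop :=
  ∀ γ a, f (vact γ a) = D γ + γ • f a

theorem DS_affEq (b : Y → P) (D : P ⋊[τ] C → M) (f : (C → P) → M) (hf : AffEq D f)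
    (S : Finset C) (hS : S.Nonempty) (γ : P ⋊[τ] C) (a y) :
    DS b (S.image (γ.right * ·)) (fun a _ => f a) (vact γ a) (yact γ y) =
      γ • DS b S (fun a _ => f a) a y := by
  rw [DS_equiv]
  simp only [hf γ]
  rw [DS_add, DS_const _ hS, zero_add]
  exact DS_map b S (DistribSMul.toAddMonoidHom M γ) _ a y

theorem exists_affEq [Finite C] (hp : (Nat.card C).Prime) (D : P ⋊[τ] C → M)
    (hD : ∀ γ δ, D (γ * δ) = D γ + γ • D δ)
    (H2 : ∀ t : C →* P ⋊[τ] C, (∀ j, (t j).right = j) → ∃ m, ∀ j, D (t j) + t j • m = m) :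
    ∃ f : (C → P) → M, AffEq D f := by
  have hD1 : D 1 = 0 := by
    have := hD 1 1; simp at this; exact this
  letI := vertAct τ
  let aff : MulAction (P ⋊[τ] C) M :=
    { smul := fun γ m => D γ + γ • m
      one_smul := fun m => by show D 1 + (1 : P ⋊[τ] C) • m = m; simp [hD1]
      mul_smul := fun γ δ m => by
        show D (γ * δ) + (γ * δ) • m = D γ + γ • (D δ + δ • m)
        rw [hD, mul_smul, smul_add, add_assoc] }
  obtain ⟨f, -, hf⟩ := @equiv_ext (P ⋊[τ] C) (C → P) M _ _ aff (fun _ _ => True)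
    (fun _ _ _ _ => trivial) (by
      intro a
      rcases stab_cases hp (MulAction.stabilizer (P ⋊[τ] C) a) (by
        intro γ hγ h1
        have h2 : vact γ a = a := hγ
        have h3 := congrFun h2 1
        simp [vact, h1] at h3
        exact SemidirectProduct.ext h3 h1) with h | ⟨t, ht, h, -⟩
      · refine ⟨0, trivial, fun γ hγ => ?_⟩
        have := h γ hγ
        subst this
        exact aff.one_smul 0
      · obtain ⟨m, hm⟩ := H2 t ht
        refine ⟨m, trivial, fun γ hγ => ?_⟩
        have := h γ hγ
        rw [this]
        exact hm _)
  exact ⟨f, hf⟩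

end Act
end FixInert

namespace FixInert
section Norm
open Finset SemidirectProduct
variable {P C Y M : Type*} [Group P] [CommGroup C] [DecidableEq C] [AddCommGroup M]
variable {τ : C →* MulAut P} [Fintype C] [DistribMulAction (P ⋊[τ] C) M]

def csupp (c : C → Option (P × Y)) : Finset C := univ.filter fun j => (c j).isSome
def cmk (S : Finset C) (a : C → P) (y : C → Y) : C → Option (P × Y) :=
  fun j => if j ∈ S then some (a j, y j) else none
def aOf (c : C → Option (P × Y)) : C → P := fun j => ((c j).map Prod.fst).getD 1
def yOf (y0 : Y) (c : C → Option (P × Y)) : C → Y := fun j => ((c j).map Prod.snd).getD y0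

theorem csupp_cmk (S : Finset C) (a : C → P) (y : C → Y) : csupp (cmk S a y) = S := by
  ext j; by_cases h : j ∈ S <;> simp [csupp, cmk, h]

theorem csupp_cact (γ : P ⋊[τ] C) (c : C → Option (P × Y)) :
    csupp (cact γ c) = (csupp c).image (γ.right * ·) := by
  ext j
  simp only [csupp, cact, mem_filter, mem_univ, true_and, Option.isSome_map, mem_image]
  constructor
  · intro h; exact ⟨_, h, by simp⟩
  · rintro ⟨i, hi, rfl⟩; simpa using hi

theorem cact_cmk (γ : P ⋊[τ] C) (S : Finset C) (a : C → P) (y : C → Y) :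
    cact γ (cmk S a y) = cmk (S.image (γ.right * ·)) (vact γ a) (yact γ y) := by
  funext j
  by_cases h : γ.right⁻¹ * j ∈ S
  · have h2 : j ∈ S.image (γ.right * ·) := mem_image.mpr ⟨_, h, by simp⟩
    simp only [cact, cmk, h, h2, if_true]
    rfl
  · have h2 : j ∉ S.image (γ.right * ·) := by
      intro h'
      obtain ⟨i, hi, rfl⟩ := mem_image.mp h'
      simp at h; exact h hi
    simp only [cact, cmk, h, h2, if_false]
    rfl

theorem norm_step (hp : (Nat.card C).Prime) (b : FreeGroupBasis Y P) (y0 : Y)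
    (D : P ⋊[τ] C → M)
    (H1 : ∀ t : C →* P ⋊[τ] C, (∀ j, (t j).right = j) → ∀ m : M, (∀ j, t j • m = m) →
      ∃ m', m = ∑ j, t j • m')
    (f : (C → P) → M) (hf : AffEq D f) (r : ℕ) (hr : 1 ≤ r)
    (hv : ∀ S : Finset C, r < S.card → ∀ a y, DS b S (fun a _ => f a) a y = 0) :
    ∃ g : (C → Option (P × Y)) → M, (∀ x c, g (cact (inl x : P ⋊[τ] C) c) = (inl x : P ⋊[τ] C) • g c) ∧
      ∀ S : Finset C, S.card = r → ∀ a y, DS b S (fun a _ => f a) a y =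
        ∑ j, (inr j : P ⋊[τ] C) • g (cact (inr j : P ⋊[τ] C)⁻¹ (cmk S a y)) := by
  classical
  let g0 : (C → Option (P × Y)) → M := fun c =>
    if (csupp c).card = r then DS b (csupp c) (fun a _ => f a) (aOf c) (yOf y0 c) else 0
  have hg0 : ∀ (γ : P ⋊[τ] C) c, g0 (cact γ c) = γ • g0 c := by
    intro γ c
    have hcard : (csupp (cact γ c)).card = (csupp c).card := by
      rw [csupp_cact, card_image_of_injective _ (mul_right_injective _)]
    by_cases h : (csupp c).card = r
    · simp only [g0, hcard, h, if_true]
      have hne : (csupp c).Nonempty := by rw [← card_pos]; omega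
      rw [← DS_affEq b D f hf (csupp c) hne, csupp_cact]
      apply DS_indep b r f hv
      · rw [card_image_of_injective _ (mul_right_injective _), h]
      · intro j hj
        obtain ⟨i, hi, rfl⟩ := mem_image.mp hj
        simp only [csupp, mem_filter, mem_univ, true_and, Option.isSome_iff_exists] at hi
        obtain ⟨q, hq⟩ := hi
        simp [aOf, cact, vact, hq]
      · intro j hj
        obtain ⟨i, hi, rfl⟩ := mem_image.mp hj
        simp only [csupp, mem_filter, mem_univ, true_and, Option.isSome_iff_exists] at hi
        obtain ⟨q, hq⟩ := hi
        simp [yOf, cact, yact, hq]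
    · simp only [g0, hcard, h, if_false, smul_zero]
  letI := cellAct τ Y
  letI := tupAct τ M
  have tup_def : ∀ (γ : P ⋊[τ] C) (μ : Tup C M) j, (γ • μ).val j = γ • μ.val (γ.right⁻¹ * j) :=
    fun _ _ _ => rfl
  have cell_def : ∀ (γ : P ⋊[τ] C) (c : C → Option (P × Y)), γ • c = cact γ c :=
    fun _ _ => rfl
  obtain ⟨μ, hμ1, hμ2⟩ := @equiv_ext (P ⋊[τ] C) (C → Option (P × Y)) (Tup C M) _ (cellAct τ Y)
    (tupAct τ M)
    (fun c μ => ∑ j, μ.val j = g0 c) (by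
      intro γ c μ h
      rw [cell_def, hg0, ← h]
      simp only [tup_def]
      rw [smul_sum]
      exact Fintype.sum_equiv (Equiv.mulLeft γ.right⁻¹) _ _ (fun j => by simp))
    (by
      intro c
      by_cases hc : (csupp c).card = r
      · have hne : (csupp c).Nonempty := by rw [← card_pos]; omega
        obtain ⟨i, hi⟩ := hne
        simp only [csupp, mem_filter, mem_univ, true_and, Option.isSome_iff_exists] at hi
        obtain ⟨q, hq⟩ := hi
        have hg0c : ∀ γ : P ⋊[τ] C, γ • c = c → γ • g0 c = g0 c := by
          intro γ hγ
          rw [← hg0, ← cell_def, hγ]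
        rcases stab_cases hp (MulAction.stabilizer (P ⋊[τ] C) c) (by
          intro γ hγ h1
          have h2 : cact γ c = c := hγ
          have h3 := congrFun h2 i
          simp [cact, h1, hq] at h3
          have h4 := congrArg Prod.fst h3
          simp at h4
          exact SemidirectProduct.ext h4 h1) with h | ⟨t, ht, h, hall⟩
        · refine ⟨⟨Pi.single 1 (g0 c)⟩, by simp, fun γ hγ => ?_⟩
          rw [h γ hγ, one_smul]
        · obtain ⟨m', hm'⟩ := H1 t ht (g0 c) (fun j => hg0c _ (hall j))
          refine ⟨⟨fun j => t j • m'⟩, hm'.symm, fun γ hγ => ?_⟩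
          rw [h γ hγ]
          ext j
          rw [tup_def, ht, ← mul_smul, ← map_mul]
          simp
      · refine ⟨⟨fun _ => 0⟩, by simp [g0, hc], fun γ _ => ?_⟩
        ext j; rw [tup_def]; simp)
  refine ⟨fun c => (μ c).val 1, fun x c => ?_, fun S hS a y => ?_⟩
  · show (μ (cact _ c)).val 1 = _
    rw [← cell_def, hμ2, tup_def]; simp
  · have h1 : g0 (cmk S a y) = DS b S (fun a _ => f a) a y := by
      simp only [g0, csupp_cmk, hS, if_true]
      apply DS_indep b r f hv S hS
      · intro j hj; simp [aOf, cmk, hj]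
      · intro j hj; simp [yOf, cmk, hj]
    rw [← h1, ← hμ1]
    refine sum_congr rfl fun j _ => ?_
    have h2 := hμ2 (inr j : P ⋊[τ] C) ((inr j : P ⋊[τ] C)⁻¹ • cmk S a y)
    rw [smul_inv_smul] at h2
    rw [h2, tup_def]
    simp
    rfl
end Norm
end FixInert

namespace FixInert
section Star
open Finset SemidirectProduct
variable {P C Y M : Type*} [Group P] [CommGroup C] [DecidableEq C] [AddCommGroup M]
variable {τ : C →* MulAut P} [Fintype C] [DistribMulAction (P ⋊[τ] C) M]

variable (τ) in
def Nm (F : (C → P) → M) (a : C → P) : M :=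
  ∑ j, (inr j : P ⋊[τ] C) • F (vact (inr j : P ⋊[τ] C)⁻¹ a)

theorem comm_inr_inl (j : C) (x : P) :
    (inr j : P ⋊[τ] C)⁻¹ * inl x = inl (τ j⁻¹ x) * (inr j)⁻¹ := by
  ext <;> simp

theorem comm_inr_inl2 (j : C) (x : P) :
    (inr j : P ⋊[τ] C) * inl (τ j⁻¹ x) = inl x * inr j := by
  ext <;> simp

theorem Nm_inr (F : (C → P) → M) (d : C) (a : C → P) :
    Nm τ F (vact (inr d : P ⋊[τ] C) a) = (inr d : P ⋊[τ] C) • Nm τ F a := by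
  unfold Nm
  rw [smul_sum]
  refine Fintype.sum_equiv (Equiv.mulLeft d⁻¹) _ _ (fun j => ?_)
  rw [← vact_mul, ← mul_smul]
  congr 2
  · simp [← map_mul]
  · simp [← map_mul, ← map_inv]

theorem Nm_inl (F : (C → P) → M) (E : P → M)
    (hF : ∀ x a, F (pact τ x a) = E x + (inl x : P ⋊[τ] C) • F a) (x : P) (a : C → P) :
    Nm τ F (vact (inl x : P ⋊[τ] C) a) =
      ∑ j, (inr j : P ⋊[τ] C) • E (τ j⁻¹ x) + (inl x : P ⋊[τ] C) • Nm τ F a := by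
  unfold Nm
  rw [smul_sum, ← sum_add_distrib]
  refine sum_congr rfl fun j _ => ?_
  rw [← vact_mul, comm_inr_inl, vact_mul, vact_inl, hF, smul_add, ← mul_smul, comm_inr_inl2,
    mul_smul]

theorem Nm_equiv (F : (C → P) → M)
    (hF : ∀ x a, F (pact τ x a) = (inl x : P ⋊[τ] C) • F a) (γ : P ⋊[τ] C) (a : C → P) :
    Nm τ F (vact γ a) = γ • Nm τ F a := by
  have h := Nm_inl (τ := τ) F (fun _ => 0) (by simpa using hF) γ.left (vact (inr γ.right : P ⋊[τ] C) a)
  rw [← vact_mul, Nm_inr, ← mul_smul] at h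
  simpa [inl_left_mul_inr_right] using h

theorem DS_Nm (b : Y → P) (S : Finset C) (F : (C → P) → M) (a : C → P) (y : C → Y) :
    DS b S (fun a _ => Nm τ F a) a y = ∑ j, (inr j : P ⋊[τ] C) •
      DS b (S.image (j⁻¹ * ·)) (fun a _ => F a) (vact (inr j : P ⋊[τ] C)⁻¹ a)
        (yact (inr j : P ⋊[τ] C)⁻¹ y) := by
  unfold Nm
  rw [DS_sum]
  refine sum_congr rfl fun j _ => ?_
  have h1 := DS_map b S (DistribSMul.toAddMonoidHom M (inr j : P ⋊[τ] C))
    (fun a _ => F (vact (inr j : P ⋊[τ] C)⁻¹ a)) a y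
  have h2 := DS_equiv b S (fun a _ => F a) (inr j : P ⋊[τ] C)⁻¹ a y
  simp only [inv_right, right_inr] at h2
  rw [h2]
  exact h1

theorem sum_f_DS [DecidableEq (Finset C)] (b : Y → P) (r : ℕ) (f : Finset C → (C → P) → M)
    (h1 : ∀ S : Finset C, S.card = r → ∀ a a', (∀ j ∈ S, a j = a' j) → f S a = f S a')
    (S : Finset C) (hS : r ≤ S.card) (a : C → P) (y : C → Y) :
    DS b S (fun a _ => ∑ S' ∈ univ.powersetCard r, f S' a) a y =
      if S.card = r then DS b S (fun a _ => f S a) a y else 0 := by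
  rw [DS_sum b S (univ.powersetCard r) (fun S' a _ => f S' a)]
  have hz : ∀ S' ∈ univ.powersetCard r, S' ≠ S → DS b S (fun a _ => f S' a) a y = 0 := by
    intro S' hS' hne
    have hc := (mem_powersetCard.mp hS').2
    have : ∃ l ∈ S, l ∉ S' := by
      by_contra hcon
      push Not at hcon
      exact hne (eq_of_subset_of_card_le hcon (by omega)).symm
    obtain ⟨l, hl, hl'⟩ := this
    apply DS_zero_of_indep b hl
    intro a y w
    apply h1 S' hc
    intro j hj
    rw [Function.update_of_ne]; rintro rfl; exact hl' hj
  split_ifs with h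
  · rw [sum_eq_single_of_mem S (mem_powersetCard.mpr ⟨subset_univ _, h⟩)]
    intro S' hS' hne
    exact hz S' hS' hne
  · apply sum_eq_zero
    intro S' hS'
    apply hz S' hS'
    rintro rfl
    exact h (mem_powersetCard.mp hS').2

theorem cell_DepA (S : Finset C) (g : (C → Option (P × Y)) → M) :
    DepA S (fun a y => g (cmk S a y)) := by
  intro a a' y h
  show g _ = g _
  congr 1
  funext j
  by_cases hj : j ∈ S
  · simp [cmk, hj, h j hj]
  · simp [cmk, hj]

theorem cell_DepY (S : Finset C) (g : (C → Option (P × Y)) → M) :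
    DepY S (fun a y => g (cmk S a y)) := by
  intro a y y' h
  show g _ = g _
  congr 1
  funext j
  by_cases hj : j ∈ S
  · simp [cmk, hj, h j hj]
  · simp [cmk, hj]

theorem cell_pact (S : Finset C) (x : P) (a : C → P) (y : C → Y) :
    cmk S (pact τ x a) y = cact (inl x : P ⋊[τ] C) (cmk S a y) := by
  rw [cact_cmk]
  simp only [right_inl, one_mul, image_id', vact_inl]
  congr 1
  funext j; simp [yact]

/-- after subtracting norms the top differences vanish -/
theorem sub_Nm_vanish (b : Y → P) (r : ℕ) (Gf F : (C → P) → M)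
    (g : (C → Option (P × Y)) → M)
    (hv : ∀ S : Finset C, r < S.card → ∀ a y, DS b S (fun a _ => Gf a) a y = 0)
    (hg : ∀ S : Finset C, S.card = r → ∀ a y, DS b S (fun a _ => Gf a) a y =
        ∑ j, (inr j : P ⋊[τ] C) • g (cact (inr j : P ⋊[τ] C)⁻¹ (cmk S a y)))
    (hF : ∀ S : Finset C, r ≤ S.card → ∀ a y, DS b S (fun a _ => F a) a y =
       if S.card = r then g (cmk S a y) else 0) 
    (S : Finset C) (hS : r ≤ S.card) (a y) :
    DS b S (fun a _ => Gf a - Nm τ F a) a y = 0 := by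
  rw [DS_sub b S (fun a _ => Gf a) (fun a _ => Nm τ F a), DS_Nm]
  have hc : ∀ j : C, (S.image (j⁻¹ * ·)).card = S.card :=
    fun j => card_image_of_injective _ (mul_right_injective _)
  by_cases h : S.card = r
  · rw [hg S h, sub_eq_zero]
    refine sum_congr rfl fun j _ => ?_
    rw [hF _ (by rw [hc]; exact hS), if_pos (by rw [hc, h]), cact_cmk]
    simp
  · rw [hv S (by omega), zero_sub, neg_eq_zero]
    apply sum_eq_zero
    intro j _
    rw [hF _ (by rw [hc]; exact hS), if_neg (by rw [hc]; exact h), smul_zero]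

theorem star (hp : (Nat.card C).Prime) (b : FreeGroupBasis Y P) (y0 : Y)
    (D : P ⋊[τ] C → M) (hD : ∀ γ δ, D (γ * δ) = D γ + γ • D δ)
    (H1 : ∀ t : C →* P ⋊[τ] C, (∀ j, (t j).right = j) → ∀ m : M, (∀ j, t j • m = m) →
      ∃ m', m = ∑ j, t j • m')
    (H2 : ∀ t : C →* P ⋊[τ] C, (∀ j, (t j).right = j) → ∃ m, ∀ j, D (t j) + t j • m = m) :
    ∃ (E : P → M) (m : M), (∀ x x', E (x * x') = E x + (inl x : P ⋊[τ] C) • E x') ∧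
      ∀ x, D (inl x) = m - (inl x : P ⋊[τ] C) • m + ∑ j, (inr j : P ⋊[τ] C) • E (τ j⁻¹ x) := by
  classical
  have desc : ∀ k : ℕ, ∃ Gf : (C → P) → M, AffEq D Gf ∧
      ∀ S : Finset C, max 1 (Fintype.card C - k) < S.card →
        ∀ a y, DS b S (fun a _ => Gf a) a y = 0 := by
    intro k
    induction k with
    | zero =>
      obtain ⟨f, hf⟩ := exists_affEq hp D hD H2
      refine ⟨f, hf, fun S hS => ?_⟩
      have := S.card_le_univ
      omega
    | succ k ih =>
      obtain ⟨Gf, hGf, hv⟩ := ih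
      by_cases hk : Fintype.card C - k ≤ 1
      · exact ⟨Gf, hGf, fun S hS => hv S (by omega)⟩
      · set r := Fintype.card C - k with hr
        have hv' : ∀ S : Finset C, r < S.card → ∀ a y, DS b S (fun a _ => Gf a) a y = 0 :=
          fun S hS => hv S (by omega)
        obtain ⟨g, hg1, hg2⟩ := norm_step hp b y0 D H1 Gf hGf r (by omega) hv'
        have h_intg : ∀ S : Finset C, ∃ f' : (C → P) → M, S.card = r →
            (∀ a a', (∀ j ∈ S, a j = a' j) → f' a = f' a') ∧
            (∀ a y, DS b S (fun a _ => f' a) a y = g (cmk S a y)) ∧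
            ∀ x, ∀ a, f' (pact τ x a) = (inl x : P ⋊[τ] C) • (f' a) := by
          intro S
          by_cases hS : S.card = r
          · obtain ⟨f', h1, h2, h3⟩ := integrate_full b τ S (by omega) (fun a y => g (cmk S a y))
              (cell_DepA S g) (cell_DepY S g)
            refine ⟨f', fun _ => ⟨h1, h2, fun x a => ?_⟩⟩
            exact h3 x (DistribSMul.toAddMonoidHom M (inl x : P ⋊[τ] C)) (by
              intro a y
              show g _ = (inl x : P ⋊[τ] C) • g _
              rw [cell_pact, hg1]) a
          · exact ⟨0, fun h => absurd h hS⟩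
        choose f hf using h_intg
        set F : (C → P) → M := fun a => ∑ S' ∈ univ.powersetCard r, f S' a with hFdef
        have hFeq : ∀ x a, F (pact τ x a) = (inl x : P ⋊[τ] C) • F a := by
          intro x a
          simp only [hFdef, smul_sum]
          refine sum_congr rfl fun S hS => ?_
          exact (hf S (mem_powersetCard.mp hS).2).2.2 x a
        have hFD : ∀ S : Finset C, r ≤ S.card → ∀ a y, DS b S (fun a _ => F a) a y =
            if S.card = r then g (cmk S a y) else 0 := by
          intro S hS a y
          rw [hFdef, sum_f_DS (b : Y → P) r f (fun S hS => (hf S hS).1) S hS a y]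
          split_ifs with h
          · exact (hf S h).2.1 a y
          · rfl
        refine ⟨fun a => Gf a - Nm τ F a, fun γ a => ?_, fun S hS a y => ?_⟩
        · show Gf _ - Nm τ F _ = _ + _ • (_ - _)
          rw [hGf, Nm_equiv F hFeq, smul_sub]; abel
        · exact sub_Nm_vanish b r Gf F g hv' hg2 hFD S (by omega) a y
  obtain ⟨Gf, hGf, hv⟩ := desc (Fintype.card C)
  have hv' : ∀ S : Finset C, 1 < S.card → ∀ a y, DS b S (fun a _ => Gf a) a y = 0 :=
    fun S hS => hv S (by omega)
  obtain ⟨g, hg1, hg2⟩ := norm_step hp b y0 D H1 Gf hGf 1 le_rfl hv'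
  let gi : C → P → Y → M := fun i z u => g (cmk {i} (fun _ => z) (fun _ => u))
  let fi : C → (C → P) → M := fun i a => Int' b (gi i) (a i)
  let Ei : C → P → M := fun i x => Int' b (gi i) (τ i⁻¹ x)
  have hgi : ∀ i x z u, gi i (τ i⁻¹ x * z) u = (inl x : P ⋊[τ] C) • gi i z u := by
    intro i x z u
    simp only [gi]
    rw [← hg1, ← cell_pact]
    congr 1
    funext j
    by_cases hj : j = i
    · subst hj; simp [cmk, pact]
    · simp [cmk, hj]
  have hInt : ∀ i x z, Int' b (gi i) (τ i⁻¹ x * z) = Ei i x +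
      (inl x : P ⋊[τ] C) • Int' b (gi i) z := by
    intro i x z
    exact Int_trans b (gi i) (gi i) (DistribSMul.toAddMonoidHom M (inl x : P ⋊[τ] C))
      (τ i⁻¹ x) (hgi i x) z
  let F : (C → P) → M := fun a => ∑ i, fi i a
  let E : P → M := fun x => ∑ i, Ei i x
  have hFE : ∀ x a, F (pact τ x a) = E x + (inl x : P ⋊[τ] C) • F a := by
    intro x a
    simp only [F, E, smul_sum, ← sum_add_distrib]
    refine sum_congr rfl fun i _ => ?_
    exact hInt i x (a i)
  have hE : ∀ x x', E (x * x') = E x + (inl x : P ⋊[τ] C) • E x' := by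
    intro x x'
    simp only [E, smul_sum, ← sum_add_distrib]
    refine sum_congr rfl fun i _ => ?_
    simp only [Ei, map_mul]
    exact hInt i x _
  have hFD : ∀ S : Finset C, 1 ≤ S.card → ∀ a y, DS b S (fun a _ => F a) a y =
      if S.card = 1 then g (cmk S a y) else 0 := by
    intro S hS a y
    have h1 : ∀ i, i ∉ S.erase i := by simp
    by_cases h : S.card = 1
    · obtain ⟨i, rfl⟩ := card_eq_one.mp h
      simp only [F]
      rw [if_pos h, DS_sum b {i} univ (fun i a _ => fi i a), sum_eq_single_of_mem i (mem_univ _)]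
      · rw [← insert_empty, DS_insert _ (by simp), DS_empty, DS_empty]
        simp only [fi, Function.update_self, Int_step, add_sub_cancel_left, gi]
        congr 1
        funext j
        by_cases hj : j = i
        · subst hj; simp [cmk]
        · simp [cmk, hj]
      · intro j _ hj
        apply DS_zero_of_indep (l := i) _ (mem_singleton_self _)
        intro a y w
        simp [fi, hj]
    · rw [if_neg h]
      simp only [F]
      rw [DS_sum b S univ (fun i a _ => fi i a)]
      apply sum_eq_zero
      intro j _
      obtain ⟨l, hl, hlj⟩ := exists_mem_ne (show 1 < S.card by omega) j
      apply DS_zero_of_indep (l := l) _ hl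
      intro a y w
      simp [fi, hlj.symm]
  have hconst : ∀ (l : C) a w, (Gf (Function.update a l w) - Nm τ F (Function.update a l w)) =
      Gf a - Nm τ F a := by
    intro l a w
    have key := const_of_step b (fun z => Gf (Function.update a l z) - Nm τ F (Function.update a l z))
      (by
        intro z u
        have h0 := sub_Nm_vanish b 1 Gf F g hv' hg2 hFD {l} (by simp) (Function.update a l z)
          (fun _ => u)
        rw [← insert_empty, DS_insert _ (by simp), DS_empty, DS_empty, sub_eq_zero] at h0
        simpa using h0)
    have h1 := key w
    have h2 := key (a l)
    simp only [Function.update_eq_self] at h2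
    exact h1.trans h2.symm
  have hconst2 : ∀ a a' : C → P, Gf a - Nm τ F a = Gf a' - Nm τ F a' := by
    intro a a'
    have many : ∀ T : Finset C, 
        Gf (fun j => if j ∈ T then a j else a' j) - Nm τ F (fun j => if j ∈ T then a j else a' j) =
        Gf a' - Nm τ F a' := by
      intro T
      induction T using Finset.induction_on with
      | empty => simp
      | insert l T hl ih =>
        rw [← ih, ← hconst l (fun j => if j ∈ T then a j else a' j) (a l)]
        have : (fun j => if j ∈ insert l T then a j else a' j) =
            Function.update (fun j => if j ∈ T then a j else a' j) l (a l) := by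
          funext j
          by_cases hj : j = l
          · subst hj; simp
          · simp [hj]
        rw [this]
    simpa using many univ
  refine ⟨E, Gf 1 - Nm τ F 1, hE, fun x => ?_⟩
  have h1 := hconst2 (vact (inl x : P ⋊[τ] C) 1) 1
  rw [hGf, Nm_inl F E hFE] at h1
  rw [smul_sub]
  rw [← h1]
  abel
end Star
end FixInert

namespace FixInert
section Ext
open Finset SemidirectProduct
variable {P C Y k : Type*} [Group P] [CommGroup C] [AddCommGroup k]
variable {τ : C →* MulAut P}

variable (τ) in
/-- sections of the semidirect product -/
@[ext] structure Sec where
  t : C →* P ⋊[τ] C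
  ht : ∀ j, (t j).right = j

instance : MulAction (P ⋊[τ] C) (Sec τ) where
  smul γ ω := ⟨(MulAut.conj γ).toMonoidHom.comp ω.t, fun j => by simp [ω.ht]⟩
  one_smul ω := by
    apply Sec.ext
    ext1 j
    show (MulAut.conj 1) (ω.t j) = _
    simp
  mul_smul γ δ ω := by
    apply Sec.ext
    ext1 j
    show (MulAut.conj (γ * δ)) (ω.t j) = (MulAut.conj γ) (MulAut.conj δ (ω.t j))
    simp

theorem sec_smul (γ : P ⋊[τ] C) (ω : Sec τ) (j : C) : (γ • ω).t j = γ * ω.t j * γ⁻¹ := rfl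

variable (τ) in
def sec0 : Sec τ := ⟨inr, fun j => by simp⟩

theorem sec_self (ω : Sec τ) (j : C) : ω.t j • ω = ω := by
  apply Sec.ext
  ext1 i
  rw [sec_smul, ← map_mul, mul_comm, map_mul]; simp

theorem sec_free [Finite C] (hp : (Nat.card C).Prime) (htf : ∀ x : P, x ^ (Nat.card C) = 1 → x = 1)
    (ω ω' : Sec τ) (i : C) (hi : i ≠ 1) (h : ω.t i • ω' = ω') : ω' = ω := by
  haveI : Fact (Nat.card C).Prime := ⟨hp⟩
  have hc : Commute (ω.t i) (ω'.t i) := by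
    have := congrArg (fun s : Sec τ => s.t i) h
    simp only [sec_smul] at this
    rw [mul_inv_eq_iff_eq_mul] at this
    exact this
  have hone : ∀ w : Sec τ, (w.t i) ^ Nat.card C = 1 := by
    intro w
    rw [← map_pow, pow_card_eq_one', map_one]
  have hu : ω.t i * (ω'.t i)⁻¹ = 1 := by
    have hpow : (ω.t i * (ω'.t i)⁻¹) ^ Nat.card C = 1 := by
      rw [(hc.inv_right).mul_pow, inv_pow, hone, hone]; simp
    have hr : (ω.t i * (ω'.t i)⁻¹).right = 1 := by simp [ω.ht, ω'.ht]
    have he : ω.t i * (ω'.t i)⁻¹ = inl (ω.t i * (ω'.t i)⁻¹).left := by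
      ext
      · simp
      · rw [hr]; simp
    rw [he] at hpow ⊢
    rw [← map_pow] at hpow
    have := htf _ (inl_injective (hpow.trans (map_one _).symm))
    rw [this, map_one]
  have hu' : ω.t i = ω'.t i := mul_inv_eq_one.mp hu
  have := Subgroup.eq_bot_or_eq_top_of_prime_card (MonoidHom.eqLocus ω.t ω'.t)
  rcases this with hb | ht
  · exfalso
    have : i ∈ MonoidHom.eqLocus ω.t ω'.t := hu'
    rw [hb, Subgroup.mem_bot] at this
    exact hi this
  · apply Sec.ext
    ext1 j
    have : j ∈ MonoidHom.eqLocus ω.t ω'.t := by rw [ht]; trivial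
    exact this.symm

theorem sec_kappa [Finite C] (hp : (Nat.card C).Prime)
    (htf : ∀ x : P, x ^ (Nat.card C) = 1 → x = 1) (ω : Sec τ) :
    ∃ κ : Sec τ → C, ∀ i w, w ≠ ω → κ (ω.t i • w) = i * κ w := by
  classical
  letI : MulAction C (Sec τ) := MulAction.compHom _ ω.t
  have hsm : ∀ (i : C) (w : Sec τ), i • w = ω.t i • w := fun _ _ => rfl
  have hR : ∀ (γ : C) (w : Sec τ) (z : Option C), (w ≠ ω → ∃ c, z = some c) →
      (γ • w ≠ ω → ∃ c, γ • z = some c) := by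
    intro γ w z h1 h2
    have h3 : w ≠ ω := by
      rintro rfl
      exact h2 (sec_self w γ)
    obtain ⟨c, rfl⟩ := h1 h3
    exact ⟨γ * c, rfl⟩
  have hS : ∀ w : Sec τ, ∃ z : Option C, (w ≠ ω → ∃ c, z = some c) ∧
      ∀ γ : C, γ • w = w → γ • z = z := by
    intro w
    by_cases hw : w = ω
    · exact ⟨none, fun h => absurd hw h, fun γ _ => rfl⟩
    · refine ⟨some 1, fun _ => ⟨1, rfl⟩, fun γ hγ => ?_⟩
      by_cases hg : γ = 1
      · rw [hg, one_smul]
      · exact absurd (sec_free hp htf ω w γ hg hγ) hw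
  obtain ⟨f, hf1, hf2⟩ := equiv_ext (G := C) (X := Sec τ) (Z := Option C) _ hR hS
  refine ⟨fun w => (f w).getD 1, fun i w hw => ?_⟩
  obtain ⟨c, hc⟩ := hf1 w hw
  have h2 := hf2 i w
  rw [hsm, hc] at h2
  simp only [h2, hc]
  rfl

/-- functions vanishing at the base section -/
def Mod (τ : C →* MulAut P) (k : Type*) [AddCommGroup k] : AddSubgroup (Sec τ → k) where
  carrier := {f | f (sec0 τ) = 0}
  add_mem' := by
    intro a b ha hb
    simp only [Set.mem_setOf_eq, Pi.add_apply] at *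
    rw [ha, hb, add_zero]
  zero_mem' := rfl
  neg_mem' := by
    intro a ha
    simp only [Set.mem_setOf_eq, Pi.neg_apply] at *
    rw [ha, neg_zero]

/-- projection killing constants -/
def prM (f : Sec τ → k) : Mod τ k := ⟨fun ω => f ω - f (sec0 τ), sub_self _⟩

theorem prM_add (f g : Sec τ → k) : prM (f + g) = prM f + prM g := by
  apply Subtype.ext; funext ω
  show f ω + g ω - (f _ + g _) = (f ω - f _) + (g ω - g _)
  abel

theorem prM_sub (f g : Sec τ → k) : prM (f - g) = prM f - prM g := by
  apply Subtype.ext; funext ω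
  show f ω - g ω - (f _ - g _) = (f ω - f _) - (g ω - g _)
  abel

theorem prM_zero : prM (0 : Sec τ → k) = 0 := by
  apply Subtype.ext; funext ω
  show (0 : k) - 0 = 0
  simp

theorem prM_sum {ι : Type*} (T : Finset ι) (f : ι → Sec τ → k) :
    prM (∑ i ∈ T, f i) = ∑ i ∈ T, prM (f i) := by
  classical
  induction T using Finset.induction_on with
  | empty => simp [prM_zero]
  | insert i T hi ih => rw [sum_insert hi, sum_insert hi, prM_add, ih]

theorem prM_coe (m : Mod τ k) : prM m.1 = m := by
  apply Subtype.ext; funext ω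
  show m.1 ω - m.1 _ = m.1 ω
  rw [m.2, sub_zero]

theorem prM_eq (f g : Sec τ → k) (c : k) (h : ∀ ω, f ω = g ω + c) : prM f = prM g := by
  apply Subtype.ext; funext ω
  show f ω - f _ = g ω - g _
  rw [h, h]; abel

theorem prM_eq_zero (f : Sec τ → k) (h : prM f = 0) (ω : Sec τ) : f ω = f (sec0 τ) := by
  have := congrFun (congrArg Subtype.val h) ω
  exact sub_eq_zero.mp this

/-- translation -/
def trV (γ : P ⋊[τ] C) : (Sec τ → k) →+ (Sec τ → k) where
  toFun f := fun ω => f (γ⁻¹ • ω)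
  map_zero' := rfl
  map_add' _ _ := rfl

theorem trV_apply (γ : P ⋊[τ] C) (f : Sec τ → k) (ω) : trV γ f ω = f (γ⁻¹ • ω) := rfl

theorem trV_mul (γ δ : P ⋊[τ] C) (f : Sec τ → k) : trV (γ * δ) f = trV γ (trV δ f) := by
  funext ω
  simp [trV_apply, mul_smul]

theorem trV_one (f : Sec τ → k) : trV (1 : P ⋊[τ] C) f = f := by
  funext ω; simp [trV_apply]

theorem prM_tr (γ : P ⋊[τ] C) (f : Sec τ → k) : prM (trV γ (prM f).1) = prM (trV γ f) := by
  apply prM_eq _ _ (- f (sec0 τ))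
  intro ω
  show f _ - f _ = _
  rw [sub_eq_add_neg]; rfl

instance : DistribMulAction (P ⋊[τ] C) (Mod τ k) where
  smul γ m := prM (trV γ m.1)
  one_smul m := by
    show prM (trV 1 m.1) = m
    rw [trV_one, prM_coe]
  mul_smul γ δ m := by
    show prM (trV (γ * δ) m.1) = prM (trV γ (prM (trV δ m.1)).1)
    rw [prM_tr, trV_mul]
  smul_zero γ := by
    show prM (trV γ 0) = 0
    rw [map_zero, prM_zero]
  smul_add γ m m' := by
    show prM (trV γ (m.1 + m'.1)) = prM (trV γ m.1) + prM (trV γ m'.1)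
    rw [map_add, prM_add]

theorem smul_prM (γ : P ⋊[τ] C) (f : Sec τ → k) : γ • prM f = prM (trV γ f) := by
  show prM (trV γ (prM f).1) = _
  exact prM_tr γ f

theorem hyp1 [Fintype C] (hp : (Nat.card C).Prime)
    (htf : ∀ x : P, x ^ (Nat.card C) = 1 → x = 1) (ω : Sec τ) (m : Mod τ k)
    (hm : ∀ j, ω.t j • m = m) : ∃ m', m = ∑ j, ω.t j • m' := by
  classical
  obtain ⟨κ, hκ⟩ := sec_kappa hp htf ω
  let f : Sec τ → k := fun w => m.1 w - m.1 ω
  have hinv : ∀ j w, m.1 ((ω.t j)⁻¹ • w) = m.1 w := by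
    intro j w
    have h1 : ∀ w, m.1 ((ω.t j)⁻¹ • w) - m.1 ((ω.t j)⁻¹ • sec0 τ) = m.1 w := by
      intro w
      exact congrFun (congrArg Subtype.val (hm j)) w
    have h2 := h1 ω
    rw [inv_smul_eq_iff.mpr (sec_self ω j).symm] at h2
    have h3 : m.1 ((ω.t j)⁻¹ • sec0 τ) = 0 := by
      have := sub_eq_self.mp h2; exact this
    have := h1 w
    rwa [h3, sub_zero] at this
  refine ⟨prM (fun w => if κ w = 1 then f w else 0), ?_⟩
  simp only [smul_prM]
  rw [← prM_sum]
  conv_lhs => rw [← prM_coe m]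
  apply prM_eq _ _ (m.1 ω)
  intro w
  rw [Finset.sum_apply]
  simp only [trV_apply]
  have hf : ∀ j, f ((ω.t j)⁻¹ • w) = f w := by
    intro j; simp only [f, hinv]
  simp only [hf]
  by_cases hw : w = ω
  · subst hw; simp [f]
  · have hk : ∀ j, κ ((ω.t j)⁻¹ • w) = j⁻¹ * κ w := by
      intro j; rw [← map_inv, hκ _ _ hw]
    simp only [hk, inv_mul_eq_one]
    simp [f]

theorem hyp2 [Finite C] (hp : (Nat.card C).Prime)
    (htf : ∀ x : P, x ^ (Nat.card C) = 1 → x = 1) (D : P ⋊[τ] C → Sec τ → k)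
    (hD : ∀ γ δ, D (γ * δ) = D γ + trV γ (D δ)) (ω : Sec τ) :
    ∃ m, ∀ j, prM (D (ω.t j)) + ω.t j • m = m := by
  obtain ⟨κ, hκ⟩ := sec_kappa hp htf ω
  have hadd : ∀ i j w, D (ω.t (i * j)) w = D (ω.t i) w + D (ω.t j) ((ω.t i)⁻¹ • w) := by
    intro i j w
    rw [map_mul, hD]; rfl
  let D' : C → Sec τ → k := fun i w => D (ω.t i) w - D (ω.t i) ω
  have hD' : ∀ i j w, D' (i * j) w = D' i w + D' j ((ω.t i)⁻¹ • w) := by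
    intro i j w
    simp only [D', hadd, inv_smul_eq_iff.mpr (sec_self ω i).symm]
    abel
  let v : Sec τ → k := fun w => D' (κ w) w
  refine ⟨prM v, fun j => ?_⟩
  rw [smul_prM, ← prM_add]
  apply prM_eq _ _ (D (ω.t j) ω)
  intro w
  rw [Pi.add_apply, trV_apply]
  have key : D' j w + v ((ω.t j)⁻¹ • w) = v w := by
    by_cases hw : w = ω
    · subst hw
      rw [inv_smul_eq_iff.mpr (sec_self w j).symm]
      simp [D', v]
    · simp only [v]
      have : κ ((ω.t j)⁻¹ • w) = j⁻¹ * κ w := by rw [← map_inv, hκ _ _ hw]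
      rw [this, ← hD']; simp
  rw [← key]
  simp only [D']
  abel

theorem mem_stab (γ : P ⋊[τ] C) : γ • sec0 τ = sec0 τ ↔ ∀ j, τ j γ.left = γ.left := by
  constructor
  · intro h j
    have h1 := congrArg (fun s : Sec τ => s.t j) h
    simp only [sec_smul] at h1
    rw [mul_inv_eq_iff_eq_mul] at h1
    have h2 := congrArg SemidirectProduct.left h1
    simp [sec0] at h2
    exact h2.symm
  · intro h
    apply Sec.ext
    ext1 j
    rw [sec_smul, mul_inv_eq_iff_eq_mul]
    ext
    · simp [sec0, h]
    · simp [sec0, mul_comm]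

theorem smul_orb {G X : Type*} [Group G] [MulAction G X] (g : G) (x y : X) :
    g • x ∈ MulAction.orbit G y ↔ x ∈ MulAction.orbit G y := by
  constructor
  · rintro ⟨h, hh⟩
    exact ⟨g⁻¹ * h, by simpa [mul_smul, inv_smul_eq_iff] using hh⟩
  · rintro ⟨h, hh⟩
    exact ⟨g * h, by simp only [mul_smul] at hh ⊢; rw [← hh]⟩

theorem shapiro (χ : P → k) (hχ : ∀ h h', (∀ j, τ j h = h) → (∀ j, τ j h' = h') →
      χ (h * h') = χ h + χ h') :
    ∃ D : P ⋊[τ] C → Sec τ → k, (∀ γ δ, D (γ * δ) = D γ + trV γ (D δ)) ∧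
      ∀ h, (∀ j, τ j h = h) → D (inl h) (sec0 τ) = χ h := by
  classical
  have hr : ∀ w : Sec τ, ∃ r : P ⋊[τ] C, (w ∈ MulAction.orbit (P ⋊[τ] C) (sec0 τ) →
      r • sec0 τ = w) ∧ (w = sec0 τ → r = 1) := by
    intro w
    by_cases h : w = sec0 τ
    · exact ⟨1, fun _ => by rw [h, one_smul], fun _ => rfl⟩
    · by_cases h2 : w ∈ MulAction.orbit (P ⋊[τ] C) (sec0 τ)
      · obtain ⟨r, hr⟩ := h2
        exact ⟨r, fun _ => hr, fun h' => absurd h' h⟩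
      · exact ⟨1, fun h' => absurd h' h2, fun h' => absurd h' h⟩
  choose r hr1 hr2 using hr
  have hstab : ∀ γ : P ⋊[τ] C, ∀ w ∈ MulAction.orbit (P ⋊[τ] C) (sec0 τ),
      ((r w)⁻¹ * γ * r (γ⁻¹ • w)) • sec0 τ = sec0 τ := by
    intro γ w hw
    have hw' : γ⁻¹ • w ∈ MulAction.orbit (P ⋊[τ] C) (sec0 τ) := by
      rwa [smul_orb]
    rw [mul_smul, mul_smul, hr1 _ hw', smul_inv_smul, inv_smul_eq_iff, hr1 _ hw]
  refine ⟨fun γ w => if w ∈ MulAction.orbit (P ⋊[τ] C) (sec0 τ) then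
    χ ((r w)⁻¹ * γ * r (γ⁻¹ • w)).left else 0, fun γ δ => ?_, fun h hh => ?_⟩
  · funext w
    rw [Pi.add_apply, trV_apply]
    by_cases hw : w ∈ MulAction.orbit (P ⋊[τ] C) (sec0 τ)
    · have hw' : γ⁻¹ • w ∈ MulAction.orbit (P ⋊[τ] C) (sec0 τ) := by
        rwa [smul_orb]
      simp only [hw, hw', if_true]
      have e : (r w)⁻¹ * (γ * δ) * r ((γ * δ)⁻¹ • w) =
          ((r w)⁻¹ * γ * r (γ⁻¹ • w)) * ((r (γ⁻¹ • w))⁻¹ * δ * r (δ⁻¹ • γ⁻¹ • w)) := by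
        rw [mul_inv_rev, mul_smul]; group
      have s1 := (mem_stab _).mp (hstab γ w hw)
      have s2 := (mem_stab _).mp (hstab δ _ hw')
      rw [e, mul_left, s2, hχ _ _ s1 s2]
    · have hw' : γ⁻¹ • w ∉ MulAction.orbit (P ⋊[τ] C) (sec0 τ) := by
        rwa [smul_orb]
      simp only [hw, hw', if_false, add_zero]
  · have h0 : sec0 τ ∈ MulAction.orbit (P ⋊[τ] C) (sec0 τ) := MulAction.mem_orbit_self _
    have h1 : (inl h : P ⋊[τ] C)⁻¹ • sec0 τ = sec0 τ := by
      rw [inv_smul_eq_iff, eq_comm, mem_stab]; simpa using hh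
    simp only [h0, if_true, h1, hr2 _ rfl]
    simp

/-- Extension of characters from the fixed subgroup of an automorphism of prime order. -/
theorem extend_char [Fintype C] (hp : (Nat.card C).Prime) (b : FreeGroupBasis Y P)
    (htf : ∀ x : P, x ^ (Nat.card C) = 1 → x = 1)
    (hk : ∀ z : k, Fintype.card C • z = 0)
    (χ : P → k) (hχ : ∀ h h', (∀ j, τ j h = h) → (∀ j, τ j h' = h') →
      χ (h * h') = χ h + χ h') :
    ∃ u : P → k, (∀ x x', u (x * x') = u x + u x') ∧ ∀ h, (∀ j, τ j h = h) → u h = χ h := by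
  classical
  by_cases hY : Nonempty Y
  swap
  · have hone : ∀ x : P, x = 1 := by
      intro x
      exact const_of_step b (fun x => x) (fun z y => absurd ⟨y⟩ hY) x
    refine ⟨fun _ => 0, by simp, fun h _ => ?_⟩
    have := hχ 1 1 (by simp) (by simp)
    rw [hone h]
    have h2 : χ 1 = 0 := by simpa using this
    exact h2.symm
  obtain ⟨y0⟩ := hY
  obtain ⟨D, hD, hDχ⟩ := shapiro χ hχ
  obtain ⟨E, m, hE, hs⟩ := star (M := Mod τ k) hp b y0 (fun γ => prM (D γ))
    (fun γ δ => by rw [hD, prM_add, smul_prM])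
    (fun t ht m hm => hyp1 hp htf ⟨t, ht⟩ m hm)
    (fun t ht => hyp2 hp htf D hD ⟨t, ht⟩)
  let g : P → Y → (Sec τ → k) := fun z y => trV (inl z : P ⋊[τ] C) (E (b y)).1
  let Eh : P → Sec τ → k := Int' b g
  have hEh : ∀ x x', Eh (x * x') = Eh x + trV (inl x : P ⋊[τ] C) (Eh x') := by
    intro x x'
    apply Int_trans b g g (trV (inl x : P ⋊[τ] C)) x
    intro z y
    simp only [g, map_mul, trV_mul]
  have hE1 : E 1 = 0 := by
    have := hE 1 1
    simp at this
    exact this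
  have hprE : ∀ x, prM (Eh x) = E x := by
    intro x
    have := const_of_step b (fun x => prM (Eh x) - E x) (by
      intro z y
      show prM (Int' b g (z * b y)) - _ = prM (Int' b g z) - _
      rw [Int_step, prM_add, hE]
      have : prM (g z y) = (inl z : P ⋊[τ] C) • E (b y) := rfl
      rw [this]; abel) x
    have h1 : Eh 1 = 0 := Int_one b g
    rw [h1, hE1, prM_zero, sub_zero, sub_eq_zero] at this
    exact this
  let u : P → Sec τ → k := fun x => D (inl x) - (m.1 - trV (inl x : P ⋊[τ] C) m.1) -
    ∑ j, trV (inr j : P ⋊[τ] C) (Eh (τ j⁻¹ x))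
  have hu : ∀ x w, u x w = u x (sec0 τ) := by
    intro x
    apply prM_eq_zero
    simp only [u, prM_sub, prM_sum, ← smul_prM, prM_coe, hprE]
    rw [hs x]; abel
  have hmul : ∀ x x', u (x * x') = u x + trV (inl x : P ⋊[τ] C) (u x') := by
    intro x x'
    have h3 : ∑ j, trV (inr j : P ⋊[τ] C) (Eh (τ j⁻¹ (x * x'))) =
        ∑ j, trV (inr j : P ⋊[τ] C) (Eh (τ j⁻¹ x)) +
          trV (inl x : P ⋊[τ] C) (∑ j, trV (inr j : P ⋊[τ] C) (Eh (τ j⁻¹ x'))) := by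
      rw [map_sum, ← sum_add_distrib]
      refine sum_congr rfl fun j _ => ?_
      rw [map_mul, hEh, map_add, ← trV_mul, ← trV_mul, comm_inr_inl2]
    simp only [u]
    rw [h3, map_mul, hD, trV_mul]
    simp only [map_sub]
    abel
  refine ⟨fun x => u x (sec0 τ), fun x x' => ?_, fun h hh => ?_⟩
  · show u (x * x') _ = _
    rw [hmul, Pi.add_apply, trV_apply, hu x']
  · have h1 : (inl h : P ⋊[τ] C)⁻¹ • sec0 τ = sec0 τ := by
      rw [inv_smul_eq_iff, eq_comm, mem_stab]; simpa using hh
    have h2 : ∀ j, (inr j : P ⋊[τ] C)⁻¹ • sec0 τ = sec0 τ := by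
      intro j
      rw [inv_smul_eq_iff, eq_comm, mem_stab]; simp
    simp only [u, Pi.sub_apply, Finset.sum_apply, trV_apply, h1, h2, sub_self, sub_zero, hh]
    simp [hDχ h hh, hk]
end Ext
end FixInert

namespace FixInert
open Module

theorem dim_bound {ι : Type*} [Fintype ι] [DecidableEq ι] (M : Matrix ι ι ℝ) (hM : M.transpose = M)
    (I : Finset ι) (V : Submodule ℝ (ι → ℝ))
    (hV : ∀ v ∈ V, (∀ x, x ∉ I → v x = 0) ∧ ∀ x, ∑ y, v y * M y x = v x) :
    (finrank ℝ V : ℝ) ≤ ∑ x ∈ I, (M * M) x x := by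
  let e := WithLp.linearEquiv 2 ℝ (ι → ℝ)
  let W : Submodule ℝ (EuclideanSpace ℝ ι) := V.map e.symm.toLinearMap
  have hW : finrank ℝ W = finrank ℝ V := LinearEquiv.finrank_map_eq e.symm V
  have hW2 : ∀ v ∈ W, (∀ x, x ∉ I → v x = 0) ∧ ∀ x, ∑ y, v y * M y x = v x := by
    rintro v ⟨w, hw, rfl⟩
    exact hV w hw
  let u := stdOrthonormalBasis ℝ W
  have hon : Orthonormal ℝ (fun k => (u k : EuclideanSpace ℝ ι)) := by
    have := u.orthonormal
    exact this.comp_linearIsometry W.subtypeₗᵢ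
  have hnorm : ∀ k, ∑ x ∈ I, (u k : EuclideanSpace ℝ ι) x ^ 2 = 1 := by
    intro k
    have h1 := hon.1 k
    have h2 := EuclideanSpace.norm_sq_eq (u k : EuclideanSpace ℝ ι)
    rw [h1] at h2
    have h3 : ∑ x, (u k : EuclideanSpace ℝ ι) x ^ 2 = 1 := by
      simpa using h2.symm
    rw [← h3]
    apply Finset.sum_subset (Finset.subset_univ I)
    intro x _ hx
    rw [(hW2 _ (u k).2).1 x hx]; simp
  have hb : ∀ x, ∑ k, (u k : EuclideanSpace ℝ ι) x ^ 2 ≤ (M * M) x x := by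
    intro x
    have hB := hon.sum_inner_products_le (WithLp.toLp 2 (fun y => M y x)) (s := Finset.univ)
    have h1 : ‖(WithLp.toLp 2 (fun y => M y x) : EuclideanSpace ℝ ι)‖ ^ 2 = (M * M) x x := by
      rw [EuclideanSpace.norm_sq_eq, Matrix.mul_apply]
      apply Finset.sum_congr rfl
      intro y _
      have : M x y = M y x := congrFun (congrFun hM y) x
      simp [this, sq]
    rw [h1] at hB
    refine le_trans (le_of_eq ?_) hB
    apply Finset.sum_congr rfl
    intro k _
    have h2 := (hW2 _ (u k).2).2 x
    rw [Real.norm_eq_abs, sq_abs]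
    congr 1
    rw [← h2, PiLp.inner_apply]
    apply Finset.sum_congr rfl
    intro y _
    simp [mul_comm]
  rw [← hW]
  calc (finrank ℝ W : ℝ) = ∑ k : Fin (finrank ℝ W), (1:ℝ) := by simp
    _ = ∑ k, ∑ x ∈ I, (u k : EuclideanSpace ℝ ι) x ^ 2 := by
        apply Finset.sum_congr rfl; intro k _; rw [hnorm]
    _ = ∑ x ∈ I, ∑ k, (u k : EuclideanSpace ℝ ι) x ^ 2 := Finset.sum_comm
    _ ≤ _ := Finset.sum_le_sum (fun x _ => hb x)

section Rho
variable {F Q : Type*} [Group F] [MulAction F Q] [Fintype Q] [DecidableEq Q]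

variable (F Q) in
def rhoHom : F →* Matrix Q Q ℝ where
  toFun f := Matrix.of fun g h => if h = f⁻¹ • g then 1 else 0
  map_one' := by
    ext g h; simp [Matrix.one_apply, eq_comm]
  map_mul' f f' := by
    ext g h
    simp only [Matrix.mul_apply, mul_smul, Matrix.of_apply, mul_inv_rev]
    rw [Finset.sum_eq_single (f⁻¹ • g)] <;> simp +contextual

variable (F Q) in
noncomputable def rho : MonoidAlgebra ℝ F →ₐ[ℝ] Matrix Q Q ℝ :=
  MonoidAlgebra.lift ℝ (Matrix Q Q ℝ) F (rhoHom F Q)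

theorem rho_apply (a : MonoidAlgebra ℝ F) (g h : Q) :
    rho F Q a g h = a.coeff.sum fun f c => if h = f⁻¹ • g then c else 0 := by
  unfold rho
  rw [MonoidAlgebra.lift_apply, Finsupp.sum, Matrix.sum_apply, Finsupp.sum]
  apply Finset.sum_congr rfl
  intro f _
  simp [rhoHom]

theorem rho_single (f : F) (c : ℝ) (g h : Q) :
    rho F Q (MonoidAlgebra.single f c) g h = if h = f⁻¹ • g then c else 0 := by
  rw [rho_apply, MonoidAlgebra.coeff_single, Finsupp.sum_single_index]; simp

noncomputable def st (a : MonoidAlgebra ℝ F) : MonoidAlgebra ℝ F :=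
  a.coeff.sum fun f c => MonoidAlgebra.single f⁻¹ c

theorem rho_st (a : MonoidAlgebra ℝ F) : rho F Q (st a) = (rho F Q a).transpose := by
  ext g h
  rw [Matrix.transpose_apply, rho_apply a, st, Finsupp.sum, map_sum, Matrix.sum_apply, Finsupp.sum]
  apply Finset.sum_congr rfl
  intro f _
  rw [rho_single]
  congr 1
  rw [inv_inv, eq_iff_iff, eq_inv_smul_iff, eq_comm]

theorem rho_diag (a : MonoidAlgebra ℝ F) (q : Q)
    (h : ∀ f ∈ a.coeff.support, f ≠ 1 → f • q ≠ q) : rho F Q a q q = a.coeff 1 := by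
  rw [rho_apply, Finsupp.sum]
  rw [Finset.sum_eq_single 1]
  · simp
  · intro f hf hf1
    rw [if_neg]
    intro hh
    apply h f hf hf1
    rw [eq_inv_smul_iff] at hh
    exact hh
  · intro h1; simp; simpa using h1

variable {s t w : Type*} [Fintype s] [Fintype t] [Fintype w] [DecidableEq s] [DecidableEq t]

variable (Q) in
noncomputable def rhoM (A : Matrix s t (MonoidAlgebra ℝ F)) : Matrix (s × Q) (t × Q) ℝ :=
  Matrix.of fun x y => rho F Q (A x.1 y.1) x.2 y.2

theorem rhoM_mul (A : Matrix s t (MonoidAlgebra ℝ F)) (B : Matrix t w (MonoidAlgebra ℝ F)) :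
    rhoM Q (A * B) = rhoM Q A * rhoM Q B := by
  ext x y
  simp only [rhoM, Matrix.mul_apply, map_sum, map_mul, Matrix.sum_apply, Fintype.sum_prod_type, Matrix.of_apply]

theorem rhoM_one : rhoM Q (1 : Matrix s s (MonoidAlgebra ℝ F)) = 1 := by
  ext ⟨i, q⟩ ⟨j, q'⟩
  simp only [rhoM, Matrix.one_apply, Prod.mk.injEq]
  by_cases h : i = j
  · simp [h, Matrix.one_apply]
  · simp [h]

theorem rhoM_sub (A B : Matrix s t (MonoidAlgebra ℝ F)) :
    rhoM Q (A - B) = rhoM Q A - rhoM Q B := by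
  ext x y; simp [rhoM]

theorem rhoM_smul (c : ℝ) (A : Matrix s t (MonoidAlgebra ℝ F)) :
    rhoM Q (c • A) = c • rhoM Q A := by
  ext x y; simp [rhoM]

theorem rhoM_pow (A : Matrix s s (MonoidAlgebra ℝ F)) (r : ℕ) :
    rhoM Q (A ^ r) = rhoM Q A ^ r := by
  induction r with
  | zero => simp [rhoM_one]
  | succ r ih => rw [pow_succ, rhoM_mul, ih, pow_succ]

noncomputable def stM (A : Matrix s t (MonoidAlgebra ℝ F)) : Matrix t s (MonoidAlgebra ℝ F) :=
  Matrix.of fun j i => st (A i j)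

theorem rhoM_st (A : Matrix s t (MonoidAlgebra ℝ F)) :
    rhoM Q (stM A) = (rhoM Q A).transpose := by
  ext x y
  simp [rhoM, stM, rho_st]

noncomputable def XX (A : Matrix s t (MonoidAlgebra ℝ F)) (B : ℝ) : Matrix s s (MonoidAlgebra ℝ F) :=
  1 - B⁻¹ • (A * stM A)

theorem rhoM_XX (A : Matrix s t (MonoidAlgebra ℝ F)) (B : ℝ) :
    rhoM Q (XX A B) = 1 - B⁻¹ • (rhoM Q A * (rhoM Q A).transpose) := by
  rw [XX, rhoM_sub, rhoM_one, rhoM_smul, rhoM_mul, rhoM_st]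

noncomputable def theta (A : Matrix s t (MonoidAlgebra ℝ F)) (B : ℝ) (r : ℕ) : ℝ :=
  ∑ i, (((XX A B) ^ (2 * r)) i i).coeff 1

/-- every nontrivial element of the supports of the diagonal of `X^(2r)` acts freely -/
def FreeFor (Q : Type*) [MulAction F Q] (S : Finset F) : Prop := ∀ f ∈ S, f ≠ 1 → ∀ q : Q, f • q ≠ q

open Classical in
noncomputable def suppX (A : Matrix s t (MonoidAlgebra ℝ F)) (B : ℝ) (r : ℕ) : Finset F :=
  Finset.univ.biUnion fun i => (((XX A B) ^ (2 * r)) i i).coeff.support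

theorem lemmaK (A : Matrix s t (MonoidAlgebra ℝ F)) (B : ℝ) (r : ℕ)
    (hS : FreeFor Q (suppX A B r)) (A' : Finset Q) (V : Submodule ℝ (s × Q → ℝ))
    (hV : ∀ v ∈ V, (∀ i q, q ∉ A' → v (i, q) = 0) ∧ Matrix.vecMul v (rhoM Q A) = 0) :
    (finrank ℝ V : ℝ) ≤ theta A B r * A'.card := by
  have hsym : (rhoM Q (XX A B)).transpose = rhoM Q (XX A B) := by
    rw [rhoM_XX]; simp
  have key := dim_bound (rhoM Q (XX A B) ^ r) (by rw [Matrix.transpose_pow, hsym])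
    (Finset.univ ×ˢ A') V (by
      intro v hv
      refine ⟨?_, ?_⟩
      · rintro ⟨i, q⟩ hx
        exact (hV v hv).1 i q (by simpa using hx)
      · have h1 : Matrix.vecMul v (rhoM Q (XX A B)) = v := by
          rw [rhoM_XX, Matrix.vecMul_sub, Matrix.vecMul_one, Matrix.vecMul_smul,
            ← Matrix.vecMul_vecMul, (hV v hv).2]
          simp
        have h2 : ∀ r : ℕ, Matrix.vecMul v (rhoM Q (XX A B) ^ r) = v := by
          intro r
          induction r with
          | zero => simp
          | succ r ih => rw [pow_succ, ← Matrix.vecMul_vecMul, ih, h1]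
        intro x
        exact congrFun (h2 r) x)
  refine key.trans (le_of_eq ?_)
  rw [← pow_add, ← two_mul, ← rhoM_pow, Finset.sum_product, theta, Finset.sum_mul]
  apply Finset.sum_congr rfl
  intro i _
  rw [Finset.sum_congr rfl (g := fun _ => (((XX A B) ^ (2 * r)) i i).coeff 1)]
  · simp [mul_comm]
  · intro q _
    apply rho_diag
    intro f hf hf1
    exact hS f (by simp only [suppX, Finset.mem_biUnion]; exact ⟨i, Finset.mem_univ _, hf⟩) hf1 q

end Rho
end FixInert

namespace FixInert

theorem red_sub {α : Type*} {L L' : List (α × Bool)} (h : FreeGroup.IsReduced L) (A B : List (α × Bool))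
    (e : A ++ L' ++ B = L) : FreeGroup.IsReduced L' := by
  subst e
  exact List.IsChain.right_of_append (List.IsChain.left_of_append h)


section PQuot
open RegularWreathProduct

variable {X : Type} [DecidableEq X] {Q : Type} [Group Q] [DecidableEq Q]

/-- next stage of the tower of `p`-quotients -/
def nextHom (p : ℕ) (π : FreeGroup X →* Q) :
    FreeGroup X →* RegularWreathProduct (X → Multiplicative (ZMod p)) Q :=
  FreeGroup.lift fun x => ⟨fun q y => if q = 1 ∧ y = x then Multiplicative.ofAdd 1 else 1,
    π (FreeGroup.of x)⟩

theorem nextHom_right (p : ℕ) (π : FreeGroup X →* Q) (w : FreeGroup X) :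
    (nextHom p π w).right = π w := by
  have : (rightHom.comp (nextHom p π)) = π := by
    ext x; simp [nextHom]
  exact DFunLike.congr_fun this w

def DD (p : ℕ) (π : FreeGroup X →* Q) (w : FreeGroup X) (q : Q) (x : X) : ZMod p :=
  Multiplicative.toAdd ((nextHom p π w).left q x)

theorem DD_mul (p : ℕ) (π : FreeGroup X →* Q) (v w : FreeGroup X) (q : Q) (x : X) :
    DD p π (v * w) q x = DD p π v q x + DD p π w ((π v)⁻¹ * q) x := by
  simp [DD, nextHom_right]

theorem DD_of (p : ℕ) (π : FreeGroup X →* Q) (y : X) (q : Q) (x : X) :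
    DD p π (FreeGroup.of y) q x = if q = 1 ∧ x = y then 1 else 0 := by
  simp only [DD, nextHom, FreeGroup.lift_apply_of]
  split_ifs <;> rfl

theorem DD_one (p : ℕ) (π : FreeGroup X →* Q) (q : Q) (x : X) : DD p π 1 q x = 0 := by
  have := DD_mul p π 1 1 q x
  simpa using this

theorem DD_inv_of (p : ℕ) (π : FreeGroup X →* Q) (y : X) (q : Q) (x : X) :
    DD p π (FreeGroup.of y)⁻¹ q x = if q = (π (FreeGroup.of y))⁻¹ ∧ x = y then -1 else 0 := by
  have := DD_mul p π (FreeGroup.of y)⁻¹ (FreeGroup.of y) q x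
  rw [inv_mul_cancel, DD_one, DD_of] at this
  have h2 := eq_neg_of_add_eq_zero_left this.symm
  rw [h2]
  simp only [map_inv, inv_inv]
  have e : π (FreeGroup.of y) * q = 1 ↔ q = (π (FreeGroup.of y))⁻¹ := by
    rw [mul_eq_one_iff_inv_eq, eq_comm]
  simp only [e]
  split_ifs <;> simp

/-- the vertex labelling the edge crossed by letter `a` after the initial segment `v` -/
def cr (π : FreeGroup X →* Q) (v : FreeGroup X) (a : X × Bool) : Q :=
  if a.2 then π v else π v * (π (FreeGroup.of a.1))⁻¹

theorem mk_single (a : X × Bool) : FreeGroup.mk [a] =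
    if a.2 then FreeGroup.of a.1 else (FreeGroup.of a.1)⁻¹ := by
  rcases a with ⟨x, b⟩
  cases b
  · simp [FreeGroup.of, FreeGroup.inv_mk, FreeGroup.invRev]
  · simp [FreeGroup.of]

theorem DD_letter (p : ℕ) (π : FreeGroup X →* Q) (v : FreeGroup X) (a : X × Bool) (q : Q) (x : X)
    (h : ¬ (cr π v a = q ∧ a.1 = x)) : DD p π (FreeGroup.mk [a]) ((π v)⁻¹ * q) x = 0 := by
  rw [mk_single]
  unfold cr at h
  split_ifs at h ⊢ with h1
  · rw [DD_of, if_neg]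
    rintro ⟨h2, h3⟩
    apply h
    exact ⟨(inv_mul_eq_one.mp h2), h3.symm⟩
  · rw [DD_inv_of, if_neg]
    rintro ⟨h2, h3⟩
    apply h
    exact ⟨by rw [← h2]; simp, h3.symm⟩

theorem DD_nocross (p : ℕ) (π : FreeGroup X →* Q) (a0 : X × Bool) (q : Q) (x : X)
    (L : List (X × Bool))
    (h : ∀ L1 a L2, L = L1 ++ a :: L2 →
      ¬ (cr π (FreeGroup.mk (a0 :: L1)) a = q ∧ a.1 = x)) :
    DD p π (FreeGroup.mk (a0 :: L)) q x = DD p π (FreeGroup.mk [a0]) q x := by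
  induction L using List.reverseRecOn with
  | nil => rfl
  | append_singleton L a ih =>
    have e : FreeGroup.mk (a0 :: (L ++ [a])) = FreeGroup.mk (a0 :: L) * FreeGroup.mk [a] := by
      rw [FreeGroup.mul_mk]; rfl
    rw [e, DD_mul, DD_letter p π _ a q x (h L a [] rfl), add_zero]
    apply ih
    intro L1 b L2 hL
    exact h L1 b (L2 ++ [a]) (by rw [hL]; simp)

theorem next_step (p : ℕ) [Fact p.Prime] (π : FreeGroup X →* Q) (k : ℕ)
    (hk : ∀ L : List (X × Bool), FreeGroup.IsReduced L → L.length ≤ k →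
      π (FreeGroup.mk L) = 1 → L = [])
    (L : List (X × Bool)) (hL : FreeGroup.IsReduced L) (hlen : L.length ≤ k + 1)
    (h1 : nextHom p π (FreeGroup.mk L) = 1) : L = [] := by
  have hπ : π (FreeGroup.mk L) = 1 := by
    rw [← nextHom_right p π, h1]; rfl
  rcases L with _ | ⟨a0, L⟩
  · rfl
  exfalso
  have hlen' : L.length ≤ k := by simpa using hlen
  have mk_cons : ∀ M : List (X × Bool), FreeGroup.mk (a0 :: M) =
      FreeGroup.mk [a0] * FreeGroup.mk M := by
    intro M; rw [FreeGroup.mul_mk]; rfl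
  have mk_app : ∀ (M : List (X × Bool)) a, FreeGroup.mk (M ++ [a]) =
      FreeGroup.mk M * FreeGroup.mk [a] := by
    intro M; simp [FreeGroup.mul_mk]
  have hzero : DD p π (FreeGroup.mk (a0 :: L)) (cr π 1 a0) a0.1 = 0 := by
    unfold DD; rw [h1]; rfl
  rw [DD_nocross] at hzero
  · rw [mk_single] at hzero
    unfold cr at hzero
    split_ifs at hzero
    · rw [DD_of] at hzero; simp at hzero
    · rw [DD_inv_of] at hzero; simp at hzero
  · rintro L1 a L2 rfl ⟨hq, hx⟩
    have hl1 : L1.length + 1 ≤ k := by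
      simp at hlen'; omega
    have red1 : FreeGroup.IsReduced L1 := red_sub hL ([a0]) (a :: L2) (by simp)
    have red2 : FreeGroup.IsReduced (L1 ++ [a]) := red_sub hL ([a0]) (L2) (by simp)
    have red3 : FreeGroup.IsReduced (a0 :: L1) := red_sub hL ([]) (a :: L2) (by simp)
    have contra : π (FreeGroup.mk L1) = 1 → a0.2 ≠ a.2 → False := by
      intro h hne
      have := hk L1 red1 (by omega) h
      subst this
      have := red_sub (L' := [a0, a]) hL [] L2 (by simp)
      rw [FreeGroup.isReduced_cons_cons] at this
      exact hne (this.1 hx.symm)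
    unfold cr at hq
    rcases a0 with ⟨x0, b0⟩
    rcases a with ⟨x, b⟩
    simp only at hx hq
    subst hx
    cases b0 <;> cases b <;> simp only [if_true, if_false, map_one, one_mul, Bool.false_eq_true] at hq
    · -- both inverse
      have h2 : π (FreeGroup.mk (L1 ++ [(x, false)])) = 1 := by
        rw [mk_app, map_mul]
        rw [mk_cons, map_mul] at hq
        simp only [mk_single, if_false, map_inv, Bool.false_eq_true] at hq ⊢
        rw [mul_assoc] at hq
        simpa using hq
      have := hk _ red2 (by simp; omega) h2
      simp at this
    · apply contra _ (by simp)
      rw [mk_cons, map_mul] at hq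
      simpa only [mk_single, if_false, map_inv, Bool.false_eq_true, mul_eq_left] using hq
    · apply contra _ (by simp)
      rw [mk_cons, map_mul] at hq
      simp only [mk_single, if_true] at hq
      rw [mul_assoc] at hq
      have h3 := eq_inv_of_mul_eq_one_right hq
      have h4 : π (FreeGroup.mk L1) * (π (FreeGroup.of x))⁻¹ = 1 * (π (FreeGroup.of x))⁻¹ := by
        rw [h3, one_mul]
      exact mul_right_cancel h4
    · have := hk _ red3 (by simp; omega) hq
      simp at this

theorem pquot_aux (p : ℕ) [Fact p.Prime] [Finite X] (k : ℕ) :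
    ∃ (Q : Type) (_ : Group Q) (_ : Finite Q) (_ : IsPGroup p Q) (π : FreeGroup X →* Q),
      ∀ L : List (X × Bool), FreeGroup.IsReduced L → L.length ≤ k →
      π (FreeGroup.mk L) = 1 → L = [] := by
  induction k with
  | zero =>
    exact ⟨Unit, inferInstance, inferInstance, IsPGroup.of_card (n := 0) (by simp), 1,
      fun L _ h _ => by simpa using h⟩
  | succ k ih =>
    obtain ⟨Q, hg, hf, hp, π, h⟩ := ih
    classical
    have := Fact.out (p := p.Prime)
    obtain ⟨n, hn⟩ := IsPGroup.iff_card.mp hp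
    haveI : Finite (Multiplicative (ZMod p)) := inferInstanceAs (Finite (ZMod p))
    refine ⟨RegularWreathProduct (X → Multiplicative (ZMod p)) Q, inferInstance, inferInstance,
      ?_, nextHom p π, next_step p π k h⟩
    apply IsPGroup.of_card (n := (Nat.card X) * (Nat.card Q) + n)
    rw [RegularWreathProduct.card, hn, Nat.card_fun]
    have : Nat.card (Multiplicative (ZMod p)) = p := by
      rw [Nat.card_congr Multiplicative.toAdd]; exact Nat.card_zmod p
    rw [this, pow_add, pow_mul]

theorem pquot (p : ℕ) [Fact p.Prime] [Finite X] (S : Finset (FreeGroup X)) :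
    ∃ (Q : Type) (_ : Group Q) (_ : Finite Q) (_ : IsPGroup p Q) (π : FreeGroup X →* Q),
      ∀ f ∈ S, f ≠ 1 → π f ≠ 1 := by
  obtain ⟨Q, hg, hf, hp, π, h⟩ := pquot_aux (X := X) p (S.sup FreeGroup.norm)
  refine ⟨Q, hg, hf, hp, π, fun f hfS hf1 hπ => hf1 ?_⟩
  have := h f.toWord FreeGroup.isReduced_toWord
    (Finset.le_sup (f := FreeGroup.norm) hfS) (by rw [FreeGroup.mk_toWord]; exact hπ)
  rwa [FreeGroup.toWord_eq_nil_iff] at this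

end PQuot
end FixInert

namespace FixInert
open Module

section Spectral
variable {ι : Type*} [Fintype ι] [DecidableEq ι]

theorem trace_pow_eigen (T : Matrix ι ι ℝ) (hT : T.IsHermitian) (c : ℝ) (n : ℕ) :
    Matrix.trace ((1 - c • T) ^ n) = ∑ k, (1 - c * hT.eigenvalues k) ^ n := by
  let U : Matrix ι ι ℝ := hT.eigenvectorUnitary
  have hU : U * Star.star U = 1 := Matrix.mem_unitaryGroup_iff.mp hT.eigenvectorUnitary.2
  have hU' : Star.star U * U = 1 := Matrix.mem_unitaryGroup_iff'.mp hT.eigenvectorUnitary.2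
  have hs : T = U * Matrix.diagonal hT.eigenvalues * Star.star U := by
    have := hT.spectral_theorem
    rw [Unitary.conjStarAlgAut_apply] at this
    exact this
  have h1 : 1 - c • T = U * Matrix.diagonal (fun k => 1 - c * hT.eigenvalues k) * Star.star U := by
    have e : Matrix.diagonal (fun k => 1 - c * hT.eigenvalues k) =
        1 - c • Matrix.diagonal hT.eigenvalues := by
      ext i j
      by_cases h : i = j
      · subst h; simp
      · simp [Matrix.diagonal_apply_ne, h]
    rw [e, Matrix.mul_sub, Matrix.sub_mul, Matrix.mul_one, hU, Matrix.mul_smul, Matrix.smul_mul, ← hs]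
  have h2 : ∀ n : ℕ, (1 - c • T) ^ n =
      U * Matrix.diagonal (fun k => (1 - c * hT.eigenvalues k) ^ n) * Star.star U := by
    intro n
    induction n with
    | zero => simp [hU]
    | succ n ih =>
      rw [pow_succ, ih, h1]
      calc U * Matrix.diagonal (fun k => (1 - c * hT.eigenvalues k) ^ n) * Star.star U *
            (U * Matrix.diagonal (fun k => 1 - c * hT.eigenvalues k) * Star.star U)
          = U * Matrix.diagonal (fun k => (1 - c * hT.eigenvalues k) ^ n) * (Star.star U *
            U) * Matrix.diagonal (fun k => 1 - c * hT.eigenvalues k) * Star.star U := by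
            simp only [Matrix.mul_assoc]
        _ = _ := by
            rw [hU', Matrix.mul_one, Matrix.mul_assoc U, Matrix.diagonal_mul_diagonal]
            simp only [pow_succ]
  rw [h2, Matrix.trace_mul_comm, ← Matrix.mul_assoc, hU', Matrix.one_mul, Matrix.trace_diagonal]

theorem num_bound (x δ : ℝ) (hx0 : 0 < x) (hx1 : x ≤ 1) (hd0 : 0 < δ) (hd1 : δ < 1) (r : ℕ) :
    (1 - x) ^ (2 * r) ≤ (1 - δ) ^ (2 * r) + (-Real.log x) / (-Real.log δ) := by
  have hld : 0 < -Real.log δ := by have := Real.log_neg hd0 hd1; linarith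
  have hlx : 0 ≤ -Real.log x := by have := Real.log_nonpos hx0.le hx1; linarith
  by_cases h : δ ≤ x
  · have h1 : (1 - x) ^ (2 * r) ≤ (1 - δ) ^ (2 * r) :=
      pow_le_pow_left₀ (by linarith) (by linarith) _
    have h2 : 0 ≤ (-Real.log x) / (-Real.log δ) := div_nonneg hlx hld.le
    linarith
  · push Not at h
    have h1 : (1 - x) ^ (2 * r) ≤ 1 := pow_le_one₀ (by linarith) (by linarith)
    have h2 : 1 ≤ (-Real.log x) / (-Real.log δ) := by
      rw [le_div_iff₀ hld]
      have := Real.log_le_log hx0 h.le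
      linarith
    have h3 : 0 ≤ (1 - δ) ^ (2 * r) := pow_nonneg (by linarith) _
    linarith

theorem spectral_bound (T : Matrix ι ι ℝ) (hT : T.PosSemidef) (B δ : ℝ) (r : ℕ) (hB : 1 ≤ B)
    (hrow : ∀ i, ∑ j, |T i j| ≤ B) (hdet : 1 ≤ T.det) (hd0 : 0 < δ) (hd1 : δ < 1) :
    Matrix.trace ((1 - B⁻¹ • T) ^ (2 * r)) ≤
      Fintype.card ι * ((1 - δ) ^ (2 * r) + Real.log B / (-Real.log δ)) := by
  have hH := hT.1
  have hB0 : 0 < B := by linarith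
  rw [trace_pow_eigen T hH]
  have hnn : ∀ k, 0 ≤ hH.eigenvalues k := fun k => hT.eigenvalues_nonneg k
  have hprod : 1 ≤ ∏ k, hH.eigenvalues k := by
    have := hH.det_eq_prod_eigenvalues
    rw [this] at hdet
    simpa using hdet
  have hpos : ∀ k, 0 < hH.eigenvalues k := by
    intro k
    refine lt_of_le_of_ne (hnn k) fun h => ?_
    rw [Finset.prod_eq_zero (Finset.mem_univ k) h.symm] at hprod
    linarith
  have hle : ∀ k, hH.eigenvalues k ≤ B := by
    intro k
    have hev : Module.End.HasEigenvalue (Matrix.toLin' T) (hH.eigenvalues k) := by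
      refine Module.End.hasEigenvalue_of_hasEigenvector
        (x := (hH.eigenvectorBasis k).ofLp) ⟨?_, ?_⟩
      · rw [Module.End.mem_eigenspace_iff, Matrix.toLin'_apply, hH.mulVec_eigenvectorBasis]
      · intro h
        apply (hH.eigenvectorBasis.orthonormal.ne_zero k)
        ext i
        exact congrFun h i
    obtain ⟨i, hi⟩ := eigenvalue_mem_ball hev
    rw [Metric.mem_closedBall, Real.dist_eq] at hi
    have h1 := (abs_le.mp hi).2
    have h2 := hrow i
    rw [← Finset.add_sum_erase _ _ (Finset.mem_univ i)] at h2
    have h3 := le_abs_self (T i i)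
    simp only [Real.norm_eq_abs] at h1
    linarith
  have hld : 0 < -Real.log δ := by have := Real.log_neg hd0 hd1; linarith
  have hlog : ∑ k, (-Real.log (B⁻¹ * hH.eigenvalues k)) ≤ Fintype.card ι * Real.log B := by
    have h1 : 0 ≤ Real.log (∏ k, hH.eigenvalues k) := Real.log_nonneg hprod
    rw [Real.log_prod (fun k _ => (hpos k).ne')] at h1
    have h2 : ∀ k, -Real.log (B⁻¹ * hH.eigenvalues k) = Real.log B - Real.log (hH.eigenvalues k) := by
      intro k
      rw [Real.log_mul (inv_ne_zero hB0.ne') (hpos k).ne', Real.log_inv]; ring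
    simp only [h2, Finset.sum_sub_distrib]
    simp
    linarith
  calc ∑ k, (1 - B⁻¹ * hH.eigenvalues k) ^ (2 * r)
      ≤ ∑ k, ((1 - δ) ^ (2 * r) + (-Real.log (B⁻¹ * hH.eigenvalues k)) / (-Real.log δ)) := by
        apply Finset.sum_le_sum
        intro k _
        apply num_bound _ _ _ _ hd0 hd1
        · exact mul_pos (inv_pos.mpr hB0) (hpos k)
        · rw [inv_mul_le_iff₀ hB0]; linarith [hle k]
    _ = Fintype.card ι * (1 - δ) ^ (2 * r) +
          (∑ k, (-Real.log (B⁻¹ * hH.eigenvalues k))) / (-Real.log δ) := by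
        rw [Finset.sum_add_distrib, Finset.sum_div]; simp
    _ ≤ Fintype.card ι * (1 - δ) ^ (2 * r) + (Fintype.card ι * Real.log B) / (-Real.log δ) := by
        gcongr
    _ = _ := by ring

/-- integral matrix with trivial kernel mod `p` has positive Gram determinant -/
theorem gram_det {κ : Type*} [Fintype κ] (p : ℕ) [Fact p.Prime] (R : Matrix ι κ ℤ)
    (h : ∀ v : ι → ZMod p, Matrix.vecMul v (R.map (Int.castRingHom (ZMod p))) = 0 → v = 0) :
    (R * R.transpose).det ≠ 0 := by
  intro hd
  obtain ⟨v, hv0, hv⟩ := Matrix.exists_vecMul_eq_zero_iff.mpr hd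
  have hR : Matrix.vecMul v R = 0 := by
    have h1 : Matrix.vecMul (Matrix.vecMul v R) R.transpose ⬝ᵥ v = 0 := by
      rw [Matrix.vecMul_vecMul, hv]; simp
    rw [Matrix.vecMul_transpose, dotProduct_comm, Matrix.dotProduct_mulVec] at h1
    exact dotProduct_self_eq_zero.mp h1
  have hne : (Finset.univ : Finset ι).Nonempty := by
    by_contra hcon
    apply hv0
    funext i
    exact absurd ⟨i, Finset.mem_univ i⟩ hcon
  obtain ⟨g, hg, hg1⟩ := Finset.extract_gcd v hne
  have hgcd : Finset.univ.gcd v ≠ 0 := by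
    intro h0
    apply hv0
    funext i
    rw [hg i (Finset.mem_univ i), h0]; simp
  have hgR : Matrix.vecMul g R = 0 := by
    funext j
    have h2 := congrFun hR j
    simp only [Matrix.vecMul, dotProduct, Pi.zero_apply] at h2 ⊢
    have h3 : Finset.univ.gcd v * ∑ i, g i * R i j = 0 := by
      rw [← h2, Finset.mul_sum]
      apply Finset.sum_congr rfl
      intro i hi
      rw [← mul_assoc, ← hg i hi]
    exact (mul_eq_zero.mp h3).resolve_left hgcd
  have hz := h (fun i => ((g i : ℤ) : ZMod p)) (by
    funext j
    have := congrFun hgR j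
    simp only [Matrix.vecMul, dotProduct, Pi.zero_apply, Matrix.map_apply] at this ⊢
    have h4 := congrArg (Int.castRingHom (ZMod p)) this
    simpa using h4)
  have hdvd : ∀ i, (p : ℤ) ∣ g i := by
    intro i
    have := congrFun hz i
    exact (ZMod.intCast_zmod_eq_zero_iff_dvd _ _).mp this
  have : (p : ℤ) ∣ 1 := by
    rw [← hg1]
    exact Finset.dvd_gcd (fun i _ => hdvd i)
  have hp := (Fact.out : p.Prime)
  have := Int.natAbs_dvd_natAbs.mpr this
  simp at this
  exact hp.one_lt.ne' this

end Spectral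
end FixInert

namespace FixInert
open Module

section LemR

/-- real group ring element with integer coefficients -/
noncomputable def toR {F : Type*} (a : F →₀ ℤ) : MonoidAlgebra ℝ F :=
  MonoidAlgebra.ofCoeff (a.mapRange (Int.cast : ℤ → ℝ) (by simp))

noncomputable def eps {F : Type*} (a : F →₀ ℤ) : ℤ := a.sum fun _ z => z

section basic
variable {F Q : Type*} [Group F] [MulAction F Q] [Fintype Q] [DecidableEq Q]
variable {s t : Type*} [Fintype s] [Fintype t] [DecidableEq s] [DecidableEq t]

noncomputable def rhoZ (Q : Type*) [MulAction F Q] [DecidableEq Q] (c : s → t → (F →₀ ℤ)) : Matrix (s × Q) (t × Q) ℤ :=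
  Matrix.of fun x y => (c x.1 y.1).sum fun f z => if y.2 = f⁻¹ • x.2 then z else 0

theorem rhoM_toR (c : s → t → (F →₀ ℤ)) :
    rhoM Q (Matrix.of fun i j => toR (c i j)) = (rhoZ Q c).map (Int.castRingHom ℝ) := by
  ext x y
  simp only [rhoM, rhoZ, Matrix.of_apply, Matrix.map_apply, rho_apply, toR]
  rw [Finsupp.sum_mapRange_index (by simp)]
  simp only [Finsupp.sum, map_sum]
  apply Finset.sum_congr rfl
  intro f _
  split_ifs <;> simp

theorem rho_row (a : MonoidAlgebra ℝ F) (g : Q) :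
    ∑ h, |rho F Q a g h| ≤ a.coeff.sum fun _ z => |z| := by
  simp only [rho_apply, Finsupp.sum]
  calc ∑ h, |∑ f ∈ a.coeff.support, if h = f⁻¹ • g then a.coeff f else 0|
      ≤ ∑ h, ∑ f ∈ a.coeff.support, |if h = f⁻¹ • g then a.coeff f else 0| :=
        Finset.sum_le_sum fun h _ => Finset.abs_sum_le_sum_abs _ _
    _ = ∑ f ∈ a.coeff.support, ∑ h, |if h = f⁻¹ • g then a.coeff f else 0| := Finset.sum_comm
    _ = _ := by
        apply Finset.sum_congr rfl
        intro f _
        rw [Finset.sum_eq_single (f⁻¹ • g)] <;> simp +contextual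

theorem theta_trace (A : Matrix s t (MonoidAlgebra ℝ F)) (B : ℝ) (r : ℕ)
    (hS : FreeFor Q (suppX A B r)) :
    theta A B r * Fintype.card Q =
      Matrix.trace ((1 - B⁻¹ • (rhoM Q A * (rhoM Q A).transpose)) ^ (2 * r)) := by
  rw [← rhoM_XX, ← rhoM_pow, Matrix.trace, Fintype.sum_prod_type, theta, Finset.sum_mul]
  apply Finset.sum_congr rfl
  intro i _
  rw [Finset.sum_congr rfl (g := fun _ => (((XX A B) ^ (2 * r)) i i).coeff 1)]
  · simp [mul_comm]
  · intro q _
    apply rho_diag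
    intro f hf hf1
    exact hS f (by simp only [suppX, Finset.mem_biUnion]; exact ⟨i, Finset.mem_univ _, hf⟩) hf1 q

end basic

/-- triviality of the kernel mod p for a `p`-group quotient -/
theorem modp_ker {F G : Type*} [Group F] [Group G] [Fintype G] [DecidableEq G] (π : F →* G)
    (p : ℕ) [Fact p.Prime] (hG : IsPGroup p G)
    {s t : Type*} [Fintype s] [Fintype t] [DecidableEq s] [DecidableEq t]
    (c : s → t → (F →₀ ℤ))
    (hc : ∀ β : s → ZMod p, (∀ j, ∑ i, β i * ((eps (c i j) : ℤ) : ZMod p) = 0) → β = 0) :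
    letI := MulAction.compHom G π
    ∀ v : s × G → ZMod p, Matrix.vecMul v ((rhoZ G c).map (Int.castRingHom (ZMod p))) = 0 →
      v = 0 := by
  letI := MulAction.compHom G π
  have hsm : ∀ (f : F) (g : G), f • g = π f * g := fun f g => rfl
  let R := (rhoZ G c).map (Int.castRingHom (ZMod p))
  let W : Submodule (ZMod p) (s × G → ZMod p) := LinearMap.ker (Matrix.vecMulLinear R)
  have hWm : ∀ v, v ∈ W ↔ Matrix.vecMul v R = 0 := fun v => Iff.rfl
  have hRtr : ∀ (i : s) (j : t) (g h γ : G), R (i, g * γ) (j, h * γ) = R (i, g) (j, h) := by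
    intro i j g h γ
    simp only [R, rhoZ, Matrix.map_apply, Matrix.of_apply, hsm]
    congr 1
    apply Finsupp.sum_congr
    intro f _
    simp [← mul_assoc]
  let act : G → W → W := fun γ v => ⟨fun x => v.1 (x.1, x.2 * γ), by
    rw [hWm]
    funext y
    obtain ⟨j, h⟩ := y
    have := congrFun ((hWm _).mp v.2) (j, h * γ)
    simp only [Matrix.vecMul, dotProduct, Fintype.sum_prod_type, Pi.zero_apply] at this ⊢
    rw [← this]
    apply Finset.sum_congr rfl
    intro i _
    rw [← Equiv.sum_comp (Equiv.mulRight γ) (fun y => v.1 (i, y) * R (i, y) (j, h * γ))]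
    apply Finset.sum_congr rfl
    intro g _
    simp only [Equiv.coe_mulRight, hRtr]⟩
  letI : MulAction G W :=
    { smul := act
      one_smul := fun v => Subtype.ext (funext fun x => by
        change v.1 (x.1, x.2 * 1) = v.1 x
        rw [mul_one])
      mul_smul := fun γ γ' v => Subtype.ext (funext fun x => by
        change v.1 (x.1, x.2 * (γ * γ')) = v.1 (x.1, x.2 * γ * γ')
        rw [mul_assoc]) }
  have hact : ∀ (γ : G) (v : W) x, (γ • v).1 x = v.1 (x.1, x.2 * γ) := fun _ _ _ => rfl
  intro v hv
  by_contra hv0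
  have hnt : Nontrivial W := ⟨⟨⟨v, hv⟩, 0, fun h => hv0 (congrArg Subtype.val h)⟩⟩
  have hdvd : p ∣ Nat.card W := by
    have h1 := Module.natCard_eq_pow_finrank (K := ZMod p) (V := W)
    rw [h1, Nat.card_zmod]
    exact dvd_pow_self _ (Module.finrank_pos).ne'
  obtain ⟨w, hw, hw0⟩ := hG.exists_fixed_point_of_prime_dvd_card_of_fixed_point W hdvd
    (a := 0) (by
      intro γ
      apply Subtype.ext
      funext x
      rw [hact]; rfl)
  apply hw0
  have hconst : ∀ i g, w.1 (i, g) = w.1 (i, 1) := by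
    intro i g
    have := congrArg (fun u : W => u.1 (i, 1)) (hw g)
    simp only [hact, one_mul] at this
    exact this
  have hβ := hc (fun i => w.1 (i, 1)) (by
    intro j
    have := congrFun ((hWm _).mp w.2) (j, 1)
    simp only [Matrix.vecMul, dotProduct, Fintype.sum_prod_type, Pi.zero_apply] at this
    rw [← this]
    apply Finset.sum_congr rfl
    intro i _
    simp only [hconst i]
    rw [← Finset.mul_sum]
    congr 1
    simp only [R, rhoZ, Matrix.map_apply, Matrix.of_apply, hsm]
    rw [← map_sum]
    simp only [Finsupp.sum]
    rw [Finset.sum_comm]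
    simp only [eps, Finsupp.sum, Int.coe_castRingHom]
    congr 1
    apply Finset.sum_congr rfl
    intro f _
    rw [Finset.sum_eq_single (π f)]
    · simp
    · intro g _ hg
      rw [if_neg]
      intro h
      apply hg
      rw [map_inv] at h
      exact (inv_mul_eq_one.mp h.symm).symm
    · simp)
  apply Subtype.ext
  funext x
  rw [show x = (x.1, x.2) from rfl, hconst]
  exact (congrFun hβ x.1).symm

theorem lemmaR {X : Type} [Finite X] (p : ℕ) [Fact p.Prime]
    {s t : Type} [Fintype s] [Fintype t] [DecidableEq s] [DecidableEq t]
    (c : s → t → (FreeGroup X →₀ ℤ))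
    (hc : ∀ β : s → ZMod p, (∀ j, ∑ i, β i * ((eps (c i j) : ℤ) : ZMod p) = 0) → β = 0)
    (η : ℝ) (hη : 0 < η) :
    ∃ (B : ℝ) (r : ℕ), theta (Matrix.of fun i j => toR (c i j)) B r ≤ η := by
  classical
  set A : Matrix s t (MonoidAlgebra ℝ (FreeGroup X)) := Matrix.of fun i j => toR (c i j) with hA
  set B : ℝ := 1 + ∑ i, ∑ k, ((A * stM A) i k).coeff.sum fun _ z => |z| with hB
  have hnn : ∀ i k, 0 ≤ ((A * stM A) i k).coeff.sum fun _ z => |z| := fun i k =>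
    Finset.sum_nonneg fun _ _ => abs_nonneg _
  have hB1 : 1 ≤ B := by
    rw [hB]
    have : 0 ≤ ∑ i, ∑ k, ((A * stM A) i k).coeff.sum fun _ z => |z| :=
      Finset.sum_nonneg fun i _ => Finset.sum_nonneg fun k _ => hnn i k
    linarith
  set n : ℝ := (Fintype.card s : ℝ) with hn
  have hn0 : 0 ≤ n := by rw [hn]; positivity
  have hlB : 0 ≤ Real.log B := Real.log_nonneg hB1
  -- choose δ
  obtain ⟨δ, hd0, hd1, hδ⟩ : ∃ δ : ℝ, 0 < δ ∧ δ < 1 ∧ n * (Real.log B / (-Real.log δ)) ≤ η / 2 := by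
    set z : ℝ := 2 * n * Real.log B / η + 1 with hz
    have hz0 : 0 < z := by positivity
    refine ⟨Real.exp (-z), Real.exp_pos _, by rw [Real.exp_lt_one_iff]; linarith, ?_⟩
    rw [Real.log_exp, neg_neg, mul_div_assoc', div_le_iff₀ hz0, hz]
    have : η / 2 * (2 * n * Real.log B / η + 1) = n * Real.log B + η / 2 := by
      field_simp
    rw [this]; linarith
  obtain ⟨r, hr⟩ : ∃ r : ℕ, n * (1 - δ) ^ (2 * r) ≤ η / 2 := by
    have h1 : Filter.Tendsto (fun r : ℕ => n * (1 - δ) ^ (2 * r)) Filter.atTop (nhds (n * 0)) := by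
      apply Filter.Tendsto.const_mul
      have := (tendsto_pow_atTop_nhds_zero_of_lt_one (r := 1 - δ) (by linarith) (by linarith))
      exact this.comp (Filter.tendsto_atTop_mono (fun r => by simp only [id]; omega) Filter.tendsto_id)
    rw [mul_zero] at h1
    obtain ⟨r, hr⟩ := (h1.eventually (gt_mem_nhds (half_pos hη))).exists
    exact ⟨r, hr.le⟩
  refine ⟨B, r, ?_⟩
  obtain ⟨G, hg, hfin, hpG, π, hπ⟩ := pquot p (suppX A B r)
  letI := hg
  haveI := hfin
  letI := Fintype.ofFinite G
  letI := MulAction.compHom G π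
  have hsm : ∀ (f : FreeGroup X) (g : G), f • g = π f * g := fun f g => rfl
  have hfree : FreeFor G (suppX A B r) := by
    intro f hf hf1 q hq
    rw [hsm] at hq
    exact hπ f hf hf1 (mul_eq_right.mp hq)
  have hT := theta_trace A B r hfree
  have hker := modp_ker π p hpG c hc
  have hgram := gram_det p _ hker
  have hRe : rhoM G A = (rhoZ G c).map (Int.castRingHom ℝ) := rhoM_toR c
  have hps : (rhoM G A * (rhoM G A).transpose).PosSemidef := by
    have := Matrix.posSemidef_self_mul_conjTranspose (rhoM G A)
    rwa [Matrix.conjTranspose_eq_transpose_of_trivial] at this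
  have hdet : 1 ≤ (rhoM G A * (rhoM G A).transpose).det := by
    have h1 : (rhoM G A * (rhoM G A).transpose) =
        (rhoZ G c * (rhoZ G c).transpose).map (Int.castRingHom ℝ) := by
      rw [hRe, Matrix.map_mul, Matrix.transpose_map]
    have h2 : (rhoM G A * (rhoM G A).transpose).det =
        (((rhoZ G c * (rhoZ G c).transpose).det : ℤ) : ℝ) := by
      rw [h1]
      exact ((Int.castRingHom ℝ).map_det _).symm
    have h3 := hps.det_nonneg
    rw [h2] at h3 ⊢
    have h4 : 0 ≤ (rhoZ G c * (rhoZ G c).transpose).det := by exact_mod_cast h3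
    have h5 : 1 ≤ (rhoZ G c * (rhoZ G c).transpose).det := by omega
    exact_mod_cast h5
  have hsp := spectral_bound _ hps B δ r hB1 (by
    rintro ⟨i, g⟩
    rw [← rhoM_st, ← rhoM_mul, Fintype.sum_prod_type]
    have h1 : ∑ k, ∑ h, |rhoM G (A * stM A) (i, g) (k, h)| ≤
        ∑ k, ((A * stM A) i k).coeff.sum fun _ z => |z| :=
      Finset.sum_le_sum fun k _ => rho_row ((A * stM A) i k) g
    refine h1.trans ?_
    rw [hB]
    have h2 := Finset.single_le_sum (f := fun i => ∑ k, ((A * stM A) i k).coeff.sum fun _ z => |z|)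
      (fun i _ => Finset.sum_nonneg fun k _ => hnn i k) (Finset.mem_univ i)
    beta_reduce at h2
    linarith) hdet hd0 hd1
  rw [← hT] at hsp
  have hc0 : (0:ℝ) < Fintype.card G := by
    have : 0 < Fintype.card G := Fintype.card_pos
    exact_mod_cast this
  rw [Fintype.card_prod] at hsp
  have h6 : theta A B r * Fintype.card G ≤ η * Fintype.card G := by
    refine hsp.trans ?_
    push_cast
    have : (Fintype.card s : ℝ) * Fintype.card G *
        ((1 - δ) ^ (2 * r) + Real.log B / -Real.log δ) =
        (n * (1 - δ) ^ (2 * r) + n * (Real.log B / -Real.log δ)) * Fintype.card G := by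
      rw [hn]; ring
    rw [this]
    apply mul_le_mul_of_nonneg_right _ hc0.le
    linarith
  exact le_of_mul_le_mul_right h6 hc0

end LemR
end FixInert

namespace FixInert
open Module

section Paths
variable {F : Type} [Group F]

theorem path {κ : Type} (y : κ → F) (w : F) (hw : w ∈ Subgroup.closure (Set.range y)) :
    ∃ c : (F × κ) →₀ ℤ, (∀ x ∈ c.support, x.1 ∈ Subgroup.closure (Set.range y)) ∧
      ∀ (W : Type) [AddCommGroup W] (E : F → W),
        E w - E 1 = c.sum fun x n => n • (E (x.1 * y x.2) - E x.1) := by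
  classical
  let b := FreeGroupBasis.ofFreeGroup κ
  have hb : ∀ k, b k = FreeGroup.of k := fun k => rfl
  rw [← FreeGroup.range_lift_eq_closure] at hw ⊢
  obtain ⟨w', rfl⟩ := hw
  let I : FreeGroup κ → (FreeGroup κ × κ →₀ ℤ) := Int' b (fun z k => Finsupp.single (z, k) 1)
  let m : FreeGroup κ × κ → F × κ := fun x => (FreeGroup.lift y x.1, x.2)
  refine ⟨Finsupp.mapDomain m (I w'), ?_, ?_⟩
  · intro x hx
    obtain ⟨z, _, hz⟩ := Finset.mem_image.mp (Finsupp.mapDomain_support hx)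
    rw [← hz]
    exact ⟨z.1, rfl⟩
  · intro W _ E
    rw [Finsupp.sum_mapDomain_index (by simp) (by intros; rw [add_smul])]
    have := const_of_step b (fun w' => E (FreeGroup.lift y w') - (I w').sum fun x n =>
      n • (E ((m x).1 * y (m x).2) - E (m x).1)) (by
        intro z k
        simp only [I, Int_step]
        rw [Finsupp.sum_add_index' (by simp) (by intros; rw [add_smul]), Finsupp.sum_single_index (by simp)]
        simp only [m, hb, map_mul, FreeGroup.lift_apply_of, one_smul]
        abel) w'
    simp only [I, Int_one, map_one, Finsupp.sum_zero_index, sub_zero] at this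
    rw [← this]
    simp only [I]
    abel

/-- matrix entries built from a path -/
noncomputable def ent {κ σ : Type} [DecidableEq σ] (c : (F × κ) →₀ ℤ) (idx : F × κ → σ) (g : F × κ → F) (a : σ) :
    F →₀ ℤ := c.sum fun x n => if idx x = a then Finsupp.single (g x) n else 0

theorem toR_add (a b : F →₀ ℤ) : toR (a + b) = toR a + toR b := by
  ext f; simp [toR]

theorem toR_zero : toR (0 : F →₀ ℤ) = 0 := by
  ext f; simp [toR]

noncomputable def toRHom : (F →₀ ℤ) →+ MonoidAlgebra ℝ F where
  toFun := toR
  map_zero' := toR_zero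
  map_add' := toR_add

theorem toR_single (f : F) (n : ℤ) : toR (Finsupp.single f n) = MonoidAlgebra.single f (n : ℝ) := by
  ext x; simp [toR]

variable {Q : Type} [MulAction F Q] [Fintype Q] [DecidableEq Q]

theorem rho_ent {κ σ : Type} [DecidableEq σ] (c : (F × κ) →₀ ℤ) (idx : F × κ → σ) (g : F × κ → F) (a : σ) (q' q : Q) :
    rho F Q (toR (ent c idx g a)) q' q =
      c.sum fun x n => if idx x = a then (if q = (g x)⁻¹ • q' then (n : ℝ) else 0) else 0 := by
  unfold ent
  change rho F Q (toRHom _) q' q = _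
  rw [Finsupp.sum, map_sum, map_sum, Matrix.sum_apply, Finsupp.sum]
  apply Finset.sum_congr rfl
  intro x _
  split_ifs with h1 h2
  · change rho F Q (toR _) q' q = _
    rw [toR_single, rho_single, if_pos h2]
  · change rho F Q (toR _) q' q = _
    rw [toR_single, rho_single, if_neg h2]
  · simp

variable {J : Type} [Fintype J]

/-- the matrix with entries `ent` -/
noncomputable def entM {κ σ : Type} [DecidableEq σ] (c : J → (F × κ) →₀ ℤ) (idx : F × κ → σ) (g : F × κ → F)
    (s : Finset σ) : Matrix J s (MonoidAlgebra ℝ F) :=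
  Matrix.of fun i a => toR (ent (c i) idx g a.1)

theorem vecMul_entM {κ σ : Type} [DecidableEq σ] (c : J → (F × κ) →₀ ℤ) (idx : F × κ → σ) (g : F × κ → F)
    (s : Finset σ) (d : J × Q → ℝ) (a : s) (q : Q) :
    Matrix.vecMul d (rhoM Q (entM c idx g s)) (a, q) =
      ∑ i, (c i).sum fun x n => if idx x = a.1 then (n : ℝ) * d (i, g x • q) else 0 := by
  simp only [Matrix.vecMul, dotProduct, Fintype.sum_prod_type, rhoM, entM, Matrix.of_apply, rho_ent]
  apply Finset.sum_congr rfl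
  intro i _
  simp only [Finsupp.sum, Finset.mul_sum]
  rw [Finset.sum_comm]
  apply Finset.sum_congr rfl
  intro x _
  by_cases h : idx x = a.1
  · simp only [h, if_true]
    rw [Finset.sum_eq_single (g x • q)]
    · simp [mul_comm]
    · intro q' _ hq'
      rw [if_neg, mul_zero]
      intro h2
      apply hq'
      rw [h2, smul_inv_smul]
    · simp
  · simp [h]

theorem pairing {κ σ : Type} [DecidableEq σ] (c : J → (F × κ) →₀ ℤ) (idx : F × κ → σ) (g : F × κ → F)
    (s : Finset σ) (hs : ∀ i, ∀ x ∈ (c i).support, idx x ∈ s) (d : J × Q → ℝ) (V : σ → Q → ℝ) :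
    ∑ i, ∑ q, d (i, q) * ((c i).sum fun x n => (n : ℝ) * V (idx x) ((g x)⁻¹ • q)) =
      ∑ a : s, ∑ q, Matrix.vecMul d (rhoM Q (entM c idx g s)) (a, q) * V a.1 q := by
  simp only [vecMul_entM, Finset.sum_mul]
  have e1 : ∀ a : s, ∑ q, ∑ i, ((c i).sum fun x n => if idx x = a.1 then (n : ℝ) * d (i, g x • q) else 0) * V a.1 q
    = ∑ i, ∑ q, ((c i).sum fun x n => if idx x = a.1 then (n : ℝ) * d (i, g x • q) else 0) * V a.1 q :=
    fun a => Finset.sum_comm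
  simp only [e1]
  rw [Finset.sum_comm (s := (Finset.univ : Finset s))]
  apply Finset.sum_congr rfl
  intro i _
  simp only [Finsupp.sum, Finset.mul_sum, Finset.sum_mul]
  rw [Finset.sum_comm]
  have e2 : ∀ a : s, ∑ q, ∑ x ∈ (c i).support, (if idx x = a.1 then ((c i x : ℤ) : ℝ) * d (i, g x • q) else 0) * V a.1 q
    = ∑ x ∈ (c i).support, ∑ q, (if idx x = a.1 then ((c i x : ℤ) : ℝ) * d (i, g x • q) else 0) * V a.1 q :=
    fun a => Finset.sum_comm
  simp only [e2]
  rw [Finset.sum_comm (s := (Finset.univ : Finset s))]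
  apply Finset.sum_congr rfl
  intro x hx
  rw [Finset.sum_eq_single (⟨idx x, hs i x hx⟩ : s)]
  · simp only [if_true]
    rw [← Equiv.sum_comp (MulAction.toPerm (g x))]
    apply Finset.sum_congr rfl
    intro q _
    simp only [MulAction.toPerm_apply, inv_smul_smul]
    ring
  · intro a _ ha
    apply Finset.sum_eq_zero
    intro q _
    rw [if_neg, zero_mul]
    intro h
    exact ha (Subtype.ext h.symm)
  · simp

end Paths

section Der
variable {F : Type} [Group F] {Q : Type} [MulAction F Q]

def IsDer (P : Subgroup F) (D : F → Q → ℝ) : Prop :=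
  ∀ a ∈ P, ∀ b ∈ P, ∀ q, D (a * b) q = D a q + D b (a⁻¹ • q)

theorem IsDer.mono {P P' : Subgroup F} (h : P ≤ P') {D : F → Q → ℝ} (hD : IsDer P' D) : IsDer P D :=
  fun a ha b hb q => hD a (h ha) b (h hb) q

theorem IsDer.one {P : Subgroup F} {D : F → Q → ℝ} (hD : IsDer P D) (q : Q) : D 1 q = 0 := by
  have := hD 1 P.one_mem 1 P.one_mem q
  simpa using this

theorem exists_tder {G κ : Type} [Group G] (b : FreeGroupBasis κ G) (ψ : G →* F) (V : κ → Q → ℝ) :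
    ∃ D : G → Q → ℝ, (∀ x z q, D (x * z) q = D x q + D z ((ψ x)⁻¹ • q)) ∧ ∀ k, D (b k) = V k := by
  let g : G → κ → (Q → ℝ) := fun z k q => V k ((ψ z)⁻¹ • q)
  refine ⟨Int' b g, ?_, ?_⟩
  · intro x z q
    let t : (Q → ℝ) →+ (Q → ℝ) :=
      { toFun := fun v q => v ((ψ x)⁻¹ • q)
        map_zero' := rfl
        map_add' := fun _ _ => rfl }
    have := Int_trans b g g t x (by
      intro z k
      funext q
      simp [g, t, mul_smul]) z
    exact congrFun this q
  · intro k
    have := Int_step b g 1 k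
    rw [one_mul, Int_one, zero_add] at this
    rw [this]
    funext q
    simp [g]

theorem exists_der {κ : Type} {P : Subgroup F} (b : FreeGroupBasis κ P) (V : κ → Q → ℝ) :
    ∃ D : F → Q → ℝ, IsDer P D ∧ ∀ k, D (b k) = V k := by
  classical
  obtain ⟨D, h1, h2⟩ := exists_tder b P.subtype V
  refine ⟨fun f => if h : f ∈ P then D ⟨f, h⟩ else 0, ?_, ?_⟩
  · intro a ha b hb q
    simp only [ha, hb, P.mul_mem ha hb, dif_pos]
    exact h1 ⟨a, ha⟩ ⟨b, hb⟩ q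
  · intro k
    simp [h2]

variable [Fintype Q] {J : Type} [Fintype J]

def rel (l : J → F) (P : Subgroup F) (d : J × Q → ℝ) : Prop :=
  ∀ D : F → Q → ℝ, IsDer P D → ∑ i, ∑ q, d (i, q) * D (l i) q = 0

theorem rel.mono {l : J → F} {P P' : Subgroup F} (h : P ≤ P') {d : J × Q → ℝ} (hd : rel l P d) :
    rel l P' d := fun D hD => hd D (hD.mono h)

def NN (l : J → F) (P : Subgroup F) (A : Finset Q) : Submodule ℝ (J × Q → ℝ) where
  carrier := {d | (∀ i q, q ∉ A → d (i, q) = 0) ∧ rel l P d}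
  zero_mem' := ⟨fun _ _ _ => rfl, fun D _ => by simp⟩
  add_mem' := by
    rintro d d' ⟨h1, h2⟩ ⟨h1', h2'⟩
    refine ⟨fun i q hq => by simp [h1 i q hq, h1' i q hq], fun D hD => ?_⟩
    have e1 := h2 D hD
    have e2 := h2' D hD
    simp only [Pi.add_apply, add_mul, Finset.sum_add_distrib, e1, e2, add_zero]
  smul_mem' := by
    rintro c d ⟨h1, h2⟩
    refine ⟨fun i q hq => by simp [h1 i q hq], fun D hD => ?_⟩
    have e1 := h2 D hD
    simp only [Pi.smul_apply, smul_eq_mul, mul_assoc, ← Finset.mul_sum, e1, mul_zero]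

theorem mem_NN (l : J → F) (P : Subgroup F) (A : Finset Q) (d : J × Q → ℝ) :
    d ∈ NN l P A ↔ (∀ i q, q ∉ A → d (i, q) = 0) ∧ rel l P d := Iff.rfl

/-- Fox formula -/
theorem fox {κ : Type} {P : Subgroup F} {D : F → Q → ℝ} (hD : IsDer P D) (y : κ → F)
    (hy : ∀ k, y k ∈ P) (w : F) (c : (F × κ) →₀ ℤ) (hc : ∀ x ∈ c.support, x.1 ∈ P)
    (hE : ∀ (W : Type) [AddCommGroup W] (E : F → W),
        E w - E 1 = c.sum fun x n => n • (E (x.1 * y x.2) - E x.1)) (q : Q) :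
    D w q = c.sum fun x n => (n : ℝ) * D (y x.2) (x.1⁻¹ • q) := by
  have := hE ℝ (fun f => D f q)
  simp only [hD.one, sub_zero] at this
  rw [this]
  apply Finsupp.sum_congr
  intro x hx
  rw [hD _ (hc x hx) _ (hy _)]
  simp

end Der

section RedSec
variable {F : Type} [Group F] {J : Type} [Fintype J]

def Red (l : J → F) (P P' : Subgroup F) : Prop :=
  ∀ ε : ℝ, 0 < ε → ∃ S : Finset F, ∀ (Q : Type) [MulAction F Q] [Fintype Q], FreeFor Q S →
    ∀ A : Finset Q, (finrank ℝ (NN l P A) : ℝ) ≤ finrank ℝ (NN l P' A) + ε * A.card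

theorem Red.refl (l : J → F) (P : Subgroup F) : Red l P P := by
  intro ε hε
  refine ⟨∅, fun Q _ _ _ A => ?_⟩
  have : 0 ≤ ε * A.card := by positivity
  linarith

theorem Red.trans {l : J → F} {P P' P'' : Subgroup F} (h : Red l P P') (h' : Red l P' P'') :
    Red l P P'' := by
  classical
  intro ε hε
  obtain ⟨S, hS⟩ := h (ε / 2) (by linarith)
  obtain ⟨S', hS'⟩ := h' (ε / 2) (by linarith)
  refine ⟨S ∪ S', fun Q _ _ hf A => ?_⟩
  have h1 := hS Q (fun f hf' => hf f (Finset.mem_union_left _ hf')) A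
  have h2 := hS' Q (fun f hf' => hf f (Finset.mem_union_right _ hf')) A
  linarith

open Classical in
theorem red_of (l : J → F) (P P' : Subgroup F) {κ σ : Type} [DecidableEq σ] (c : J → (F × κ) →₀ ℤ)
    (idx : F × κ → σ) (g : F × κ → F) (s : Finset σ)
    (h2 : ∀ (Q : Type) [MulAction F Q] [Fintype Q] (d : J × Q → ℝ),
      Matrix.vecMul d (rhoM Q (entM c idx g s)) = 0 → rel l P' d)
    (h1 : ∀ η : ℝ, 0 < η → ∃ (t : Type) (_ : Fintype t) (A : Matrix s t (MonoidAlgebra ℝ F))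
      (B : ℝ) (r : ℕ), theta A B r ≤ η ∧
      ∀ (Q : Type) [MulAction F Q] [Fintype Q] (d : J × Q → ℝ), rel l P d →
        Matrix.vecMul (Matrix.vecMul d (rhoM Q (entM c idx g s))) (rhoM Q A) = 0) :
    Red l P P' := by
  intro ε hε
  let T : Finset F := Finset.univ.biUnion fun i => (c i).support.image g
  obtain ⟨t, _, A, B, r, hθ, hA⟩ := h1 (ε / (T.card + 1)) (by positivity)
  refine ⟨suppX A B r, fun Q _ _ hf A0 => ?_⟩
  let Θ : (J × Q → ℝ) →ₗ[ℝ] (s × Q → ℝ) := Matrix.vecMulLinear (rhoM Q (entM c idx g s))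
  have hΘ : ∀ d, Θ d = Matrix.vecMul d (rhoM Q (entM c idx g s)) := fun d => rfl
  let N := NN l P A0
  let Θ' : N →ₗ[ℝ] (s × Q → ℝ) := Θ.domRestrict N
  have hrn := LinearMap.finrank_range_add_finrank_ker Θ'
  have hker : finrank ℝ (LinearMap.ker Θ') ≤ finrank ℝ (NN l P' A0) := by
    let u : LinearMap.ker Θ' →ₗ[ℝ] NN l P' A0 :=
      { toFun := fun d => ⟨d.1.1, ⟨d.1.2.1, h2 Q d.1.1 d.2⟩⟩
        map_add' := fun _ _ => rfl
        map_smul' := fun _ _ => rfl }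
    apply LinearMap.finrank_le_finrank_of_injective (f := u)
    intro x x' h
    apply Subtype.ext
    apply Subtype.ext
    exact congrArg (fun z : NN l P' A0 => z.1) h
  let A1 : Finset Q := T.biUnion fun f => A0.image fun q => f⁻¹ • q
  have hA1 : A1.card ≤ T.card * A0.card := by
    refine Finset.card_biUnion_le_card_mul _ _ _ fun f _ => Finset.card_image_le
  have hK := lemmaK A B r hf A1 (LinearMap.range Θ') (by
    rintro v ⟨d, rfl⟩
    refine ⟨?_, hA Q d.1 d.2.2⟩
    intro a q hq
    change Matrix.vecMul d.1 _ (a, q) = 0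
    rw [vecMul_entM]
    apply Finset.sum_eq_zero
    intro i _
    apply Finset.sum_eq_zero
    intro x hx
    dsimp only
    split_ifs
    · rw [d.2.1 i, mul_zero]
      intro hmem
      apply hq
      simp only [A1, Finset.mem_biUnion, Finset.mem_image]
      exact ⟨g x, by
        simp only [T, Finset.mem_biUnion, Finset.mem_image]
        exact ⟨i, Finset.mem_univ _, x, hx, rfl⟩, g x • q, hmem, by simp⟩
    · rfl)
  have hle : theta A B r * A1.card ≤ ε * A0.card := by
    have h3 : (A1.card : ℝ) ≤ T.card * A0.card := by exact_mod_cast hA1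
    calc theta A B r * A1.card ≤ ε / (T.card + 1) * A1.card := by gcongr
      _ ≤ ε / (T.card + 1) * (T.card * A0.card) := by gcongr
      _ = ε * A0.card * (T.card / (T.card + 1)) := by ring
      _ ≤ ε * A0.card * 1 := by
          apply mul_le_mul_of_nonneg_left _ (by positivity)
          rw [div_le_one (by positivity)]; linarith
      _ = _ := mul_one _
  have h4 : (finrank ℝ N : ℝ) = finrank ℝ (LinearMap.range Θ') + finrank ℝ (LinearMap.ker Θ') := by
    exact_mod_cast hrn.symm
  have h5 : (finrank ℝ (LinearMap.ker Θ') : ℝ) ≤ finrank ℝ (NN l P' A0) := by exact_mod_cast hker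
  change (finrank ℝ N : ℝ) ≤ _
  linarith

end RedSec
end FixInert

namespace FixInert
open Module

section LX
variable {F : Type} [Group F]

structure IsRep (P : Subgroup F) (rep : F → F) : Prop where
  mul : ∀ p ∈ P, ∀ f, rep (p * f) = rep f
  one : rep 1 = 1
  mem : ∀ f, f * (rep f)⁻¹ ∈ P

theorem exists_rep (P : Subgroup F) : ∃ rep, IsRep P rep := by
  classical
  let R : Setoid F := QuotientGroup.rightRel P
  let r : F → F := fun f => (Quotient.mk R f).out
  have hR : ∀ a b : F, R a b ↔ b * a⁻¹ ∈ P := fun a b => QuotientGroup.rightRel_apply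
  have hr : ∀ f, f * (r f)⁻¹ ∈ P := by
    intro f
    have : R (r f) f := Quotient.exact (Quotient.out_eq (Quotient.mk R f))
    exact (hR _ _).mp this
  have hm : ∀ p ∈ P, ∀ f, r (p * f) = r f := by
    intro p hp f
    have : Quotient.mk R (p * f) = Quotient.mk R f := by
      apply Quotient.sound
      apply (hR _ _).mpr
      have : f * (p * f)⁻¹ = p⁻¹ := by group
      rw [this]; exact P.inv_mem hp
    simp only [r, this]
  refine ⟨fun f => if f ∈ P then 1 else r f, ?_, ?_, ?_⟩
  · intro p hp f
    simp only [P.mul_mem_cancel_left hp, hm p hp]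
  · simp [P.one_mem]
  · intro f
    by_cases h : f ∈ P
    · simp [h]
    · simp only [h, if_false]; exact hr f

theorem IsRep.of_mem {P : Subgroup F} {rep : F → F} (h : IsRep P rep) {p : F} (hp : p ∈ P) : rep p = 1 := by
  have := h.mul p hp 1
  rwa [mul_one, h.one] at this

theorem IsRep.eq_iff {P : Subgroup F} {rep : F → F} (h : IsRep P rep) (f f' : F)
    (hm : rep f * (rep f')⁻¹ ∈ P) : rep f = rep f' := by
  have h1 := h.mem f
  have h2 := h.mem f'
  have : f * f'⁻¹ ∈ P := by
    have e : f * f'⁻¹ = (f * (rep f)⁻¹) * (rep f * (rep f')⁻¹) * (f' * (rep f')⁻¹)⁻¹ := by group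
    rw [e]
    exact P.mul_mem (P.mul_mem h1 hm) (P.inv_mem h2)
  have := h.mul _ this f'
  rwa [inv_mul_cancel_right] at this

variable {Q : Type} [MulAction F Q] [Fintype Q] [DecidableEq Q] {J : Type} [Fintype J]

def idxX {κ : Type} (rep : F → F) (x : F × κ) : κ × F := (x.2, rep x.1)
def gX {κ : Type} (rep : F → F) (x : F × κ) : F := x.1 * (rep x.1)⁻¹

/-- `c` is a path from `1` to `w` along the family `y`. -/
def IsPath {κ : Type} (y : κ → F) (w : F) (c : (F × κ) →₀ ℤ) : Prop :=
  ∀ (W : Type) [AddCommGroup W] (E : F → W),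
        E w - E 1 = c.sum fun x n => n • (E (x.1 * y x.2) - E x.1)

theorem lemX {κ : Type} [DecidableEq (κ × F)] (l : J → F) (P : Subgroup F) (hl : ∀ i, l i ∈ P) {rep : F → F} (hr : IsRep P rep)
    (y : κ → F) (c : J → (F × κ) →₀ ℤ) (hc : ∀ i, IsPath y (l i) (c i)) (s : Finset (κ × F))
    (hs : ∀ i, ∀ x ∈ (c i).support, idxX rep x ∈ s) (d : J × Q → ℝ)
    (h : Matrix.vecMul d (rhoM Q (entM c (idxX rep) (gX rep) s)) = 0) : rel l P d := by
  intro D hD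
  let V : κ × F → Q → ℝ := fun a => D (a.2 * y a.1 * (rep (a.2 * y a.1))⁻¹)
  have key : ∀ i q, D (l i) q = (c i).sum fun x n => (n : ℝ) * V (idxX rep x) ((gX rep x)⁻¹ • q) := by
    intro i q
    have := hc i ℝ (fun f => D (f * (rep f)⁻¹) q)
    simp only [hr.of_mem (hl i), hr.one, inv_one, mul_one, hD.one, sub_zero] at this
    rw [this]
    apply Finsupp.sum_congr
    intro x hx
    have e1 : x.1 * y x.2 = (x.1 * (rep x.1)⁻¹) * (rep x.1 * y x.2) := by group
    have e2 : rep (x.1 * y x.2) = rep (rep x.1 * y x.2) := by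
      rw [e1, hr.mul _ (hr.mem _)]
    rw [e2, e1, mul_assoc, hD _ (hr.mem _) _ (hr.mem _)]
    simp [V, idxX, gX]
  simp only [key]
  rw [pairing c (idxX rep) (gX rep) s hs d V, h]
  simp

theorem foxKer {κ : Type} [DecidableEq κ] (l : J → F) (P : Subgroup F) (y : κ → F) (hy : ∀ k, y k ∈ P)
    (c : J → (F × κ) →₀ ℤ) (hc : ∀ i, IsPath y (l i) (c i)) (hcP : ∀ i, ∀ x ∈ (c i).support, x.1 ∈ P)
    (s : Finset κ) (hs : ∀ i, ∀ x ∈ (c i).support, x.2 ∈ s) (d : J × Q → ℝ)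
    (h : Matrix.vecMul d (rhoM Q (entM c Prod.snd Prod.fst s)) = 0) : rel l P d := by
  intro D hD
  have key : ∀ i q, D (l i) q = (c i).sum fun x n => (n : ℝ) * D (y x.2) ((Prod.fst x)⁻¹ • q) :=
    fun i q => fox hD y hy (l i) (c i) (hcP i) (fun W _ E => hc i W E) q
  simp only [key]
  rw [pairing c Prod.snd Prod.fst s hs d (fun k => D (y k)), h]
  simp

theorem dual_core {κ : Type} [DecidableEq κ] (c : J → (F × κ) →₀ ℤ) (g : F × κ → F) (s : Finset κ)
    (hs : ∀ i, ∀ x ∈ (c i).support, x.2 ∈ s) (d : J × Q → ℝ)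
    (h : ∀ V : κ → Q → ℝ, ∑ i, ∑ q, d (i, q) * ((c i).sum fun x n => (n : ℝ) * V x.2 ((g x)⁻¹ • q)) = 0) :
    Matrix.vecMul d (rhoM Q (entM c Prod.snd g s)) = 0 := by
  funext ⟨a, q0⟩
  have := h (fun k q => if k = a.1 ∧ q = q0 then 1 else 0)
  rw [pairing c Prod.snd g s hs d (fun k q => if k = a.1 ∧ q = q0 then 1 else 0)] at this
  rw [Finset.sum_eq_single a, Finset.sum_eq_single q0] at this
  · simpa using this
  · intro q _ hq; simp [hq]
  · simp
  · intro b _ hb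
    apply Finset.sum_eq_zero
    intro q _
    rw [if_neg, mul_zero]
    rintro ⟨h1, _⟩
    exact hb (Subtype.ext h1)
  · simp

theorem foxDual {κ : Type} [DecidableEq κ] (l : J → F) (P : Subgroup F) (b : FreeGroupBasis κ P)
    (c : J → (F × κ) →₀ ℤ) (hc : ∀ i, IsPath (fun k => (b k : F)) (l i) (c i)) (hcP : ∀ i, ∀ x ∈ (c i).support, x.1 ∈ P)
    (s : Finset κ) (hs : ∀ i, ∀ x ∈ (c i).support, x.2 ∈ s) (d : J × Q → ℝ) (h : rel l P d) :
    Matrix.vecMul d (rhoM Q (entM c Prod.snd Prod.fst s)) = 0 := by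
  apply dual_core c Prod.fst s hs d
  intro V
  obtain ⟨D, hD, hV⟩ := exists_der b V
  rw [← h D hD]
  apply Finset.sum_congr rfl
  intro i _
  apply Finset.sum_congr rfl
  intro q _
  rw [fox hD (fun k => (b k : F)) (fun k => (b k).2) (l i) (c i) (hcP i) (fun W _ E => hc i W E) q]
  simp only [hV]

theorem twDual {κ : Type} [DecidableEq κ] (l : J → F) (b : FreeGroupBasis κ F) (ψ : F ≃* F) (hψ : ∀ i, ψ (l i) = l i)
    (c : J → (F × κ) →₀ ℤ) (hc : ∀ i, IsPath b (l i) (c i))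
    (s : Finset κ) (hs : ∀ i, ∀ x ∈ (c i).support, x.2 ∈ s) (d : J × Q → ℝ) (h : rel l ⊤ d) :
    Matrix.vecMul d (rhoM Q (entM c Prod.snd (fun x => ψ x.1) s)) = 0 := by
  apply dual_core c (fun x => ψ x.1) s hs d
  intro V
  obtain ⟨D, hD, hV⟩ := exists_tder b ψ.toMonoidHom V
  have h1 : ∀ q, D 1 q = 0 := by
    intro q
    have := hD 1 1 q
    simpa using this
  rw [← h (fun f => D (ψ.symm f)) (by
    intro x _ z _ q
    simp only [map_mul]
    rw [hD]
    simp)]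
  apply Finset.sum_congr rfl
  intro i _
  apply Finset.sum_congr rfl
  intro q _
  congr 1
  have e : ψ.symm (l i) = l i := by rw [MulEquiv.symm_apply_eq, hψ]
  have := hc i ℝ (fun f => D f q)
  simp only [h1, sub_zero] at this
  rw [e, this]
  apply Finsupp.sum_congr
  intro x hx
  rw [hD, hV]
  simp

theorem combine {κ : Type} [DecidableEq κ] [DecidableEq (κ × F)] (rep : F → F) (c : J → (F × κ) →₀ ℤ)
    (sX : Finset (κ × F)) (hsX : ∀ i, ∀ x ∈ (c i).support, idxX rep x ∈ sX) (s : Finset κ) (ψ : F → F)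
    (hψ : ∀ i, ∀ x ∈ (c i).support, ψ x.1 = gX rep x * ψ (rep x.1)) (d : J × Q → ℝ) (k : s) (q : Q) :
    ∑ a : sX, (if a.1.1 = k.1 then Matrix.vecMul d (rhoM Q (entM c (idxX rep) (gX rep) sX)) (a, ψ a.1.2 • q) else 0) =
      Matrix.vecMul d (rhoM Q (entM c Prod.snd (fun x => ψ x.1) s)) (k, q) := by
  simp only [vecMul_entM]
  have e0 : ∀ a : sX, (if a.1.1 = k.1 then ∑ i, ((c i).sum fun x n => if idxX rep x = a.1 then (n : ℝ) * d (i, gX rep x • ψ a.1.2 • q) else 0) else 0)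
    = ∑ i, ∑ x ∈ (c i).support, (if a.1.1 = k.1 then (if idxX rep x = a.1 then ((c i x : ℤ) : ℝ) * d (i, gX rep x • ψ a.1.2 • q) else 0) else 0) := by
    intro a
    by_cases h : a.1.1 = k.1
    · simp only [h, if_true]; rfl
    · simp [h]
  simp only [e0]
  rw [Finset.sum_comm]
  apply Finset.sum_congr rfl
  intro i _
  rw [Finset.sum_comm, Finsupp.sum]
  apply Finset.sum_congr rfl
  intro x hx
  rw [Finset.sum_eq_single (⟨idxX rep x, hsX i x hx⟩ : sX)]
  · simp only [if_true]
    rw [hψ i x hx, mul_smul]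
    rfl
  · intro a _ ha
    have hne : idxX rep x ≠ a.1 := fun h => ha (Subtype.ext h.symm)
    simp [hne]
  · simp

end LX
end FixInert

namespace FixInert
open Module

section Low
variable {F : Type} [Group F]

theorem lower {Q : Type} [MulAction F Q] [Fintype Q] (n : ℕ) (y : Fin n → F) (K : Subgroup F)
    (hK : Subgroup.closure (Set.range y) = K) (l : Fin (n+1) → F) (hl : ∀ i, l i ∈ K) (A : Finset Q)
    (hA : ∀ f ∈ K, ∀ q ∈ A, f • q ∈ A) : A.card ≤ finrank ℝ (NN l K A) := by
  classical
  have hp : ∀ i, ∃ c : (F × Fin n) →₀ ℤ, (∀ x ∈ c.support, x.1 ∈ K) ∧ IsPath y (l i) c := by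
    intro i
    subst hK
    obtain ⟨c, h1, h2⟩ := path y (l i) (hl i)
    exact ⟨c, h1, fun W _ E => h2 W E⟩
  choose c hcK hc using hp
  let s : Finset (Fin n) := Finset.univ
  let R := rhoM Q (entM c Prod.snd Prod.fst s)
  let ex : (Fin (n+1) × A → ℝ) →ₗ[ℝ] (Fin (n+1) × Q → ℝ) :=
    { toFun := fun d x => if h : x.2 ∈ A then d (x.1, ⟨x.2, h⟩) else 0
      map_add' := by
        intro d d'; funext x
        by_cases h : x.2 ∈ A <;> simp [h]
      map_smul' := by
        intro r d; funext x
        by_cases h : x.2 ∈ A <;> simp [h] }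
  let re : (s × Q → ℝ) →ₗ[ℝ] (s × A → ℝ) := LinearMap.funLeft ℝ ℝ (fun x : s × A => (x.1, x.2.1))
  let Θ : (Fin (n+1) × A → ℝ) →ₗ[ℝ] (s × A → ℝ) := re ∘ₗ (Matrix.vecMulLinear R) ∘ₗ ex
  have hrn := LinearMap.finrank_range_add_finrank_ker Θ
  have hr : finrank ℝ (LinearMap.range Θ) ≤ n * A.card := by
    refine (Submodule.finrank_le _).trans ?_
    simp [s]
  have hd : finrank ℝ (Fin (n+1) × A → ℝ) = (n+1) * A.card := by simp
  have hker : finrank ℝ (LinearMap.ker Θ) ≤ finrank ℝ (NN l K A) := by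
    have hmem : ∀ d : LinearMap.ker Θ, ex d.1 ∈ NN l K A := by
      intro d
      refine ⟨fun i q hq => ?_, ?_⟩
      · change (if h : q ∈ A then d.1 (i, ⟨q, h⟩) else 0) = 0
        simp [hq]
      · apply foxKer l K y (fun k => by rw [← hK]; exact Subgroup.subset_closure ⟨k, rfl⟩) c hc hcK s (by simp [s])
        funext ⟨a, q⟩
        by_cases hq : q ∈ A
        · have := d.2
          rw [LinearMap.mem_ker] at this
          exact congrFun this (a, ⟨q, hq⟩)
        · rw [vecMul_entM]
          apply Finset.sum_eq_zero
          intro i _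
          apply Finset.sum_eq_zero
          intro x hx
          dsimp only
          split_ifs
          · have : x.1 • q ∉ A := by
              intro h
              apply hq
              have := hA _ (K.inv_mem (hcK i x hx)) _ h
              rwa [inv_smul_smul] at this
            change _ * (if h : x.1 • q ∈ A then d.1 (i, ⟨x.1 • q, h⟩) else 0) = 0
            simp [this]
          · rfl
    let u : LinearMap.ker Θ →ₗ[ℝ] NN l K A :=
      LinearMap.codRestrict (NN l K A) (ex ∘ₗ (LinearMap.ker Θ).subtype) hmem
    apply LinearMap.finrank_le_finrank_of_injective (f := u)
    intro x x' h
    apply Subtype.ext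
    have h' : ex x.1 = ex x'.1 := congrArg (fun z : NN l K A => z.1) h
    funext ⟨i, q⟩
    have := congrFun h' (i, q.1)
    change (if h : q.1 ∈ A then x.1 (i, ⟨q.1, h⟩) else 0) = (if h : q.1 ∈ A then x'.1 (i, ⟨q.1, h⟩) else 0) at this
    simpa using this
  rw [hd] at hrn
  nlinarith

theorem end_zero (J : Type) [Fintype J] {κ ι : Type} (H L : Subgroup F) (b : FreeGroupBasis κ H) (bL : FreeGroupBasis ι L) (hLH : L ≤ H)
    (kk : J → ι) (hkk : Function.Injective kk) (l : J → F) (hl : ∀ i, l i = bL (kk i)) :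
    ∃ S' : Finset F, (∀ f ∈ S', f ∈ H ∧ f ∉ L) ∧ ∀ (Q : Type) [MulAction F Q] [Fintype Q] (A : Finset Q),
      (∀ f ∈ L, ∀ q ∈ A, f • q ∈ A) → (∀ f ∈ S', ∀ q ∈ A, f • q ∉ A) → finrank ℝ (NN l H A) = 0 := by
  classical
  have hlL : ∀ i, l i ∈ L := fun i => by rw [hl]; exact (bL (kk i)).2
  have hH : Subgroup.closure (Set.range fun k => (b k : F)) = H := by
    have := basis_closure b
    have h2 := congrArg (Subgroup.map H.subtype) this
    rw [MonoidHom.map_closure, ← MonoidHom.range_eq_map, Subgroup.range_subtype, ← Set.range_comp] at h2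
    exact h2
  have hp : ∀ i, ∃ c : (F × κ) →₀ ℤ, (∀ x ∈ c.support, x.1 ∈ H) ∧ IsPath (fun k => (b k : F)) (l i) c := by
    intro i
    obtain ⟨c, h1, h2⟩ := path (fun k => (b k : F)) (l i) (by rw [hH]; exact hLH (hlL i))
    rw [hH] at h1
    exact ⟨c, h1, fun W _ E => h2 W E⟩
  choose c hcH hc using hp
  obtain ⟨rep, hr⟩ := exists_rep L
  let T : Finset (F × κ) := Finset.univ.biUnion fun i => (c i).support
  have hT : ∀ i, ∀ x ∈ (c i).support, x ∈ T := fun i x hx => Finset.mem_biUnion.mpr ⟨i, Finset.mem_univ _, hx⟩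
  have hTH : ∀ x ∈ T, x.1 ∈ H := by
    intro x hx
    obtain ⟨i, _, hi⟩ := Finset.mem_biUnion.mp hx
    exact hcH i x hi
  have hrH : ∀ x ∈ T, rep x.1 ∈ H := by
    intro x hx
    have h1 := hLH (hr.mem x.1)
    have : rep x.1 = (x.1 * (rep x.1)⁻¹)⁻¹ * x.1 := by group
    rw [this]
    exact H.mul_mem (H.inv_mem h1) (hTH x hx)
  let sX : Finset (κ × F) := T.image (idxX rep)
  let s : Finset κ := T.image Prod.snd
  let S' : Finset F := ((T ×ˢ T).image fun z => rep z.1.1 * (rep z.2.1)⁻¹).filter fun f => f ∉ L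
  refine ⟨S', ?_, ?_⟩
  · intro f hf
    obtain ⟨h1, h2⟩ := Finset.mem_filter.mp hf
    refine ⟨?_, h2⟩
    obtain ⟨z, hz, rfl⟩ := Finset.mem_image.mp h1
    obtain ⟨hz1, hz2⟩ := Finset.mem_product.mp hz
    exact H.mul_mem (hrH _ hz1) (H.inv_mem (hrH _ hz2))
  · intro Q _ _ A hA hS
    have hsX : ∀ i, ∀ x ∈ (c i).support, idxX rep x ∈ sX := fun i x hx =>
      Finset.mem_image.mpr ⟨x, hT i x hx, rfl⟩
    have hs : ∀ i, ∀ x ∈ (c i).support, x.2 ∈ s := fun i x hx =>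
      Finset.mem_image.mpr ⟨x, hT i x hx, rfl⟩
    have : NN l H A = ⊥ := by
      rw [eq_bot_iff]
      rintro d ⟨hd1, hd2⟩
      let e := Matrix.vecMul d (rhoM Q (entM c (idxX rep) (gX rep) sX))
      have he1 : ∀ a q, q ∉ A → e (a, q) = 0 := by
        intro a q hq
        simp only [e]
        rw [vecMul_entM]
        apply Finset.sum_eq_zero
        intro i _
        apply Finset.sum_eq_zero
        intro x hx
        dsimp only
        split_ifs
        · rw [hd1, mul_zero]
          intro h
          apply hq
          have := hA _ (L.inv_mem (hr.mem x.1)) _ h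
          rwa [gX, inv_smul_smul] at this
        · rfl
      have he0 : e = 0 := by
        funext ⟨a0, q⟩
        by_cases hq : q ∈ A
        swap
        · exact he1 a0 q hq
        have ha0 := a0.2
        obtain ⟨x0, hx0, hx0'⟩ := Finset.mem_image.mp ha0
        have hk : a0.1.1 ∈ s := by
          rw [← hx0']; exact Finset.mem_image.mpr ⟨x0, hx0, rfl⟩
        have hcomb := combine (Q := Q) rep c sX hsX s id (by
          intro i x hx
          simp [gX]) d ⟨a0.1.1, hk⟩ (a0.1.2⁻¹ • q)
        have hdual := foxDual l H b c hc hcH s hs d hd2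
        have hz := congrFun hdual (⟨a0.1.1, hk⟩, a0.1.2⁻¹ • q)
        change _ = Matrix.vecMul d (rhoM Q (entM c Prod.snd Prod.fst s)) _ at hcomb
        rw [hz, Finset.sum_eq_single a0] at hcomb
        · simpa using hcomb
        · intro a _ ha
          split_ifs with h
          · apply he1
            obtain ⟨x, hx, hx'⟩ := Finset.mem_image.mp a.2
            rw [← mul_smul]
            apply hS _ _ q hq
            refine Finset.mem_filter.mpr ⟨?_, ?_⟩
            · refine Finset.mem_image.mpr ⟨(x, x0), Finset.mem_product.mpr ⟨hx, hx0⟩, ?_⟩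
              rw [← hx', ← hx0']
              rfl
            · intro hL
              apply ha
              apply Subtype.ext
              apply Prod.ext h
              rw [← hx', ← hx0'] at hL ⊢
              exact hr.eq_iff _ _ hL
          · rfl
        · simp
      have hrel : rel l L d := lemX l L hlL hr (fun k => (b k : F)) c hc sX hsX d he0
      rw [Submodule.mem_bot]
      funext ⟨i0, q0⟩
      obtain ⟨D, hD, hV⟩ := exists_der (Q := Q) bL (fun k q => if k = kk i0 ∧ q = q0 then 1 else 0)
      have := hrel D hD
      simp only [hl, hV] at this
      rw [Finset.sum_eq_single i0, Finset.sum_eq_single q0] at this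
      · simpa using this
      · intro q _ hq; simp [hq]
      · simp
      · intro i _ hi
        apply Finset.sum_eq_zero
        intro q _
        rw [if_neg, mul_zero]
        rintro ⟨h1, _⟩
        exact hi (hkk h1)
      · simp
    rw [this]
    simp

end Low
end FixInert

namespace FixInert
open Module

section Tw
variable {F : Type} [Group F]

def fixP (α : MulAut F) : Subgroup F where
  carrier := {f | α f = f}
  one_mem' := map_one α
  mul_mem' := by
    intro a b ha hb
    change α (a * b) = a * b
    rw [map_mul, show α a = a from ha, show α b = b from hb]
  inv_mem' := by
    intro a ha
    change α a⁻¹ = a⁻¹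
    rw [map_inv, show α a = a from ha]

theorem mem_fixP (α : MulAut F) (f : F) : f ∈ fixP α ↔ α f = f := Iff.rfl

theorem fix_pow (α : MulAut F) (f : F) (h : α f = f) (k : ℕ) : (α ^ k) f = f := by
  induction k with
  | zero => rfl
  | succ k ih => rw [pow_succ, MulAut.mul_apply, h, ih]

theorem st_single (f : F) (c : ℝ) : st (MonoidAlgebra.single f c) = MonoidAlgebra.single f⁻¹ c := by
  rw [st, MonoidAlgebra.coeff_single, Finsupp.sum_single_index]
  simp

theorem st_zero : st (0 : MonoidAlgebra ℝ F) = 0 := by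
  simp [st]

theorem W_coeff {R : ℕ} (w w' : Fin R → F) (h : ∀ j j', w j * w' j' = 1 ↔ j = j') :
    (((∑ j, MonoidAlgebra.single (w j) (1:ℝ)) * (∑ j, MonoidAlgebra.single (w' j) (1:ℝ)) : MonoidAlgebra ℝ F)).coeff 1 = R := by
  classical
  rw [Finset.sum_mul_sum]
  have : ∀ (x : MonoidAlgebra ℝ F), x.coeff 1 = (MonoidAlgebra.coeffAddEquiv x) 1 := fun _ => rfl
  rw [this]
  simp only [map_sum, Finsupp.finset_sum_apply, MonoidAlgebra.single_mul_single]
  simp only [← this, MonoidAlgebra.coeff_single, Finsupp.single_apply, h]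
  simp

open Classical in
noncomputable def twA {κ : Type} (sX : Finset (κ × F)) (s : Finset κ) {R : ℕ} (ψ : Fin R → MulAut F) :
    Matrix sX (s × Fin R) (MonoidAlgebra ℝ F) :=
  Matrix.of fun a t => if a.1.1 = t.1.1 then MonoidAlgebra.single (ψ t.2 a.1.2) 1 else 0

open Classical in
theorem twA_mul {κ : Type} (sX : Finset (κ × F)) (s : Finset κ) (hs : ∀ a ∈ sX, a.1 ∈ s) {R : ℕ} (ψ : Fin R → MulAut F)
    (a a' : sX) : (twA sX s ψ * stM (twA sX s ψ)) a a' =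
      if a.1.1 = a'.1.1 then ∑ j, MonoidAlgebra.single (ψ j (a.1.2 * a'.1.2⁻¹)) (1:ℝ) else 0 := by
  rw [Matrix.mul_apply, Fintype.sum_prod_type, Finset.sum_eq_single (⟨a.1.1, hs _ a.2⟩ : s)]
  · split_ifs with h
    · apply Finset.sum_congr rfl
      intro j _
      simp only [twA, stM, Matrix.of_apply, if_true, h.symm, st_single, MonoidAlgebra.single_mul_single]
      simp
    · apply Finset.sum_eq_zero
      intro j _
      have h' : ¬ a'.1.1 = a.1.1 := fun e => h e.symm
      simp only [twA, stM, Matrix.of_apply, h', if_false, st_zero, mul_zero]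
  · intro k _ hk
    apply Finset.sum_eq_zero
    intro j _
    have h' : ¬ a.1.1 = k.1 := fun e => hk (Subtype.ext e.symm)
    simp only [twA, stM, Matrix.of_apply, h', if_false, zero_mul]
  · simp

open Classical in
theorem theta_tw {κ : Type} (sX : Finset (κ × F)) (s : Finset κ) (hs : ∀ a ∈ sX, a.1 ∈ s) {R : ℕ} (hR : 0 < R) (ψ : Fin R → MulAut F)
    (hψ : ∀ a ∈ sX, ∀ a' ∈ sX, a ≠ a' → a.1 = a'.1 → ∀ j j', ψ j (a.2 * a'.2⁻¹) = ψ j' (a.2 * a'.2⁻¹) → j = j') :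
    theta (twA sX s ψ) R 1 ≤ (sX.card : ℝ) ^ 2 / R := by
  have hR' : (R : ℝ) ≠ 0 := by positivity
  have hX : ∀ a a' : sX, XX (twA sX s ψ) R a a' = (1 : Matrix sX sX (MonoidAlgebra ℝ F)) a a' - (R:ℝ)⁻¹ •
      (if a.1.1 = a'.1.1 then ∑ j, MonoidAlgebra.single (ψ j (a.1.2 * a'.1.2⁻¹)) (1:ℝ) else 0) := by
    intro a a'
    rw [XX, Matrix.sub_apply, Matrix.smul_apply, twA_mul sX s hs]
  have hd : ∀ a : sX, XX (twA sX s ψ) R a a = 0 := by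
    intro a
    rw [hX]
    simp only [if_true, mul_inv_cancel, map_one, Finset.sum_const, Finset.card_univ, Fintype.card_fin, Matrix.one_apply_eq]
    rw [MonoidAlgebra.one_def, ← Nat.cast_smul_eq_nsmul ℝ, smul_smul, inv_mul_cancel₀ hR', one_smul, sub_self]
  have hterm : ∀ a a' : sX, (XX (twA sX s ψ) R a a' * XX (twA sX s ψ) R a' a).coeff 1 ≤ (R:ℝ)⁻¹ := by
    intro a a'
    by_cases h : a = a'
    · subst h
      rw [hd]
      simp
    by_cases h1 : a.1.1 = a'.1.1
    · rw [hX, hX, Matrix.one_apply_ne h, Matrix.one_apply_ne (Ne.symm h), if_pos h1, if_pos h1.symm, zero_sub, zero_sub,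
        neg_mul_neg, smul_mul_smul_comm, MonoidAlgebra.coeff_smul, Finsupp.smul_apply, W_coeff]
      · rw [smul_eq_mul, mul_assoc, inv_mul_cancel₀ hR', mul_one]
      · intro j j'
        have e : ψ j' (a'.1.2 * a.1.2⁻¹) = (ψ j' (a.1.2 * a'.1.2⁻¹))⁻¹ := by
          rw [← map_inv]; congr 1; group
        rw [e, mul_inv_eq_one]
        constructor
        · exact hψ _ a.2 _ a'.2 (fun e => h (Subtype.ext e)) h1 j j'
        · rintro rfl; rfl
    · rw [hX, if_neg h1, Matrix.one_apply_ne h]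
      simp
  have hcs : ∀ (x : MonoidAlgebra ℝ F), x.coeff 1 = (MonoidAlgebra.coeffAddEquiv x) 1 := fun _ => rfl
  calc theta (twA sX s ψ) R 1 = ∑ a, ∑ a', (XX (twA sX s ψ) R a a' * XX (twA sX s ψ) R a' a).coeff 1 := by
        rw [theta]
        apply Finset.sum_congr rfl
        intro a _
        rw [mul_one, pow_two, Matrix.mul_apply, hcs, map_sum, Finsupp.finset_sum_apply]
        rfl
    _ ≤ ∑ a : sX, ∑ a' : sX, (R:ℝ)⁻¹ := Finset.sum_le_sum fun a _ => Finset.sum_le_sum fun a' _ => hterm a a'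
    _ = _ := by
        simp only [Finset.sum_const, Finset.card_univ, Fintype.card_coe, nsmul_eq_mul]
        ring

open Classical in
theorem vecMul_twA {Q : Type} [MulAction F Q] [Fintype Q] {κ : Type} (sX : Finset (κ × F)) (s : Finset κ) {R : ℕ} (ψ : Fin R → MulAut F)
    (e : sX × Q → ℝ) (k : s) (j : Fin R) (q : Q) :
    Matrix.vecMul e (rhoM Q (twA sX s ψ)) ((k, j), q) = ∑ a : sX, if a.1.1 = k.1 then e (a, ψ j a.1.2 • q) else 0 := by
  simp only [Matrix.vecMul, dotProduct, Fintype.sum_prod_type, rhoM, Matrix.of_apply]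
  apply Finset.sum_congr rfl
  intro a _
  simp only [twA, Matrix.of_apply]
  split_ifs with h
  · simp only [rho_single]
    rw [Finset.sum_eq_single (ψ j a.1.2 • q)]
    · simp
    · intro q' _ hq'
      rw [if_neg, mul_zero]
      intro h2
      apply hq'
      rw [h2, smul_inv_smul]
    · simp
  · simp

theorem exists_period (φ : MulAut F) (U : Finset F) : ∃ M : ℕ, 0 < M ∧ ∀ u ∈ U, (∃ k > 0, (φ ^ k) u = u) → (φ ^ M) u = u := by
  classical
  induction U using Finset.induction_on with
  | empty => exact ⟨1, one_pos, by simp⟩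
  | insert u U hu ih =>
    obtain ⟨M, hM, h⟩ := ih
    by_cases hk : ∃ k > 0, (φ ^ k) u = u
    · obtain ⟨k, hk0, hk⟩ := hk
      refine ⟨k * M, by positivity, ?_⟩
      intro v hv hv'
      rcases Finset.mem_insert.mp hv with rfl | hv
      · rw [pow_mul]; exact fix_pow _ _ hk _
      · rw [mul_comm, pow_mul]; exact fix_pow _ _ (h v hv hv') _
    · refine ⟨M, hM, ?_⟩
      intro v hv hv'
      rcases Finset.mem_insert.mp hv with rfl | hv
      · exact absurd hv' hk
      · exact h v hv hv'

theorem red_top {J : Type} [Fintype J] {κ : Type} (b : FreeGroupBasis κ F) (φ : MulAut F) (l : J → F)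
    (hl : ∀ i, φ (l i) = l i) : ∃ M : ℕ, 0 < M ∧ Red l ⊤ (fixP (φ ^ M)) := by
  classical
  have hp : ∀ i, ∃ c : (F × κ) →₀ ℤ, IsPath b (l i) c := by
    intro i
    obtain ⟨c, h1, h2⟩ := path b (l i) (by rw [basis_closure b]; trivial)
    exact ⟨c, fun W _ E => h2 W E⟩
  choose c hc using hp
  let T : Finset (F × κ) := Finset.univ.biUnion fun i => (c i).support
  have hT : ∀ i, ∀ x ∈ (c i).support, x ∈ T := fun i x hx => Finset.mem_biUnion.mpr ⟨i, Finset.mem_univ _, hx⟩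
  obtain ⟨M, hM, hper⟩ := exists_period φ ((T ×ˢ T).image fun z => z.1.1 * z.2.1⁻¹)
  refine ⟨M, hM, ?_⟩
  obtain ⟨rep, hr⟩ := exists_rep (fixP (φ ^ M))
  let sX : Finset (κ × F) := T.image (idxX rep)
  let s : Finset κ := T.image Prod.snd
  have hsX : ∀ i, ∀ x ∈ (c i).support, idxX rep x ∈ sX := fun i x hx =>
    Finset.mem_image.mpr ⟨x, hT i x hx, rfl⟩
  have hs : ∀ i, ∀ x ∈ (c i).support, x.2 ∈ s := fun i x hx =>
    Finset.mem_image.mpr ⟨x, hT i x hx, rfl⟩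
  have hss : ∀ a ∈ sX, a.1 ∈ s := by
    intro a ha
    obtain ⟨x, hx, rfl⟩ := Finset.mem_image.mp ha
    exact Finset.mem_image.mpr ⟨x, hx, rfl⟩
  have hcomm : ∀ (j : ℕ) (p : F), p ∈ fixP (φ ^ M) → (φ ^ (M * j)) p = p := by
    intro j p hp
    rw [pow_mul]
    exact fix_pow _ _ hp _
  apply red_of l ⊤ (fixP (φ ^ M)) c (idxX rep) (gX rep) sX
  · intro Q _ _ d hd
    exact lemX l _ (fun i => fix_pow φ _ (hl i) M) hr b c hc sX hsX d hd
  · intro η hη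
    obtain ⟨R, hR⟩ := exists_nat_gt (max 0 ((sX.card : ℝ) ^ 2 / η))
    have hR0 : 0 < R := by
      have := (le_max_left _ _).trans_lt hR
      exact_mod_cast this
    let ψ : Fin R → MulAut F := fun j => φ ^ (M * j.1)
    refine ⟨s × Fin R, inferInstance, twA sX s ψ, R, 1, ?_, ?_⟩
    · refine (theta_tw sX s hss hR0 ψ ?_).trans ?_
      · intro a ha a' ha' hne h1 j j' hjj
        obtain ⟨x, hx, rfl⟩ := Finset.mem_image.mp ha
        obtain ⟨x', hx', rfl⟩ := Finset.mem_image.mp ha'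
        by_contra hj
        apply hne
        apply Prod.ext h1
        simp only [idxX, ψ] at hjj ⊢
        set u := rep x.1 * (rep x'.1)⁻¹ with hu
        have main : ∀ j j' : ℕ, j < j' → (φ ^ (M * j)) u = (φ ^ (M * j')) u → rep x.1 = rep x'.1 := by
          intro j j' hlt he
          have hfix : (φ ^ (M * (j' - j))) u = u := by
            have : M * j' = M * j + M * (j' - j) := by rw [← mul_add]; congr 1; omega
            rw [this, pow_add, MulAut.mul_apply] at he
            exact ((φ ^ (M * j)).injective he).symm
          have e : x.1 * x'.1⁻¹ = (x.1 * (rep x.1)⁻¹) * u * (x'.1 * (rep x'.1)⁻¹)⁻¹ := by rw [hu]; group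
          have hf2 : (φ ^ (M * (j' - j))) (x.1 * x'.1⁻¹) = x.1 * x'.1⁻¹ := by
            rw [e, map_mul, map_mul, map_inv, hfix, hcomm _ _ (hr.mem x.1), hcomm _ _ (hr.mem x'.1)]
          have hf3 := hper (x.1 * x'.1⁻¹) (Finset.mem_image.mpr ⟨(x, x'), Finset.mem_product.mpr ⟨hx, hx'⟩, rfl⟩)
            ⟨M * (j' - j), Nat.mul_pos hM (by omega), hf2⟩
          have := hr.mul (x.1 * x'.1⁻¹) hf3 x'.1
          rwa [inv_mul_cancel_right] at this
        rcases lt_or_gt_of_ne (fun h => hj (Fin.ext h) : j.1 ≠ j'.1) with h | h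
        · exact main _ _ h hjj
        · exact main _ _ h hjj.symm
      · have h2 := (le_max_right _ _).trans_lt hR
        rw [div_lt_iff₀ hη] at h2
        rw [div_le_iff₀ (by exact_mod_cast hR0)]
        linarith
    · intro Q _ _ d hd
      funext ⟨⟨k, j⟩, q⟩
      rw [vecMul_twA]
      have hcomb := combine (Q := Q) rep c sX hsX s (ψ j) (by
          intro i x hx
          have e : x.1 = gX rep x * rep x.1 := by simp [gX]
          conv_lhs => rw [e, map_mul]
          congr 1
          exact hcomm _ _ (hr.mem x.1)) d k q
      have hdual := twDual l b (ψ j) (fun i => fix_pow φ _ (hl i) _) c hc s hs d hd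
      rw [hdual] at hcomb
      exact hcomb

end Tw
end FixInert

namespace FixInert
open Module

section Prime
variable {F : Type} [Group F]

theorem basis_closure_coe {κ : Type} (H : Subgroup F) (b : FreeGroupBasis κ H) :
    Subgroup.closure (Set.range fun k => (b k : F)) = H := by
  have := basis_closure b
  have h2 := congrArg (Subgroup.map H.subtype) this
  rw [MonoidHom.map_closure, ← MonoidHom.range_eq_map, Subgroup.range_subtype, ← Set.range_comp] at h2
  exact h2

theorem basis_path {κ : Type} (H : Subgroup F) (b : FreeGroupBasis κ H) (w : F) (hw : w ∈ H) :
    ∃ c : (F × κ) →₀ ℤ, (∀ x ∈ c.support, x.1 ∈ H) ∧ IsPath (fun k => (b k : F)) w c := by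
  obtain ⟨c, h1, h2⟩ := path (fun k => (b k : F)) w (by rw [basis_closure_coe]; exact hw)
  rw [basis_closure_coe] at h1
  exact ⟨c, h1, fun W _ E => h2 W E⟩

theorem fixP_le (α : MulAut F) (p : ℕ) : fixP α ≤ fixP (α ^ p) := fun f hf => fix_pow α f hf p

theorem char_ext (α : MulAut F) (p : ℕ) [Fact p.Prime] {Y : Type} (bY : FreeGroupBasis Y (fixP (α ^ p)))
    (htf : ∀ x : F, x ^ p = 1 → x = 1) (χ : fixP α →* Multiplicative (ZMod p)) :
    ∃ u : fixP (α ^ p) → ZMod p, (∀ x x', u (x * x') = u x + u x') ∧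
      ∀ h : fixP α, u ⟨h.1, fixP_le α p h.2⟩ = (χ h).toAdd := by
  classical
  have hpres : ∀ x, x ∈ fixP (α ^ p) → α x ∈ fixP (α ^ p) := by
    intro x hx
    change (α ^ p) (α x) = α x
    rw [← MulAut.mul_apply, ← pow_succ, pow_succ', MulAut.mul_apply, show (α ^ p) x = x from hx]
  have hpres' : ∀ x, x ∈ fixP (α ^ p) → α.symm x ∈ fixP (α ^ p) := by
    intro x hx
    change (α ^ p) (α.symm x) = α.symm x
    rw [MulEquiv.eq_symm_apply, ← MulAut.mul_apply, ← pow_succ', pow_succ, MulAut.mul_apply, MulEquiv.apply_symm_apply]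
    exact hx
  let a : MulAut (fixP (α ^ p)) :=
    { toFun := fun x => ⟨α x.1, hpres _ x.2⟩
      invFun := fun x => ⟨α.symm x.1, hpres' _ x.2⟩
      left_inv := fun x => Subtype.ext (by simp)
      right_inv := fun x => Subtype.ext (by simp)
      map_mul' := fun x y => Subtype.ext (by simp) }
  have hapow : ∀ k : ℕ, ∀ x, ((a ^ k) x).1 = (α ^ k) x.1 := by
    intro k
    induction k with
    | zero => intro x; rfl
    | succ k ih =>
      intro x
      rw [pow_succ, pow_succ, MulAut.mul_apply, MulAut.mul_apply, ih]
      rfl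
  have hap : a ^ p = 1 := by
    ext x
    rw [hapow]
    exact x.2
  let σ : ZMod p →+ Additive (MulAut (fixP (α ^ p))) :=
    ZMod.lift p ⟨zmultiplesHom _ (Additive.ofMul a), by
      simp only [zmultiplesHom_apply, natCast_zsmul]
      rw [← ofMul_pow, hap]; rfl⟩
  have hσ : ∀ k : ℤ, σ (k : ZMod p) = Additive.ofMul (a ^ k) := by
    intro k
    simp only [σ]
    rw [ZMod.lift_coe]
    simp [zmultiplesHom_apply]
  let τ : Multiplicative (ZMod p) →* MulAut (fixP (α ^ p)) :=
    { toFun := fun j => (σ j.toAdd).toMul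
      map_one' := by simp
      map_mul' := fun x y => by simp }
  have hfix : ∀ h, (∀ j, τ j h = h) ↔ h.1 ∈ fixP α := by
    intro h
    constructor
    · intro hj
      have := hj (Multiplicative.ofAdd ((1 : ℤ) : ZMod p))
      change (σ ((1 : ℤ) : ZMod p)).toMul h = h at this
      rw [hσ, toMul_ofMul, zpow_one] at this
      exact congrArg Subtype.val this
    · intro hh j
      obtain ⟨k, hk⟩ := ZMod.intCast_surjective j.toAdd
      change (σ j.toAdd).toMul h = h
      rw [← hk, hσ, toMul_ofMul]
      have h0 : a h = h := Subtype.ext hh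
      have : a ∈ MulAction.stabilizer (MulAut (fixP (α ^ p))) h := h0
      exact (MulAction.stabilizer (MulAut (fixP (α ^ p))) h).zpow_mem this k
  have hcard : Nat.card (Multiplicative (ZMod p)) = p := by
    rw [Nat.card_congr Multiplicative.toAdd]; simp
  obtain ⟨u, hu1, hu2⟩ := extend_char (τ := τ) (k := ZMod p) (by rw [hcard]; exact Fact.out) bY
    (by
      intro x hx
      rw [hcard] at hx
      apply Subtype.ext
      exact htf x.1 (congrArg Subtype.val hx))
    (by
      intro z
      rw [← Nat.card_eq_fintype_card, hcard]
      simp)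
    (fun x => if h : x.1 ∈ fixP α then (χ ⟨x.1, h⟩).toAdd else 0) (by
      intro h h' hh hh'
      have e1 := (hfix h).mp hh
      have e2 := (hfix h').mp hh'
      have e3 : (h * h').1 ∈ fixP α := (fixP α).mul_mem e1 e2
      rw [dif_pos e1, dif_pos e2, dif_pos e3]
      rw [← toAdd_mul, ← map_mul]
      rfl)
  refine ⟨u, hu1, fun h => ?_⟩
  rw [hu2 _ ((hfix _).mpr h.2)]
  simp [h.2]

theorem eps_ent {κ : Type} [DecidableEq κ] (c : (F × κ) →₀ ℤ) (g : F × κ → F) (a : κ) :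
    eps (ent c Prod.snd g a) = c.sum fun x n => if x.2 = a then n else 0 := by
  let e : (F →₀ ℤ) →+ ℤ := Finsupp.liftAddHom fun _ => AddMonoidHom.id ℤ
  have he : ∀ z, eps z = e z := fun z => rfl
  rw [he, ent, Finsupp.sum, map_sum, Finsupp.sum]
  apply Finset.sum_congr rfl
  intro x _
  rw [← he]
  split_ifs
  · simp [eps]
  · simp [eps]

theorem red_prime {X : Type} [Finite X] {J : Type} [Fintype J] (α : MulAut (FreeGroup X)) (p : ℕ) [Fact p.Prime]
    (l : J → FreeGroup X) (hl : ∀ i, α (l i) = l i) : Red l (fixP (α ^ p)) (fixP α) := by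
  classical
  have b := IsFreeGroup.basis (fixP α)
  have bY := IsFreeGroup.basis (fixP (α ^ p))
  generalize IsFreeGroup.Generators (fixP α) = κ at b
  generalize IsFreeGroup.Generators (fixP (α ^ p)) = Y at bY
  choose c hcH hc using fun i => basis_path _ b (l i) (hl i)
  choose cY hcP hcY using fun k => basis_path _ bY (b k : FreeGroup X) (fixP_le α p (b k).2)
  let s : Finset κ := Finset.univ.biUnion fun i => (c i).support.image Prod.snd
  have hs : ∀ i, ∀ x ∈ (c i).support, x.2 ∈ s := fun i x hx =>
    Finset.mem_biUnion.mpr ⟨i, Finset.mem_univ _, Finset.mem_image.mpr ⟨x, hx, rfl⟩⟩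
  let t : Finset Y := s.biUnion fun k => (cY k).support.image Prod.snd
  let cs : s → (FreeGroup X × Y) →₀ ℤ := fun k => cY k.1
  have ht : ∀ a, ∀ x ∈ (cs a).support, x.2 ∈ t := fun a x hx =>
    Finset.mem_biUnion.mpr ⟨a.1, a.2, Finset.mem_image.mpr ⟨x, hx, rfl⟩⟩
  apply red_of l (fixP (α ^ p)) (fixP α) c Prod.snd Prod.fst s
  · intro Q _ _ d hd
    exact foxKer l (fixP α) (fun k => (b k : FreeGroup X)) (fun k => (b k).2) c hc hcH s hs d hd
  · intro η hη
    obtain ⟨B, r, hB⟩ := lemmaR p (fun (a : s) (y : t) => ent (cs a) Prod.snd Prod.fst y.1) (by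
      intro β hβ
      funext a0
      let χ : fixP α →* Multiplicative (ZMod p) := b.lift fun k => Multiplicative.ofAdd (if k = a0.1 then 1 else 0)
      obtain ⟨u, hu1, hu2⟩ := char_ext α p bY (by
        intro x hx
        exact (pow_eq_one_iff_left (Nat.Prime.ne_zero Fact.out)).mp hx) χ
      have hu0 : u 1 = 0 := by
        have := hu1 1 1
        simpa using this
      have key : ∀ a : s, (if a.1 = a0.1 then (1 : ZMod p) else 0) =
          ∑ y : t, ((eps (ent (cs a) Prod.snd Prod.fst y.1) : ℤ) : ZMod p) * u (bY y.1) := by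
        intro a
        have h1 := hu2 (b a.1)
        have h2 : (χ (b a.1)).toAdd = if a.1 = a0.1 then (1 : ZMod p) else 0 := by
          simp [χ]
        rw [← h2, ← h1]
        have h3 := hcY a.1 (ZMod p) (fun f => if h : f ∈ fixP (α ^ p) then u ⟨f, h⟩ else 0)
        rw [dif_pos (fixP_le α p (b a.1).2), dif_pos (one_mem _)] at h3
        rw [show u ⟨1, one_mem _⟩ = 0 from hu0, sub_zero] at h3
        rw [h3]
        simp only [eps_ent, Finsupp.sum, Int.cast_sum, Finset.sum_mul]
        rw [Finset.sum_comm]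
        apply Finset.sum_congr rfl
        intro x hx
        have hx1 := hcP a.1 x hx
        rw [dif_pos ((fixP (α ^ p)).mul_mem hx1 (bY x.2).2), dif_pos hx1]
        rw [show u ⟨x.1 * (bY x.2).1, (fixP (α ^ p)).mul_mem hx1 (bY x.2).2⟩ = u ⟨x.1, hx1⟩ + u (bY x.2) from hu1 ⟨x.1, hx1⟩ (bY x.2)]
        rw [add_sub_cancel_left, Finset.sum_eq_single (⟨x.2, ht a x hx⟩ : t)]
        · simp [cs]
        · intro y _ hy
          rw [if_neg (fun h => hy (Subtype.ext h.symm))]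
          simp
        · simp
      have : β a0 = ∑ a, β a * (if a.1 = a0.1 then (1 : ZMod p) else 0) := by
        rw [Finset.sum_eq_single a0]
        · simp
        · intro a _ ha
          rw [if_neg (fun h => ha (Subtype.ext h)), mul_zero]
        · simp
      rw [this]
      simp only [key, Finset.mul_sum]
      rw [Finset.sum_comm]
      apply Finset.sum_eq_zero
      intro y _
      have := hβ y
      simp only [← mul_assoc]
      rw [← Finset.sum_mul, this, zero_mul]) η hη
    refine ⟨t, inferInstance, entM cs Prod.snd Prod.fst t, B, r, hB, ?_⟩
    intro Q _ _ d hd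
    apply dual_core cs Prod.fst t ht
    intro V
    obtain ⟨D, hD, hV⟩ := exists_der bY V
    have e1 : ∀ (a : s) q, ((cs a).sum fun x n => (n : ℝ) * V x.2 ((Prod.fst x)⁻¹ • q)) = D (b a.1 : FreeGroup X) q := by
      intro a q
      rw [fox hD (fun k => (bY k : FreeGroup X)) (fun k => (bY k).2) (b a.1 : FreeGroup X) (cY a.1) (hcP a.1) (fun W _ E => hcY a.1 W E) q]
      simp only [hV]
      rfl
    simp only [e1]
    rw [← pairing c Prod.snd Prod.fst s hs d (fun k => D (b k : FreeGroup X)), ← hd D hD]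
    apply Finset.sum_congr rfl
    intro i _
    apply Finset.sum_congr rfl
    intro q _
    rw [fox (hD.mono (fixP_le α p)) (fun k => (b k : FreeGroup X)) (fun k => (b k).2) (l i) (c i) (hcH i) (fun W _ E => hc i W E) q]

theorem red_all {X : Type} [Finite X] {J : Type} [Fintype J] (φ : MulAut (FreeGroup X))
    (l : J → FreeGroup X) (hl : ∀ i, φ (l i) = l i) : Red l ⊤ (fixP φ) := by
  obtain ⟨M, hM, hR⟩ := red_top (FreeGroupBasis.ofFreeGroup X) φ l hl
  refine hR.trans ?_
  clear hR
  induction M using Nat.recOnMul generalizing φ with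
  | zero => omega
  | one => rw [pow_one]; exact Red.refl _ _
  | prime p hp =>
    haveI : Fact p.Prime := ⟨hp⟩
    exact red_prime φ p l hl
  | mul a b ha hb =>
    rw [pow_mul]
    have ha0 : 0 < a := Nat.pos_of_mul_pos_right hM
    have hb0 : 0 < b := Nat.pos_of_mul_pos_left hM
    exact (hb (φ ^ a) (fun i => fix_pow _ _ (hl i) _) hb0).trans (ha φ hl ha0)

end Prime
end FixInert

namespace FixInert
open Module

section Hall

theorem hall {X : Type} (K : Subgroup (FreeGroup X)) (n : ℕ) (y : Fin n → FreeGroup X)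
    (hK : Subgroup.closure (Set.range y) = K) (S' : Finset (FreeGroup X)) (hS : ∀ f ∈ S', f ∉ K) :
    ∃ (Z : Type) (_ : Fintype Z) (_ : MulAction (FreeGroup X) Z) (z0 : Z), (∀ f ∈ K, f • z0 = z0) ∧
      ∀ f ∈ S', f • z0 ≠ z0 := by
  classical
  let k0 : FreeGroup X ⧸ K := ((1 : FreeGroup X) : FreeGroup X ⧸ K)
  let W : Finset (FreeGroup X) := insert 1 (S' ∪ Finset.univ.image y)
  let Zs : Finset (FreeGroup X ⧸ K) :=
    W.biUnion fun w => (w.toWord.tails.map fun L => FreeGroup.mk L • k0).toFinset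
  have hZ : ∀ w ∈ W, ∀ L, L <:+ w.toWord → FreeGroup.mk L • k0 ∈ Zs := by
    intro w hw L hL
    refine Finset.mem_biUnion.mpr ⟨w, hw, ?_⟩
    rw [List.mem_toFinset]
    exact List.mem_map.mpr ⟨L, (List.mem_tails _ _).mpr hL, rfl⟩
  have hk0 : k0 ∈ Zs := by
    have := hZ 1 (Finset.mem_insert_self _ _) [] (List.nil_suffix)
    rwa [← FreeGroup.one_eq_mk, one_smul] at this
  let e : ∀ x : X, {z : Zs // FreeGroup.of x • z.1 ∈ Zs} ≃ {z : Zs // (FreeGroup.of x)⁻¹ • z.1 ∈ Zs} := fun x =>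
    { toFun := fun z => ⟨⟨FreeGroup.of x • z.1.1, z.2⟩, by simpa using z.1.2⟩
      invFun := fun z => ⟨⟨(FreeGroup.of x)⁻¹ • z.1.1, z.2⟩, by simpa using z.1.2⟩
      left_inv := fun z => by
        apply Subtype.ext; apply Subtype.ext; simp
      right_inv := fun z => by
        apply Subtype.ext; apply Subtype.ext; simp }
  let Φ : FreeGroup X →* Equiv.Perm Zs := FreeGroup.lift fun x => (e x).extendSubtype
  have hx : ∀ x (z : Zs) (h : FreeGroup.of x • z.1 ∈ Zs), Φ (FreeGroup.of x) z = ⟨FreeGroup.of x • z.1, h⟩ := by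
    intro x z h
    simp only [Φ, FreeGroup.lift_apply_of]
    rw [Equiv.extendSubtype_apply_of_mem (e x) z h]
    rfl
  have hxi : ∀ x (z : Zs) (h : (FreeGroup.of x)⁻¹ • z.1 ∈ Zs), Φ (FreeGroup.of x)⁻¹ z = ⟨(FreeGroup.of x)⁻¹ • z.1, h⟩ := by
    intro x z h
    rw [map_inv, Equiv.Perm.inv_eq_iff_eq, hx x ⟨(FreeGroup.of x)⁻¹ • z.1, h⟩ (by simp)]
    apply Subtype.ext
    simp
  have track : ∀ w ∈ W, ∀ L (hL : L <:+ w.toWord), (Φ (FreeGroup.mk L) ⟨k0, hk0⟩).1 = FreeGroup.mk L • k0 := by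
    intro w hw L
    induction L with
    | nil =>
      intro hL
      rw [← FreeGroup.one_eq_mk, map_one, one_smul]
      rfl
    | cons a L ih =>
      intro hL
      have hL' : L <:+ w.toWord := (List.suffix_cons a L).trans hL
      have ih' := ih hL'
      have hmem := hZ w hw _ hL
      have e0 : FreeGroup.mk (a :: L) = FreeGroup.mk [a] * FreeGroup.mk L := by
        rw [FreeGroup.mul_mk]; rfl
      rw [e0, map_mul, Equiv.Perm.mul_apply, mul_smul]
      rw [e0, mul_smul, ← ih'] at hmem
      rw [← ih']
      obtain ⟨x, bb⟩ := a
      cases bb with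
      | true =>
        change FreeGroup.of x • _ ∈ Zs at hmem
        change (Φ (FreeGroup.of x) _).1 = FreeGroup.of x • _
        rw [hx x _ hmem]
      | false =>
        have e1 : (FreeGroup.mk [(x, false)]) = (FreeGroup.of x)⁻¹ := by
          rw [FreeGroup.of, FreeGroup.inv_mk]; rfl
        rw [e1] at hmem ⊢
        rw [hxi x _ hmem]
  have track' : ∀ w ∈ W, (Φ w ⟨k0, hk0⟩).1 = w • k0 := by
    intro w hw
    have := track w hw w.toWord (List.suffix_refl _)
    rwa [FreeGroup.mk_toWord] at this
  letI : MulAction (FreeGroup X) Zs := MulAction.compHom Zs Φ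
  have hact : ∀ f (z : Zs), f • z = Φ f z := fun _ _ => rfl
  refine ⟨Zs, inferInstance, inferInstance, ⟨k0, hk0⟩, ?_, ?_⟩
  · intro f hf
    have hle : Subgroup.closure (Set.range y) ≤ MulAction.stabilizer (FreeGroup X) (⟨k0, hk0⟩ : Zs) := by
      rw [Subgroup.closure_le]
      rintro _ ⟨i, rfl⟩
      change y i • (⟨k0, hk0⟩ : Zs) = _
      rw [hact]
      apply Subtype.ext
      rw [track' _ (by simp [W])]
      change ((y i * 1 : FreeGroup X) : FreeGroup X ⧸ K) = ((1 : FreeGroup X) : FreeGroup X ⧸ K)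
      rw [QuotientGroup.eq]
      simp only [mul_one]
      rw [inv_mem_iff, ← hK]
      exact Subgroup.subset_closure ⟨i, rfl⟩
    rw [← hK] at hf
    exact hle hf
  · intro f hf h
    apply hS f hf
    rw [hact] at h
    have h2 := congrArg Subtype.val h
    rw [track' _ (by simp [W, hf])] at h2
    change ((f * 1 : FreeGroup X) : FreeGroup X ⧸ K) = ((1 : FreeGroup X) : FreeGroup X ⧸ K) at h2
    rw [QuotientGroup.eq] at h2
    simpa using h2

theorem contra {X : Type} [Finite X] [DecidableEq X] (φ : MulAut (FreeGroup X)) (n : ℕ) (y : Fin n → FreeGroup X) {ι : Type}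
    (bL : FreeGroupBasis ι (fixP φ ⊓ Subgroup.closure (Set.range y) : Subgroup (FreeGroup X)))
    (kk : Fin (n+1) → ι) (hkk : Function.Injective kk) : False := by
  classical
  let K := Subgroup.closure (Set.range y)
  let l : Fin (n+1) → FreeGroup X := fun i => bL (kk i)
  have hlH : ∀ i, φ (l i) = l i := fun i => (bL (kk i)).2.1
  have hlK : ∀ i, l i ∈ K := fun i => (bL (kk i)).2.2
  obtain ⟨S, hRed⟩ := red_all φ l hlH (1/2) (by norm_num)
  obtain ⟨S', hS', hend⟩ := end_zero (Fin (n+1)) (fixP φ) (fixP φ ⊓ K) (IsFreeGroup.basis (fixP φ)) bL inf_le_left kk hkk l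
    (fun i => rfl)
  obtain ⟨Z, _, _, z0, hz1, hz2⟩ := hall K n y rfl S' (fun f hf hfK => (hS' f hf).2 ⟨(hS' f hf).1, hfK⟩)
  haveI : Fact (Nat.Prime 2) := ⟨Nat.prime_two⟩
  obtain ⟨Q2, _, _, _, π, hπ⟩ := pquot 2 S
  haveI := Fintype.ofFinite Q2
  letI : MulAction (FreeGroup X) Q2 := MulAction.compHom Q2 π
  have hact : ∀ (f : FreeGroup X) (q : Q2), f • q = π f * q := fun _ _ => rfl
  let A : Finset (Z × Q2) := {z0} ×ˢ Finset.univ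
  have hA : ∀ x, x ∈ A ↔ x.1 = z0 := by
    intro x
    simp only [A, Finset.mem_product, Finset.mem_singleton, Finset.mem_univ, and_true]
  have hAK : ∀ f ∈ K, ∀ x ∈ A, f • x ∈ A := by
    intro f hf x hx
    rw [hA] at hx ⊢
    rw [Prod.smul_fst, hx, hz1 f hf]
  have h1 := lower n y K rfl l hlK A hAK
  have h2 : finrank ℝ (NN l K A) ≤ finrank ℝ (NN l ⊤ A) :=
    Submodule.finrank_mono (fun d hd => ⟨hd.1, hd.2.mono le_top⟩)
  have h3 := hRed (Z × Q2) (by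
    intro f hf hf1 x hx
    apply hπ f hf hf1
    have := congrArg Prod.snd hx
    rw [Prod.smul_snd, hact] at this
    simpa using this) A
  have h4 := hend (Z × Q2) A (fun f hf => hAK f hf.2) (by
    intro f hf x hx hx'
    rw [hA] at hx hx'
    rw [Prod.smul_fst, hx] at hx'
    exact hz2 f hf hx')
  have h5 : 0 < A.card := Finset.card_pos.mpr ⟨(z0, 1), by rw [hA]⟩
  rw [h4] at h3
  have h6 : (A.card : ℝ) ≤ finrank ℝ (NN l ⊤ A) := by exact_mod_cast h1.trans h2
  have h7 : (0 : ℝ) < A.card := by exact_mod_cast h5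
  push_cast at h3
  linarith

end Hall
end FixInert

/-- (Dicks–Ventura) The fixed subgroup of an automorphism of `F_n` is inert in `F_n`. -/
theorem fixedSubgroup_isInert (n : ℕ) (φ : FreeGroup (Fin n) ≃* FreeGroup (Fin n)) :
    IsInert (fixedSubgroup φ.toMonoidHom) := by
  classical
  intro K hK
  haveI : Nonempty {S : Set (FreeGroup (Fin n)) // Subgroup.closure S = K} :=
    ⟨⟨(K : Set (FreeGroup (Fin n))), Subgroup.closure_eq K⟩⟩
  obtain ⟨S0, hS0⟩ := ciInf_mem (fun S : {S : Set (FreeGroup (Fin n)) // Subgroup.closure S = K} => Cardinal.mk S.1)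
  have hrk : Cardinal.mk S0.1 = rk K := hS0
  obtain ⟨T, hT⟩ := hK
  have hlt : rk K < Cardinal.aleph0 := by
    refine lt_of_le_of_lt (ciInf_le' (fun S : {S : Set (FreeGroup (Fin n)) // Subgroup.closure S = K} => Cardinal.mk S.1)
      ⟨(T : Set (FreeGroup (Fin n))), hT⟩) ?_
    exact Cardinal.lt_aleph0_of_finite _
  haveI hfin : Finite S0.1 := Cardinal.lt_aleph0_iff_finite.mp (hrk ▸ hlt)
  let m := Nat.card S0.1
  let eqv : S0.1 ≃ Fin m := Finite.equivFin S0.1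
  let y : Fin m → FreeGroup (Fin n) := fun i => (eqv.symm i).1
  have hy : Set.range y = S0.1 := by
    have : y = Subtype.val ∘ eqv.symm := rfl
    rw [this, Set.range_comp, eqv.symm.surjective.range_eq, Set.image_univ, Subtype.range_coe]
  have hyK : Subgroup.closure (Set.range y) = K := by rw [hy]; exact S0.2
  have hm : rk K = (m : Cardinal) := by
    rw [← hrk]; exact (Nat.cast_card).symm
  have hL : fixedSubgroup φ.toMonoidHom ⊓ K = FixInert.fixP (F := FreeGroup (Fin n)) φ ⊓ Subgroup.closure (Set.range y) := by
    rw [hyK]; rfl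
  rw [hm, hL]
  have bL := IsFreeGroup.basis (FixInert.fixP (F := FreeGroup (Fin n)) φ ⊓ Subgroup.closure (Set.range y) : Subgroup (FreeGroup (Fin n)))
  generalize IsFreeGroup.Generators (FixInert.fixP (F := FreeGroup (Fin n)) φ ⊓ Subgroup.closure (Set.range y) : Subgroup (FreeGroup (Fin n))) = ι at bL
  by_cases hι : Cardinal.mk ι ≤ m
  · refine le_trans ?_ hι
    refine (ciInf_le' (fun S : {S : Set (FreeGroup (Fin n)) // Subgroup.closure S = _} => Cardinal.mk S.1)
      ⟨Set.range fun k => (bL k : FreeGroup (Fin n)), FixInert.basis_closure_coe _ bL⟩).trans ?_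
    exact Cardinal.mk_range_le
  · exfalso
    have h1 : ((m + 1 : ℕ) : Cardinal) ≤ Cardinal.mk ι := by
      rw [Nat.cast_succ]
      exact Cardinal.add_one_le_of_lt (not_le.mp hι)
    rw [← Cardinal.mk_fin] at h1
    obtain ⟨f⟩ := Cardinal.le_def _ _ |>.mp h1
    exact FixInert.contra φ m y bL f f.injective
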